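/- arXiv:2112.04458 — 3 statements merged into one kernel-verified Lean document; each statement's English description precedes it below -/
import Mathlib

section
/- Let ρ be a quasi-periodic labelling. Then the group G_ρ is simple. -/
/-! ### Letters, labellings and quasi-periodicity -/

/-- The four letters `a, b, a⁻¹, b⁻¹`. -/
inductive Letter : Type
  | a : Letter
  | b : Letter
  | A : Letter  -- `a⁻¹`
  | B : Letter  -- `b⁻¹`
  deriving DecidableEq

/-- The formal inverse of a letter. -/
def Letter.inv : Letter → Letter
  | .a => .A
  | .A => .a
  | .b => .B
  | .B => .b

/-- We encode the set of half-integers `½ℤ` by `ℤ` via `m ↦ m / 2`; integer points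
correspond to even indices and proper half-integer points to odd indices.
A labelling assigns `a^{±1}` to integer points and `b^{±1}` to half-integer points. -/
def IsLabelling (ρ : ℤ → Letter) : Prop :=
  ∀ m : ℤ, (Even m → ρ m = Letter.a ∨ ρ m = Letter.A) ∧
    (Odd m → ρ m = Letter.b ∨ ρ m = Letter.B)

/-- The word of the labelling `ρ` along the block `{k, k+1, …, k+n}` (in the
half-integer encoding, the block of size `n+1` starting at `k/2`). -/
def blockWord (ρ : ℤ → Letter) (k : ℤ) (n : ℕ) : List Letter :=
  (List.range (n + 1)).map fun i => ρ (k + i)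

/-- The formal inverse of a word: reverse the word and invert each letter. -/
def wordInv (w : List Letter) : List Letter :=
  (w.map Letter.inv).reverse

/-- A labelling is quasi-periodic if (1) every subword of the labelling appears as a
subword (string of consecutive letters) of every sufficiently large block, and (2) the
formal inverse of every subword of the labelling is again a subword of the labelling. -/
def IsQuasiPeriodic (ρ : ℤ → Letter) : Prop :=
  IsLabelling ρ ∧
    (∀ (k : ℤ) (n : ℕ), ∃ N : ℕ, ∀ (k' : ℤ) (n' : ℕ), N ≤ n' + 1 →
      (blockWord ρ k n) <:+: (blockWord ρ k' n')) ∧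
    (∀ (k : ℤ) (n : ℕ), ∃ k' : ℤ, blockWord ρ k' n = wordInv (blockWord ρ k n))

/-! ### Thompson's group `F` and the subgroup `H`

Orientation-preserving homeomorphisms of `[0,1]` are realised as order-automorphisms
of `ℝ` that are the identity outside `[0,1]`; orientation-preserving homeomorphisms of
the line are order-automorphisms of `ℝ`. -/

/-- A dyadic rational real number, i.e. an element of `ℤ[1/2]`. -/
def IsDyadic (x : ℝ) : Prop :=
  ∃ (a : ℤ) (b : ℕ), x = (a : ℝ) / 2 ^ b

/-- Membership in Thompson's group `F`: the identity outside `[0,1]`, and on `[0,1]`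
piecewise linear with breakpoints in `ℤ[1/2]` and slopes integer powers of `2`. -/
def InThompsonF (f : ℝ ≃o ℝ) : Prop :=
  (∀ x : ℝ, x ∉ Set.Icc (0 : ℝ) 1 → f x = x) ∧
    ∃ (m : ℕ) (x : Fin (m + 1) → ℝ), x 0 = 0 ∧ x (Fin.last m) = 1 ∧ StrictMono x ∧
      (∀ i, IsDyadic (x i)) ∧
      ∀ i : Fin m, ∃ (k : ℤ) (c : ℝ),
        ∀ t ∈ Set.Icc (x i.castSucc) (x i.succ), f t = 2 ^ k * t + c

/-- Membership in the subgroup `H ≤ F` of elements whose slopes at `0` and `1`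
coincide. -/
def InH (f : ℝ ≃o ℝ) : Prop :=
  InThompsonF f ∧
    ∃ (k : ℤ) (ε : ℝ), 0 < ε ∧ (∀ t ∈ Set.Icc (0 : ℝ) ε, f t = 2 ^ k * t) ∧
      ∀ t ∈ Set.Icc (1 - ε) (1 : ℝ), f t = 1 + 2 ^ k * (t - 1)

/-! ### The generators of `G_ρ` -/

/-- `ζ` is the homeomorphism of `ℝ` which on each `[n, n+1]` is the conjugate of `ν`
(a homeomorphism of `[0,1]`) by the orientation-preserving isometry `[n,n+1] → [0,1]`
if `ρ(n + ½) = b`, and by the orientation-reversing isometry if `ρ(n + ½) = b⁻¹`.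
(In the encoding of `½ℤ` by `ℤ`, the point `n + ½` has index `2n + 1`.) -/
def IsZeta (ρ : ℤ → Letter) (ν ζ : ℝ ≃o ℝ) : Prop :=
  ∀ n : ℤ, ∀ x ∈ Set.Icc (n : ℝ) (n + 1),
    (ρ (2 * n + 1) = Letter.b → ζ x = n + ν (x - n)) ∧
    (ρ (2 * n + 1) = Letter.B → ζ x = (n + 1) - ν ((n + 1) - x))

/-- `χ` is the homeomorphism of `ℝ` which on each `[n-½, n+½]` is the conjugate of `ν`
by the orientation-preserving isometry `[n-½, n+½] → [0,1]` if `ρ(n) = a`, and by the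
orientation-reversing isometry if `ρ(n) = a⁻¹`. -/
def IsChi (ρ : ℤ → Letter) (ν χ : ℝ ≃o ℝ) : Prop :=
  ∀ n : ℤ, ∀ x ∈ Set.Icc ((n : ℝ) - 1/2) ((n : ℝ) + 1/2),
    (ρ (2 * n) = Letter.a → χ x = ((n : ℝ) - 1/2) + ν (x - ((n : ℝ) - 1/2))) ∧
    (ρ (2 * n) = Letter.A → χ x = ((n : ℝ) + 1/2) - ν (((n : ℝ) + 1/2) - x))

/-! ### Bounded cohomology in degree two -/

/-- A bounded 2-cocycle on `G` with trivial real coefficients. -/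
def IsBounded2Cocycle {G : Type*} [Group G] (ω : G → G → ℝ) : Prop :=
  (∃ C : ℝ, ∀ g h : G, |ω g h| ≤ C) ∧
    ∀ g₁ g₂ g₃ : G, ω g₂ g₃ - ω (g₁ * g₂) g₃ + ω g₁ (g₂ * g₃) - ω g₁ g₂ = 0

/-- `ω` is the coboundary of a bounded real-valued function. -/
def IsCoboundaryOfBounded {G : Type*} [Group G] (ω : G → G → ℝ) : Prop :=
  ∃ φ : G → ℝ, (∃ C : ℝ, ∀ g : G, |φ g| ≤ C) ∧
    ∀ g h : G, ω g h = φ h - φ (g * h) + φ g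

/-- A group is 2-boundedly acyclic if `H²_b(G; ℝ) = 0`, i.e. every bounded 2-cocycle is
the coboundary of a bounded function. -/
def Is2BoundedlyAcyclic (G : Type*) [Group G] : Prop :=
  ∀ ω : G → G → ℝ, IsBounded2Cocycle ω → IsCoboundaryOfBounded ω

/-- A 2-cocycle is homogeneous if it vanishes on powers of a single element. -/
def IsHomogeneous {G : Type*} [Group G] (ω : G → G → ℝ) : Prop :=
  ∀ (g : G) (i j : ℤ), ω (g ^ i) (g ^ j) = 0


namespace GR

theorem dy_int (n : ℤ) : IsDyadic (n : ℝ) := ⟨n, 0, by simp⟩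
theorem dy_zero : IsDyadic (0 : ℝ) := ⟨0, 0, by simp⟩
theorem dy_one : IsDyadic (1 : ℝ) := ⟨1, 0, by simp⟩
theorem dy_two : IsDyadic (2 : ℝ) := ⟨2, 0, by simp⟩

theorem dy_common {x y : ℝ} (hx : IsDyadic x) (hy : IsDyadic y) :
    ∃ (g : ℝ) (n m : ℤ), IsDyadic g ∧ x = n * g ∧ y = m * g := by
  obtain ⟨a, b, rfl⟩ := hx
  obtain ⟨c, d, rfl⟩ := hy
  refine ⟨1 / 2 ^ (b + d), a * 2 ^ d, c * 2 ^ b, ⟨1, b + d, by simp⟩, ?_, ?_⟩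
  · push_cast; rw [pow_add]; field_simp
  · push_cast; rw [pow_add]; field_simp

theorem dy_intmul {g : ℝ} (n : ℤ) (hg : IsDyadic g) : IsDyadic (n * g) := by
  obtain ⟨a, b, rfl⟩ := hg
  exact ⟨n * a, b, by push_cast; ring⟩

theorem dy_add {x y : ℝ} (hx : IsDyadic x) (hy : IsDyadic y) : IsDyadic (x + y) := by
  obtain ⟨g, n, m, hg, rfl, rfl⟩ := dy_common hx hy
  have := dy_intmul (n + m) hg
  push_cast at this
  rwa [add_mul] at this

theorem dy_neg {x : ℝ} (hx : IsDyadic x) : IsDyadic (-x) := by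
  have := dy_intmul (-1) hx
  simpa using this

theorem dy_sub {x y : ℝ} (hx : IsDyadic x) (hy : IsDyadic y) : IsDyadic (x - y) := by
  rw [sub_eq_add_neg]; exact dy_add hx (dy_neg hy)

theorem dy_double {x : ℝ} (hx : IsDyadic x) : IsDyadic (2 * x) := by
  have := dy_intmul 2 hx
  simpa using this

theorem dy_half {x : ℝ} (hx : IsDyadic x) : IsDyadic (x / 2) := by
  obtain ⟨a, b, rfl⟩ := hx
  exact ⟨a, b + 1, by rw [pow_succ]; field_simp⟩

/-- Abstract computation in a group with a family behaving like dilations. -/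
theorem abstractQ {Q : Type*} [Group Q] (t : ℝ → Q)
    (hB : ∀ p q, IsDyadic p → IsDyadic q → t p * t q * (t p)⁻¹ = t (2 * q - p))
    (hZ : ∀ p q d, IsDyadic p → IsDyadic q → IsDyadic d →
      ∃ z ∈ Subgroup.center Q, t p * (t (p + d))⁻¹ = t q * (t (q + d))⁻¹ * z) :
    ∀ x ∈ Subgroup.closure {x | ∃ p, IsDyadic p ∧ x = t p},
      ∃ d, ∃ k : ℤ, IsDyadic d ∧ x = t 0 * (t d)⁻¹ * t 0 ^ k := by
  -- powers
  have hpow : ∀ g, IsDyadic g → ∀ n : ℕ, ∀ p, IsDyadic p →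
      ∃ z ∈ Subgroup.center Q, t p * (t (p + n * g))⁻¹ = (t 0 * (t (0 + g))⁻¹) ^ n * z := by
    intro g hg n
    induction n with
    | zero => intro p hp; exact ⟨1, one_mem _, by simp⟩
    | succ n ih =>
      intro p hp
      obtain ⟨z, hz, h1⟩ := ih (p + g) (dy_add hp hg)
      obtain ⟨z', hz', h2⟩ := hZ p 0 g hp dy_zero hg
      refine ⟨z' * z, mul_mem hz' hz, ?_⟩
      have e : p + ((n + 1 : ℕ) : ℝ) * g = p + g + n * g := by push_cast; ring
      rw [e]
      have : t p * (t (p + g + n * g))⁻¹ =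
        (t p * (t (p + g))⁻¹) * (t (p + g) * (t (p + g + n * g))⁻¹) := by group
      rw [this, h1, h2, pow_succ']
      have hc := Subgroup.mem_center_iff.1 hz'
      rw [mul_assoc, mul_assoc, ← mul_assoc z', ← hc]
      simp only [mul_assoc]
  have hzpow : ∀ g, IsDyadic g → ∀ n : ℤ, ∀ p, IsDyadic p →
      ∃ z ∈ Subgroup.center Q, t p * (t (p + n * g))⁻¹ = (t 0 * (t (0 + g))⁻¹) ^ n * z := by
    intro g hg n p hp
    obtain ⟨m, rfl | rfl⟩ := n.eq_nat_or_neg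
    · simpa using hpow g hg m p hp
    · obtain ⟨z, hz, h⟩ := hpow g hg m (p - m * g) (dy_sub hp (by simpa using dy_intmul m hg))
      refine ⟨z⁻¹, inv_mem hz, ?_⟩
      have e : p - m * g + m * g = p := by ring
      rw [e] at h
      have h' := congrArg (·⁻¹) h
      simp only [mul_inv_rev, inv_inv] at h'
      have e2 : p + ((-(m : ℤ) : ℤ) : ℝ) * g = p - m * g := by push_cast; ring
      rw [e2, h', zpow_neg, zpow_natCast]
      have hc := Subgroup.mem_center_iff.1 (inv_mem hz)
      rw [← hc]
  have hcomm : ∀ p q d e, IsDyadic p → IsDyadic q → IsDyadic d → IsDyadic e →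
      (t p * (t (p + d))⁻¹) * (t q * (t (q + e))⁻¹) =
        (t q * (t (q + e))⁻¹) * (t p * (t (p + d))⁻¹) := by
    intro p q d e hp hq hd he
    obtain ⟨g, n, m, hg, rfl, rfl⟩ := dy_common hd he
    obtain ⟨z, hz, h1⟩ := hzpow g hg n p hp
    obtain ⟨z', hz', h2⟩ := hzpow g hg m q hq
    rw [h1, h2]
    have hc := Subgroup.mem_center_iff.1 hz
    have hc' := Subgroup.mem_center_iff.1 hz'
    generalize t 0 * (t (0 + g))⁻¹ = u
    calc u ^ n * z * (u ^ m * z') = u ^ n * (z * (u ^ m * z')) := by rw [mul_assoc]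
      _ = u ^ n * (u ^ m * z' * z) := by rw [← hc]
      _ = (u ^ n * u ^ m) * z' * z := by simp only [mul_assoc]
      _ = (u ^ m * u ^ n) * z' * z := by rw [← zpow_add, ← zpow_add, add_comm]
      _ = u ^ m * (u ^ n * z' * z) := by simp only [mul_assoc]
      _ = u ^ m * (z' * u ^ n * z) := by rw [hc']
      _ = _ := by simp only [mul_assoc]
  have hB' : ∀ p q, IsDyadic p → IsDyadic q → (t p)⁻¹ * t q * t p = t ((q + p) / 2) := by
    intro p q hp hq
    have := hB p ((q + p) / 2) hp (dy_half (dy_add hq hp))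
    have e : 2 * ((q + p) / 2) - p = q := by ring
    rw [e] at this
    rw [← this]; group
  -- translation invariance
  have htr : ∀ p d, IsDyadic p → IsDyadic d → t p * (t (p + d))⁻¹ = t 0 * (t d)⁻¹ := by
    intro p d hp hd
    have h := hcomm 0 0 p d dy_zero dy_zero hp hd
    simp only [zero_add] at h
    have hconj : ∀ q, IsDyadic q → (t 0 * (t p)⁻¹) * t q * (t 0 * (t p)⁻¹)⁻¹ = t (q + p) := by
      intro q hq
      have h1 := hB' p q hp hq
      have h2 := hB 0 ((q + p) / 2) dy_zero (dy_half (dy_add hq hp))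
      rw [← h1] at h2
      have e : 2 * ((q + p) / 2) - 0 = q + p := by ring
      rw [e] at h2
      rw [← h2]; group
    have c1 := hconj 0 dy_zero
    have c2 := hconj d hd
    rw [zero_add] at c1
    rw [add_comm p d, ← c1, ← c2]
    calc _ = (t 0 * (t p)⁻¹) * (t 0 * (t d)⁻¹) * (t 0 * (t p)⁻¹)⁻¹ := by group
      _ = _ := by rw [h]; group
  have hadd : ∀ d e, IsDyadic d → IsDyadic e →
      (t 0 * (t d)⁻¹) * (t 0 * (t e)⁻¹) = t 0 * (t (d + e))⁻¹ := by
    intro d e hd he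
    rw [← htr d e hd he]; group
  have hdil : ∀ d, IsDyadic d → t 0 * (t 0 * (t d)⁻¹) = t 0 * (t (2 * d))⁻¹ * t 0 := by
    intro d hd
    have := hB 0 d dy_zero hd
    rw [sub_zero] at this
    rw [← this]; group
  have htp : ∀ p, IsDyadic p → t p = t 0 * (t (-p))⁻¹ * t 0 := by
    intro p hp
    have := htr p (-p) hp (dy_neg hp)
    rw [add_neg_cancel] at this
    rw [← this]; group
  intro x hx
  induction hx using Subgroup.closure_induction_left with
  | one => exact ⟨0, 0, dy_zero, by simp⟩
  | mul_left y hy z hz ih =>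
    obtain ⟨p, hp, rfl⟩ := hy
    obtain ⟨d, k, hd, rfl⟩ := ih
    refine ⟨-p + 2 * d, k + 1, dy_add (dy_neg hp) (dy_double hd), ?_⟩
    rw [htp p hp]
    calc _ = t 0 * (t (-p))⁻¹ * (t 0 * (t 0 * (t d)⁻¹)) * t 0 ^ k := by simp only [mul_assoc]
      _ = (t 0 * (t (-p))⁻¹) * (t 0 * (t (2 * d))⁻¹) * t 0 * t 0 ^ k := by
          rw [hdil d hd]; simp only [mul_assoc]
      _ = _ := by rw [hadd _ _ (dy_neg hp) (dy_double hd), mul_assoc, ← zpow_one_add,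
            add_comm (1 : ℤ) k]
  | inv_mul_cancel y hy z hz ih =>
    obtain ⟨p, hp, rfl⟩ := hy
    obtain ⟨d, k, hd, rfl⟩ := ih
    refine ⟨(p + d) / 2, k - 1, dy_half (dy_add hp hd), ?_⟩
    have h1 := hdil ((p + d) / 2) (dy_half (dy_add hp hd))
    have e : 2 * ((p + d) / 2) = p + d := by ring
    rw [e, ← hadd p d hp hd] at h1
    rw [inv_mul_eq_iff_eq_mul, htp p hp]
    have h3 : (t 0 * (t p)⁻¹) * (t 0 * (t (-p))⁻¹) = 1 := by
      rw [hadd p (-p) hp (dy_neg hp)]; simp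
    have h4 : (t 0 * (t (-p))⁻¹) = (t 0 * (t p)⁻¹)⁻¹ := (inv_eq_of_mul_eq_one_right h3).symm
    rw [h4]
    have h5 : t 0 * (t 0 * (t ((p + d) / 2))⁻¹) * t 0 ^ (k - 1) =
       t 0 * (t p)⁻¹ * (t 0 * (t d)⁻¹) * t 0 ^ k := by
      rw [h1]; simp only [mul_assoc]; rw [← zpow_one_add]; simp
    calc _ = (t 0 * (t p)⁻¹)⁻¹ * (t 0 * (t p)⁻¹ * (t 0 * (t d)⁻¹) * t 0 ^ k) := by group
      _ = _ := by rw [← h5]; simp only [mul_assoc]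

end GR

namespace GR
open scoped commutatorElement

/-- Orientation preserving homeomorphisms of the line. -/
abbrev W := ℝ ≃o ℝ

theorem W_mul (f g : W) (x : ℝ) : (f * g) x = f (g x) := rfl
theorem W_one (x : ℝ) : (1 : W) x = x := rfl
theorem W_inv_self (f : W) (x : ℝ) : f⁻¹ (f x) = x := f.symm_apply_apply x
theorem W_self_inv (f : W) (x : ℝ) : f (f⁻¹ x) = x := f.apply_symm_apply x
theorem W_inv_eq (f : W) {x y : ℝ} (h : f x = y) : f⁻¹ y = x := by rw [← h, W_inv_self]

/-- The half-line dilation by `2` based at `p`. -/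
noncomputable def tau (p : ℝ) : W where
  toFun x := max x (2 * x - p)
  invFun x := min x ((x + p) / 2)
  left_inv x := by
    change min (max x (2 * x - p)) ((max x (2 * x - p) + p) / 2) = x
    rcases le_total x p with h | h
    · rw [max_eq_left (by linarith), min_eq_left (by linarith)]
    · rw [max_eq_right (by linarith), min_eq_right (by linarith)]; ring
  right_inv x := by
    change max (min x ((x + p) / 2)) (2 * (min x ((x + p) / 2)) - p) = x
    rcases le_total x p with h | h
    · rw [min_eq_left (by linarith), max_eq_left (by linarith)]
    · rw [min_eq_right (by linarith), max_eq_right (by linarith)]; ring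
  map_rel_iff' := by
    intro x y
    change max x (2 * x - p) ≤ max y (2 * y - p) ↔ x ≤ y
    constructor
    · intro h
      by_contra hxy
      push Not at hxy
      rw [le_max_iff, max_le_iff, max_le_iff] at h
      rcases h with h | h <;> linarith
    · intro h
      exact max_le_max h (by linarith)

theorem tau_le {p x : ℝ} (h : x ≤ p) : tau p x = x := max_eq_left (by linarith)
theorem tau_ge {p x : ℝ} (h : p ≤ x) : tau p x = 2 * x - p := max_eq_right (by linarith)
theorem tau_inv_le {p x : ℝ} (h : x ≤ p) : (tau p)⁻¹ x = x := W_inv_eq _ (tau_le h)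
theorem tau_inv_ge {p x : ℝ} (h : p ≤ x) : (tau p)⁻¹ x = (x + p) / 2 :=
  W_inv_eq _ (by rw [tau_ge (by linarith)]; ring)

/-- The group of piecewise dyadic maps that are trivial near `-∞`. -/
noncomputable def TT : Subgroup W := Subgroup.closure {f | ∃ p, IsDyadic p ∧ f = tau p}

theorem tau_mem {p : ℝ} (hp : IsDyadic p) : tau p ∈ TT := Subgroup.subset_closure ⟨p, hp, rfl⟩

/-- Eventually affine. -/
def Ev (f : W) (k : ℤ) (c : ℝ) : Prop := ∃ M, ∀ x, M ≤ x → f x = 2 ^ k * x + c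

theorem Ev_tau (p : ℝ) : Ev (tau p) 1 (-p) := ⟨p, fun x hx => by rw [tau_ge hx]; simp; ring⟩

theorem Ev_one : Ev 1 0 0 := ⟨0, fun x _ => by rw [W_one]; simp⟩

theorem Ev_mul {f g : W} {k l : ℤ} {c d : ℝ} (hf : Ev f k c) (hg : Ev g l d) :
    Ev (f * g) (k + l) (2 ^ k * d + c) := by
  obtain ⟨M, hM⟩ := hf
  obtain ⟨M', hM'⟩ := hg
  refine ⟨max M' (g⁻¹ M), fun x hx => ?_⟩
  have h1 : M' ≤ x := le_trans (le_max_left _ _) hx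
  have h2 : g⁻¹ M ≤ x := le_trans (le_max_right _ _) hx
  have h3 : M ≤ g x := by
    have := g.monotone h2
    rwa [W_self_inv] at this
  rw [W_mul, hM _ h3, hM' _ h1, zpow_add₀ (by norm_num)]; ring

theorem Ev_inv {f : W} {k : ℤ} {c : ℝ} (hf : Ev f k c) : Ev f⁻¹ (-k) (-(2 ^ (-k) * c)) := by
  obtain ⟨M, hM⟩ := hf
  refine ⟨f M, fun x hx => ?_⟩
  have h : M ≤ f⁻¹ x := by
    have := (f⁻¹ : W).monotone hx
    rwa [W_inv_self] at this
  have h2 := hM _ h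
  rw [W_self_inv] at h2
  have h3 : (2 : ℝ) ^ (-k) * 2 ^ k = 1 := by rw [← zpow_add₀ (by norm_num)]; simp
  calc f⁻¹ x = (2 ^ (-k) * 2 ^ k) * f⁻¹ x := by rw [h3, one_mul]
    _ = 2 ^ (-k) * (2 ^ k * f⁻¹ x + c) - 2 ^ (-k) * c := by ring
    _ = _ := by rw [← h2]; ring

theorem Ev_tau0_zpow (k : ℤ) : Ev (tau 0 ^ k) k 0 := by
  have h0 := Ev_tau 0
  rw [neg_zero] at h0
  have hn : ∀ n : ℕ, Ev (tau 0 ^ n) n 0 := by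
    intro n
    induction n with
    | zero => simpa using Ev_one
    | succ n ih =>
      rw [pow_succ]
      simpa using Ev_mul ih h0
  obtain ⟨m, rfl | rfl⟩ := k.eq_nat_or_neg
  · simpa using hn m
  · simpa using Ev_inv (hn m)

theorem Ev_unique {f : W} {k l : ℤ} {c d : ℝ} (hf : Ev f k c) (hg : Ev f l d) : k = l ∧ c = d := by
  obtain ⟨M, hM⟩ := hf
  obtain ⟨M', hM'⟩ := hg
  have h1 := hM (max M M') (le_max_left _ _)
  have h2 := hM' (max M M') (le_max_right _ _)
  have h3 := hM (max M M' + 1) (by linarith [le_max_left M M'])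
  have h4 := hM' (max M M' + 1) (by linarith [le_max_right M M'])
  have h5 : (2 : ℝ) ^ k = 2 ^ l := by linarith
  refine ⟨zpow_right_injective₀ (by norm_num) (by norm_num) h5, ?_⟩
  rw [h1, h5] at h2
  linarith

/-- The bump pushing to the right, supported on `[p, p+3d]`. -/
noncomputable def bump (p d : ℝ) : W := tau (p + 3 * d) * (tau (p + 2 * d))⁻¹ * (tau (p + 2 * d))⁻¹ * tau p

theorem bump_mem {p d : ℝ} (hp : IsDyadic p) (hd : IsDyadic d) : bump p d ∈ TT := by
  have h2 := dy_add hp (dy_double hd)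
  have h3 : IsDyadic (p + 3 * d) := by
    have := dy_add h2 hd
    convert this using 1; ring
  exact mul_mem (mul_mem (mul_mem (tau_mem h3) (inv_mem (tau_mem h2))) (inv_mem (tau_mem h2))) (tau_mem hp)

theorem bump_1 {p d x : ℝ} (hd : 0 ≤ d) (h : x ≤ p) : bump p d x = x := by
  simp only [bump, W_mul]
  rw [tau_le h, tau_inv_le (x := x) (by linarith), tau_inv_le (x := x) (by linarith), tau_le (by linarith)]

theorem bump_2 {p d x : ℝ} (hd : 0 ≤ d) (h : p ≤ x) (h' : x ≤ p + d) : bump p d x = 2 * x - p := by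
  simp only [bump, W_mul]
  rw [tau_ge h, tau_inv_le (x := 2 * x - p) (by linarith), tau_inv_le (x := 2 * x - p) (by linarith),
    tau_le (by linarith)]

theorem bump_3 {p d x : ℝ} (hd : 0 ≤ d) (h : p + d ≤ x) (h' : x ≤ p + 3 * d) :
    bump p d x = (x + p + 3 * d) / 2 := by
  simp only [bump, W_mul]
  rw [tau_ge (p := p) (x := x) (by linarith), tau_inv_ge (x := 2 * x - p) (by linarith),
    tau_inv_ge (x := (2 * x - p + (p + 2 * d)) / 2) (by linarith), tau_le (by linarith)]
  ring

theorem bump_4 {p d x : ℝ} (hd : 0 ≤ d) (h : p + 3 * d ≤ x) : bump p d x = x := by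
  simp only [bump, W_mul]
  rw [tau_ge (p := p) (x := x) (by linarith), tau_inv_ge (x := 2 * x - p) (by linarith),
    tau_inv_ge (x := (2 * x - p + (p + 2 * d)) / 2) (by linarith), tau_ge (by linarith)]
  ring

theorem bump_gt {p d x : ℝ} (h : p < x) (h' : x < p + 3 * d) : x < bump p d x := by
  have hd : 0 ≤ d := by linarith
  rcases le_total x (p + d) with h1 | h1
  · rw [bump_2 hd h.le h1]; linarith
  · rw [bump_3 hd h1 h'.le]; linarith

/-- Compactly supported elements. -/
noncomputable def Pc : Subgroup W where
  carrier := {f | f ∈ TT ∧ ∃ M, ∀ x, M ≤ x → f x = x}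
  one_mem' := ⟨one_mem _, 0, fun _ _ => rfl⟩
  mul_mem' := by
    rintro f g ⟨hf, M, hM⟩ ⟨hg, M', hM'⟩
    refine ⟨mul_mem hf hg, max M M', fun x hx => ?_⟩
    rw [W_mul, hM' _ (le_trans (le_max_right _ _) hx), hM _ (le_trans (le_max_left _ _) hx)]
  inv_mem' := by
    rintro f ⟨hf, M, hM⟩
    exact ⟨inv_mem hf, M, fun x hx => W_inv_eq _ (hM x hx)⟩

theorem TT_left {f : W} (hf : f ∈ TT) : ∃ M, ∀ x, x ≤ M → f x = x := by
  induction hf using Subgroup.closure_induction with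
  | mem x hx =>
    obtain ⟨p, _, rfl⟩ := hx
    exact ⟨p, fun x hx => tau_le hx⟩
  | one => exact ⟨0, fun _ _ => rfl⟩
  | mul f g _ _ ih ih' =>
    obtain ⟨M, hM⟩ := ih
    obtain ⟨M', hM'⟩ := ih'
    refine ⟨min M M', fun x hx => ?_⟩
    rw [W_mul, hM' _ (le_trans hx (min_le_right _ _)), hM _ (le_trans hx (min_le_left _ _))]
  | inv f _ ih =>
    obtain ⟨M, hM⟩ := ih
    exact ⟨M, fun x hx => W_inv_eq _ (hM x hx)⟩

theorem dy_big (M : ℝ) : ∃ d, IsDyadic d ∧ 0 < d ∧ M ≤ d := by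
  obtain ⟨n, hn⟩ := exists_nat_ge M
  refine ⟨((n + 1 : ℤ) : ℝ), dy_int _, by positivity, ?_⟩
  push_cast; linarith

theorem TT_trunc {g : W} (hg : g ∈ TT) : ∀ M : ℝ, ∃ g' ∈ Pc, ∀ x, x ≤ M → g' x = g x := by
  have hb : ∀ p, IsDyadic p → ∀ d, IsDyadic d → 0 < d → bump p d ∈ Pc := fun p hp d hd h0 =>
    ⟨bump_mem hp hd, p + 3 * d, fun x hx => bump_4 h0.le hx⟩
  have hb1 : ∀ p, ∀ d, 0 < d → ∀ x, x ≤ p + d → bump p d x = tau p x := by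
    intro p d h0 x hx
    rcases le_total x p with h | h
    · rw [bump_1 h0.le h, tau_le h]
    · rw [bump_2 h0.le h hx, tau_ge h]
  induction hg using Subgroup.closure_induction_left with
  | one => exact fun M => ⟨1, one_mem _, fun x _ => rfl⟩
  | mul_left y hy z hz ih =>
    obtain ⟨p, hp, rfl⟩ := hy
    intro M
    obtain ⟨g', hg', h⟩ := ih M
    obtain ⟨d, hd, h0, hdM⟩ := dy_big (z M - p)
    refine ⟨bump p d * g', mul_mem (hb p hp d hd h0) hg', fun x hx => ?_⟩
    rw [W_mul, W_mul, h x hx]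
    exact hb1 p d h0 _ (by linarith [z.monotone hx])
  | inv_mul_cancel y hy z hz ih =>
    obtain ⟨p, hp, rfl⟩ := hy
    intro M
    obtain ⟨g', hg', h⟩ := ih M
    obtain ⟨d, hd, h0, hdM⟩ := dy_big ((tau p)⁻¹ (z M) - p)
    refine ⟨(bump p d)⁻¹ * g', mul_mem (inv_mem (hb p hp d hd h0)) hg', fun x hx => ?_⟩
    rw [W_mul, W_mul, h x hx]
    apply W_inv_eq
    rw [hb1 p d h0, W_self_inv]
    have := ((tau p)⁻¹ : W).monotone (z.monotone hx)
    linarith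

/-- Disjoint supports commute. -/
theorem disj_comm {a b : W} (h : ∀ x, a x = x ∨ b x = x) : a * b = b * a := by
  ext x
  rw [W_mul, W_mul]
  rcases h x with h1 | h1
  · rw [h1]
    rcases h (b x) with h2 | h2
    · exact h2
    · have := b.injective h2
      rw [this, h1]
  · rw [h1]
    rcases h (a x) with h2 | h2
    · have := a.injective h2
      rw [this, h1]
    · exact h2.symm

theorem Pc_normal_conj {g f : W} (hg : g ∈ TT) (hf : f ∈ Pc) : g * f * g⁻¹ ∈ Pc := by
  obtain ⟨hf, M, hM⟩ := hf
  refine ⟨mul_mem (mul_mem hg hf) (inv_mem hg), g M, fun x hx => ?_⟩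
  have h : M ≤ g⁻¹ x := by
    have := (g⁻¹ : W).monotone hx
    rwa [W_inv_self] at this
  rw [W_mul, W_mul, hM _ h, W_self_inv]

/-- `[T, Pc] ≤ [Pc, Pc]`. -/
theorem comm_TT_Pc {g f : W} (hg : g ∈ TT) (hf : f ∈ Pc) : ⁅g, f⁆ ∈ ⁅Pc, Pc⁆ := by
  obtain ⟨hfT, M, hM⟩ := hf
  obtain ⟨g', hg', h⟩ := TT_trunc hg M
  have hc : (g⁻¹ * g') * f = f * (g⁻¹ * g') := by
    apply disj_comm
    intro x
    rcases le_total x M with hx | hx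
    · left
      rw [W_mul, h x hx, W_inv_self]
    · right; exact hM x hx
  have : ⁅g, f⁆ = ⁅g', f⁆ := by
    rw [commutatorElement_def, commutatorElement_def]
    have e : g' = g * (g⁻¹ * g') := by group
    calc g * f * g⁻¹ * f⁻¹ = g * (f * (g⁻¹ * g')) * (g⁻¹ * g')⁻¹ * g⁻¹ * f⁻¹ := by group
      _ = g * ((g⁻¹ * g') * f) * (g⁻¹ * g')⁻¹ * g⁻¹ * f⁻¹ := by rw [hc]
      _ = _ := by group
  rw [this]
  exact Subgroup.commutator_mem_commutator hg' ⟨hfT, M, hM⟩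

/-- Main perfection result on the line. -/
theorem Pc_perfect : Pc ≤ ⁅Pc, Pc⁆ := by
  set PT : Subgroup TT := Pc.subgroupOf TT with hPT
  have hPle : Pc ≤ TT := fun f hf => hf.1
  have : PT.Normal := ⟨by
    rintro ⟨f, hf⟩ hfP ⟨g, hg⟩
    exact Pc_normal_conj hg hfP⟩
  let C : Subgroup TT := (⁅Pc, Pc⁆ : Subgroup W).subgroupOf TT
  have hCle : (⁅Pc, Pc⁆ : Subgroup W) ≤ Pc := Subgroup.commutator_le_self Pc
  have : C.Normal := ⟨by
    rintro ⟨f, hf⟩ hfP ⟨g, hg⟩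
    change g * f * g⁻¹ ∈ (⁅Pc, Pc⁆ : Subgroup W)
    have hfP' : f ∈ (⁅Pc, Pc⁆ : Subgroup W) := hfP
    have h1 := mul_mem (comm_TT_Pc hg (hCle hfP')) hfP'
    rwa [commutatorElement_def, inv_mul_cancel_right] at h1⟩
  let t : ℝ → TT ⧸ C := fun p => open Classical in
    if h : IsDyadic p then ((⟨tau p, tau_mem h⟩ : TT) : TT ⧸ C) else 1
  have ht : ∀ p (h : IsDyadic p), t p = ((⟨tau p, tau_mem h⟩ : TT) : TT ⧸ C) := by
    intro p h; simp only [t, dif_pos h]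
  -- elements of `Pc` are central
  have hcen : ∀ f : TT, (f : W) ∈ Pc → (f : TT ⧸ C) ∈ Subgroup.center (TT ⧸ C) := by
    intro f hf
    rw [Subgroup.mem_center_iff]
    intro q
    induction q using QuotientGroup.induction_on with
    | H g =>
      rw [← QuotientGroup.mk_mul, ← QuotientGroup.mk_mul, QuotientGroup.eq]
      change (g * f : W)⁻¹ * (f * g : W) ∈ (⁅Pc, Pc⁆ : Subgroup W)
      have := comm_TT_Pc (inv_mem g.2) (inv_mem hf)
      have h2 := hCle this
      have := inv_mem (comm_TT_Pc (inv_mem g.2) (inv_mem hf))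
      rw [commutatorElement_inv, commutatorElement_def] at this
      simpa [mul_assoc] using this
  have hZ0 : ∀ f g : TT, ∀ k c, Ev (f : W) k c → Ev (g : W) k c →
      ∃ z ∈ Subgroup.center (TT ⧸ C), (f : TT ⧸ C) = (g : TT ⧸ C) * z := by
    intro f g k c hf hg
    refine ⟨((g⁻¹ * f : TT) : TT ⧸ C), hcen _ ?_, ?_⟩
    · obtain ⟨M, hM⟩ := hf
      obtain ⟨M', hM'⟩ := hg
      refine ⟨(g⁻¹ * f : TT).2, max M M', fun x hx => ?_⟩
      change (g : W)⁻¹ ((f : W) x) = x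
      apply W_inv_eq
      rw [hM _ (le_trans (le_max_left _ _) hx), hM' _ (le_trans (le_max_right _ _) hx)]
    · rw [← QuotientGroup.mk_mul]; congr 1; group
  have hB0 : ∀ p q, IsDyadic p → IsDyadic q → p < q → t p * t q * (t p)⁻¹ = t (2 * q - p) := by
    intro p q hp hq hpq
    rw [ht p hp, ht q hq, ht _ (dy_sub (dy_double hq) hp), ← QuotientGroup.mk_mul,
      ← QuotientGroup.mk_inv, ← QuotientGroup.mk_mul]
    congr 1
    apply Subtype.ext
    change tau p * tau q * (tau p)⁻¹ = tau (2 * q - p)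
    rw [mul_inv_eq_iff_eq_mul]
    ext x
    rw [W_mul, W_mul]
    rcases le_total x p with h | h
    · rw [tau_le (p := q) (by linarith), tau_le h, tau_le (by linarith)]
    · rw [tau_ge h]
      rcases le_total x q with h' | h'
      · rw [tau_le h', tau_ge h, tau_le (by linarith)]
      · rw [tau_ge h', tau_ge (by linarith), tau_ge (by linarith)]; ring
  have hB0' : ∀ p q, IsDyadic p → IsDyadic q → p < q → (t p)⁻¹ * t q * t p = t ((q + p) / 2) := by
    intro p q hp hq hpq
    have := hB0 p ((q + p) / 2) hp (dy_half (dy_add hq hp)) (by linarith)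
    have e : 2 * ((q + p) / 2) - p = q := by ring
    rw [e] at this
    rw [← this]; group
  have hB : ∀ p q, IsDyadic p → IsDyadic q → t p * t q * (t p)⁻¹ = t (2 * q - p) := by
    intro p q hp hq
    obtain ⟨e, he, he0, hepq⟩ := dy_big (|p - q| + 1)
    have hab := abs_le.1 (le_refl |p - q|)
    set p' := q - 1 with hp'
    have hp'd : IsDyadic p' := dy_sub hq dy_one
    set v := q - 3 * e with hv
    have hvd : IsDyadic v := dy_sub hq (by simpa using dy_intmul 3 he)
    set u := v + p - p' with hu
    have hud : IsDyadic u := dy_sub (dy_add hvd hp) hp'd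
    have hword : Ev (tau u * (tau v)⁻¹ * tau p') 1 (-p) := by
      have h1 := Ev_mul (Ev_mul (Ev_tau u) (Ev_inv (Ev_tau v))) (Ev_tau p')
      have e1 : (1 : ℤ) + -1 + 1 = 1 := by norm_num
      have e2 : (2 : ℝ) ^ (1 + -1 : ℤ) * -p' + (2 ^ (1:ℤ) * -(2 ^ (-1 : ℤ) * -v) + -u) = -p := by
        rw [hu]; simp; ring
      rwa [e1, e2] at h1
    obtain ⟨z, hz, h⟩ := hZ0 ⟨tau p, tau_mem hp⟩
      (⟨tau u, tau_mem hud⟩ * (⟨tau v, tau_mem hvd⟩)⁻¹ * ⟨tau p', tau_mem hp'd⟩) 1 (-p) (Ev_tau p) hword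
    rw [QuotientGroup.mk_mul, QuotientGroup.mk_mul, QuotientGroup.mk_inv, ← ht p hp,
      ← ht u hud, ← ht v hvd, ← ht p' hp'd] at h
    have hzc := Subgroup.mem_center_iff.1 hz
    have e1 : t p * t q * (t p)⁻¹ =
        t u * ((t v)⁻¹ * (t p' * t q * (t p')⁻¹) * t v) * (t u)⁻¹ := by
      rw [h]
      have : z * t q * z⁻¹ = t q := by rw [← hzc, mul_inv_cancel_right]
      calc _ = t u * (t v)⁻¹ * t p' * (z * t q * z⁻¹) * (t u * (t v)⁻¹ * t p')⁻¹ := by group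
        _ = _ := by rw [this]; group
    rw [e1, hB0 p' q hp'd hq (by linarith),
      hB0' v _ hvd (dy_sub (dy_double hq) hp'd) (by rw [hp', hv]; linarith),
      hB0 u _ hud (dy_half (dy_add (dy_sub (dy_double hq) hp'd) hvd)) (by rw [hu, hp', hv]; linarith)]
    congr 1
    rw [hu]; ring
  have hZ : ∀ p q d, IsDyadic p → IsDyadic q → IsDyadic d →
      ∃ z ∈ Subgroup.center (TT ⧸ C), t p * (t (p + d))⁻¹ = t q * (t (q + d))⁻¹ * z := by
    intro p q d hp hq hd
    have w1 := Ev_mul (Ev_tau p) (Ev_inv (Ev_tau (p + d)))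
    have w2 := Ev_mul (Ev_tau q) (Ev_inv (Ev_tau (q + d)))
    have e1 : (2 : ℝ) ^ (1:ℤ) * -(2 ^ (-1 : ℤ) * -(p + d)) + -p = d := by simp
    have e2 : (2 : ℝ) ^ (1:ℤ) * -(2 ^ (-1 : ℤ) * -(q + d)) + -q = d := by simp
    have e3 : (1 : ℤ) + -1 = 0 := by norm_num
    rw [e1, e3] at w1
    rw [e2, e3] at w2
    have := hZ0 (⟨tau p, tau_mem hp⟩ * (⟨tau (p + d), tau_mem (dy_add hp hd)⟩)⁻¹)
      (⟨tau q, tau_mem hq⟩ * (⟨tau (q + d), tau_mem (dy_add hq hd)⟩)⁻¹) 0 d w1 w2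
    rwa [QuotientGroup.mk_mul, QuotientGroup.mk_mul, QuotientGroup.mk_inv, QuotientGroup.mk_inv,
      ← ht p hp, ← ht _ (dy_add hp hd), ← ht q hq, ← ht _ (dy_add hq hd)] at this
  have key := abstractQ t hB hZ
  have hall : ∀ f : W, ∀ hf : f ∈ TT, ((⟨f, hf⟩ : TT) : TT ⧸ C) ∈
      Subgroup.closure {x | ∃ p, IsDyadic p ∧ x = t p} := by
    intro f hf
    induction hf using Subgroup.closure_induction with
    | mem x hx =>
      obtain ⟨p, hp, rfl⟩ := hx
      apply Subgroup.subset_closure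
      exact ⟨p, hp, (ht p hp).symm⟩
    | one => exact one_mem _
    | mul f g hf hg ih ih' => exact mul_mem ih ih'
    | inv f hf ih => exact inv_mem ih
  intro f hf
  obtain ⟨d, k, hd, h⟩ := key _ (hall f hf.1)
  rw [ht 0 dy_zero, ht d hd, ← QuotientGroup.mk_inv, ← QuotientGroup.mk_mul, ← QuotientGroup.mk_zpow,
    ← QuotientGroup.mk_mul, QuotientGroup.eq] at h
  have h' : f⁻¹ * (tau 0 * (tau d)⁻¹ * tau 0 ^ k) ∈ (⁅Pc, Pc⁆ : Subgroup W) := by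
    have := Subgroup.mem_subgroupOf.1 h
    simpa using this
  have h2 : tau 0 * (tau d)⁻¹ * tau 0 ^ k ∈ Pc := by
    have := mul_mem hf (hCle h')
    rwa [mul_inv_cancel_left] at this
  obtain ⟨_, M, hM⟩ := h2
  have w0 : Ev (tau 0 * (tau d)⁻¹ * tau 0 ^ k) 0 0 := ⟨M, fun x hx => by rw [hM x hx]; simp⟩
  have w1 := Ev_mul (Ev_mul (Ev_tau 0) (Ev_inv (Ev_tau d))) (Ev_tau0_zpow k)
  obtain ⟨hk, hdd⟩ := Ev_unique w0 w1
  have hk' : k = 0 := by simpa using hk.symm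
  have hd' : d = 0 := by simpa using hdd.symm
  subst hk' hd'
  have := inv_mem h'
  simpa using this

end GR

namespace GR
open scoped commutatorElement

/-- Conjugation by a reflection. -/
noncomputable def rf (s : ℝ) : W →* W where
  toFun f :=
    { toFun := fun x => s - f (s - x)
      invFun := fun x => s - f⁻¹ (s - x)
      left_inv := fun x => by
        change s - f⁻¹ (s - (s - f (s - x))) = x
        rw [sub_sub_cancel, W_inv_self]; ring
      right_inv := fun x => by
        change s - f (s - (s - f⁻¹ (s - x))) = x
        rw [sub_sub_cancel, W_self_inv]; ring
      map_rel_iff' := by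
        intro x y
        change s - f (s - x) ≤ s - f (s - y) ↔ x ≤ y
        rw [sub_le_sub_iff_left, f.le_iff_le, sub_le_sub_iff_left] }
  map_one' := by ext x; change s - (s - x) = x; ring
  map_mul' f g := by
    ext x
    change s - f (g (s - x)) = s - f (s - (s - g (s - x)))
    rw [sub_sub_cancel]

theorem rf_apply (s : ℝ) (f : W) (x : ℝ) : rf s f x = s - f (s - x) := rfl

/-- Conjugation by a translation. -/
noncomputable def tr (c : ℝ) : W →* W := (rf (c / 2)).comp (rf (-c / 2))

theorem tr_apply (c : ℝ) (f : W) (x : ℝ) : tr c f x = f (x - c) + c := by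
  change c / 2 - (-c / 2 - f (-c / 2 - (c / 2 - x))) = _
  have : -c / 2 - (c / 2 - x) = x - c := by ring
  rw [this]; ring

theorem rf_rf (s : ℝ) (f : W) : rf s (rf s f) = f := by
  ext x; simp [rf_apply]

theorem tr_neg (c : ℝ) (f : W) : tr (-c) (tr c f) = f := by
  ext x; simp [tr_apply]

theorem tr_neg' (c : ℝ) (f : W) : tr c (tr (-c) f) = f := by
  ext x; simp [tr_apply]

/-- Piecewise linearity with breakpoints in a finite set. -/
def PLw (S : Finset ℝ) (f : W) : Prop :=
  (∀ s ∈ S, IsDyadic s) ∧ ∀ a b : ℝ, a < b → (∀ s ∈ S, ¬ (a < s ∧ s < b)) →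
    ∃ (k : ℤ) (c : ℝ), ∀ x, a ≤ x → x ≤ b → f x = 2 ^ k * x + c

def IsPL (f : W) : Prop := ∃ S, PLw S f

theorem tau_dy {p x : ℝ} (hp : IsDyadic p) (hx : IsDyadic x) : IsDyadic (tau p x) := by
  rcases le_total x p with h | h
  · rwa [tau_le h]
  · rw [tau_ge h]; exact dy_sub (dy_double hx) hp

theorem tau_inv_dy {p x : ℝ} (hp : IsDyadic p) (hx : IsDyadic x) : IsDyadic ((tau p)⁻¹ x) := by
  rcases le_total x p with h | h
  · rwa [tau_inv_le h]
  · rw [tau_inv_ge h]; exact dy_half (dy_add hx hp)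

/-- Composition on the right with a one-breakpoint map. -/
theorem PL_comp {f g : W} {p : ℝ} (hp : IsDyadic p) (hf : IsPL f)
    (hd : ∀ x, IsDyadic x → IsDyadic (g⁻¹ x))
    (h1 : ∃ (k : ℤ) (c : ℝ), ∀ x ≤ p, g x = 2 ^ k * x + c)
    (h2 : ∃ (k : ℤ) (c : ℝ), ∀ x ≥ p, g x = 2 ^ k * x + c) : IsPL (f * g) := by
  classical
  obtain ⟨S, hS, h⟩ := hf
  refine ⟨insert p (S.image fun x => g⁻¹ x), ?_, ?_⟩
  · intro s hs
    rw [Finset.mem_insert, Finset.mem_image] at hs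
    rcases hs with rfl | ⟨x, hx, rfl⟩
    · exact hp
    · exact hd x (hS x hx)
  · intro a b hab hmiss
    have hg : ∃ (k : ℤ) (c : ℝ), ∀ x, a ≤ x → x ≤ b → g x = 2 ^ k * x + c := by
      have := hmiss p (Finset.mem_insert_self _ _)
      rcases le_or_gt p a with h' | h'
      · obtain ⟨k, c, h2⟩ := h2
        exact ⟨k, c, fun x hx _ => h2 x (le_trans h' hx)⟩
      · obtain ⟨k, c, h1⟩ := h1
        refine ⟨k, c, fun x _ hx => h1 x ?_⟩
        by_contra hc
        exact this ⟨h', by linarith⟩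
    obtain ⟨k, c, hg⟩ := hg
    obtain ⟨l, d, hf⟩ := h (g a) (g b) (g.strictMono hab) (by
      intro s hs ⟨h3, h4⟩
      refine hmiss (g⁻¹ s) (Finset.mem_insert_of_mem (Finset.mem_image_of_mem _ hs)) ⟨?_, ?_⟩
      · rw [← g.lt_iff_lt, W_self_inv]; exact h3
      · rw [← g.lt_iff_lt, W_self_inv]; exact h4)
    refine ⟨l + k, 2 ^ l * c + d, fun x hx hx' => ?_⟩
    rw [W_mul, hf _ (g.monotone hx) (g.monotone hx'), hg x hx hx', zpow_add₀ (by norm_num)]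
    ring

theorem TT_PL {f : W} (hf : f ∈ TT) : IsPL f := by
  induction hf using Subgroup.closure_induction_right with
  | one => exact ⟨∅, by simp, fun a b _ _ => ⟨0, 0, fun x _ _ => by simp [W_one]⟩⟩
  | mul_right x hx y hy ih =>
    obtain ⟨p, hp, rfl⟩ := hy
    refine PL_comp hp ih (fun x hx => tau_inv_dy hp hx) ⟨0, 0, fun x hx => ?_⟩ ⟨1, -p, fun x hx => ?_⟩
    · rw [tau_le hx]; simp
    · rw [tau_ge hx]; simp; ring
  | mul_inv_cancel x hx y hy ih =>
    obtain ⟨p, hp, rfl⟩ := hy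
    refine PL_comp hp ih (fun x hx => by rw [inv_inv]; exact tau_dy hp hx)
      ⟨0, 0, fun x hx => ?_⟩ ⟨-1, p / 2, fun x hx => ?_⟩
    · rw [tau_inv_le hx]; simp
    · rw [tau_inv_ge hx, zpow_neg_one]; ring

theorem tau_pow_le {p x : ℝ} (h : x ≤ p) (k : ℤ) : (tau p ^ k) x = x := by
  induction k using Int.induction_on with
  | zero => rfl
  | succ n ih => rw [zpow_add, W_mul, zpow_one, tau_le h, ih]
  | pred n ih => rw [zpow_sub, W_mul, zpow_one, tau_inv_le h, ih]

theorem tau_pow_ge {p x : ℝ} (h : p ≤ x) (k : ℤ) : (tau p ^ k) x = 2 ^ k * (x - p) + p := by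
  induction k using Int.induction_on generalizing x with
  | zero => simp [W_one]
  | succ n ih =>
    rw [zpow_add, W_mul, zpow_one, tau_ge h, ih (by linarith), zpow_add₀ (by norm_num), zpow_one]; ring
  | pred n ih =>
    rw [zpow_sub, W_mul, zpow_one, tau_inv_ge h, ih (by linarith), zpow_sub₀ (by norm_num), zpow_one]
    ring

theorem tau_pow_mem {p : ℝ} (hp : IsDyadic p) (k : ℤ) : tau p ^ k ∈ TT := zpow_mem (tau_mem hp) k

theorem tau_pow_dy {p : ℝ} (hp : IsDyadic p) (k : ℤ) : ∀ {x : ℝ}, IsDyadic x → IsDyadic ((tau p ^ k) x) := by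
  induction k using Int.induction_on with
  | zero => exact fun h => h
  | succ n ih => intro x hx; rw [zpow_add, W_mul, zpow_one]; exact ih (tau_dy hp hx)
  | pred n ih => intro x hx; rw [zpow_sub, W_mul, zpow_one]; exact ih (tau_inv_dy hp hx)

theorem affine_unique {a b : ℝ} (hab : a ≠ b) {k l : ℤ} {c d : ℝ}
    (h1 : (2 : ℝ) ^ k * a + c = 2 ^ l * a + d) (h2 : (2 : ℝ) ^ k * b + c = 2 ^ l * b + d) :
    k = l ∧ c = d := by
  have h3 : ((2 : ℝ) ^ k - 2 ^ l) * (a - b) = 0 := by linarith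
  have h4 : (2 : ℝ) ^ k = 2 ^ l := by
    rcases mul_eq_zero.1 h3 with h | h
    · linarith
    · exact absurd (by linarith) hab
  refine ⟨zpow_right_injective₀ (by norm_num) (by norm_num) h4, ?_⟩
  rw [h4] at h1; linarith

theorem PL_TT : ∀ n : ℕ, ∀ S : Finset ℝ, S.card = n → ∀ f : W, PLw S f →
    (∃ M, ∀ x ≤ M, f x = x) → f ∈ TT := by
  classical
  intro n
  induction n with
  | zero =>
    intro S hS f hf ⟨M, hM⟩
    rw [Finset.card_eq_zero] at hS
    subst hS
    have : f = 1 := by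
      ext x
      obtain ⟨k, c, h⟩ := hf.2 (min M x - 1) (max M x + 1)
        (by linarith [min_le_left M x, le_max_left M x]) (by simp)
      have hm1 := min_le_left M x
      have hm2 := min_le_right M x
      have hm3 := le_max_left M x
      have hm4 := le_max_right M x
      have e1 := h (min M x - 1) le_rfl (by linarith)
      have e2 := h (min M x) (by linarith) (by linarith)
      rw [hM _ (by linarith)] at e1 e2
      have := affine_unique (a := min M x - 1) (b := min M x) (k := 0) (l := k) (c := 0) (d := c)
        (by linarith) (by simpa using e1) (by simpa using e2)
      rw [h x (by linarith) (by linarith), ← this.1, ← this.2, W_one]; simp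
    rw [this]; exact one_mem _
  | succ n ih =>
    intro S hS f hf ⟨M, hM⟩
    have hne : S.Nonempty := by rw [← Finset.card_pos]; omega
    set p := S.min' hne with hp
    have hpS : p ∈ S := Finset.min'_mem _ _
    have hpd := hf.1 p hpS
    have hmin : ∀ s ∈ S, p ≤ s := fun s hs => Finset.min'_le _ _ hs
    have hleft : ∀ x ≤ p, f x = x := by
      intro x hx
      have hm1 := min_le_left M x
      have hm2 := min_le_right M x
      obtain ⟨k, c, h⟩ := hf.2 (min M x - 1) p (by linarith) (fun s hs h => by linarith [hmin s hs])
      have e1 := h (min M x - 1) le_rfl (by linarith)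
      have e2 := h (min M x) (by linarith) (by linarith)
      rw [hM _ (by linarith)] at e1 e2
      have := affine_unique (a := min M x - 1) (b := min M x) (k := 0) (l := k) (c := 0) (d := c)
        (by linarith) (by simpa using e1) (by simpa using e2)
      rw [h x (by linarith) (by linarith), ← this.1, ← this.2]; simp
    obtain ⟨q, hpq, hq⟩ : ∃ q, p < q ∧ ∀ s ∈ S, ¬ (p < s ∧ s < q) := by
      by_cases hT : (S.erase p).Nonempty
      · refine ⟨(S.erase p).min' hT, ?_, ?_⟩
        · have := Finset.min'_mem _ hT
          rw [Finset.mem_erase] at this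
          exact lt_of_le_of_ne (hmin _ this.2) (Ne.symm this.1)
        · rintro s hs ⟨h1, h2⟩
          have := Finset.min'_le (S.erase p) s (Finset.mem_erase.2 ⟨h1.ne', hs⟩)
          linarith
      · refine ⟨p + 1, by linarith, fun s hs h => hT ⟨s, Finset.mem_erase.2 ⟨h.1.ne', hs⟩⟩⟩
    obtain ⟨k, c, hkc⟩ := hf.2 p q hpq hq
    have hcp : c = p - 2 ^ k * p := by
      have := hkc p le_rfl hpq.le
      rw [hleft p le_rfl] at this; linarith
    have key : f * tau p ^ (-k) ∈ TT := by
      refine ih ((S.erase p).image fun x => (tau p ^ k) x) ?_ _ ⟨?_, ?_⟩ ⟨p, ?_⟩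
      · rw [Finset.card_image_of_injective _ (tau p ^ k).injective, Finset.card_erase_of_mem hpS]; omega
      · intro s hs
        obtain ⟨x, hx, rfl⟩ := Finset.mem_image.1 hs
        exact tau_pow_dy hpd _ (hf.1 x (Finset.mem_of_mem_erase hx))
      · intro a b hab hmiss
        have hinv : ∀ x, (tau p ^ k) ((tau p ^ (-k)) x) = x := by
          intro x; rw [← W_mul, ← zpow_add]; simp [W_one]
        -- on the right of p
        have hR : ∀ a' b', p ≤ a' → a' < b' → a ≤ a' → b' ≤ b → ∃ (l : ℤ) (d : ℝ), ∀ x,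
            (tau p ^ (-k)) a' ≤ x → x ≤ (tau p ^ (-k)) b' → f x = 2 ^ l * x + d := by
          intro a' b' hpa hab' ha hb
          refine hf.2 _ _ ((tau p ^ (-k)).strictMono hab') ?_
          rintro s hs ⟨h1, h2⟩
          have h3 : s ≠ p := by
            rintro rfl
            have := (tau p ^ (-k)).monotone hpa
            rw [tau_pow_le le_rfl] at this
            linarith
          refine hmiss _ (Finset.mem_image_of_mem _ (Finset.mem_erase.2 ⟨h3, hs⟩)) ⟨?_, ?_⟩
          · have := (tau p ^ k).strictMono h1
            rw [hinv] at this; linarith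
          · have := (tau p ^ k).strictMono h2
            rw [hinv] at this; linarith
        rcases le_or_gt b p with hb | hb
        · refine ⟨0, 0, fun x _ hx => ?_⟩
          rw [W_mul, tau_pow_le (by linarith), hleft _ (by linarith)]; simp
        rcases le_or_gt p a with ha | ha
        · obtain ⟨l, d, h⟩ := hR a b ha hab le_rfl le_rfl
          refine ⟨l + -k, 2 ^ l * (-2 ^ (-k) * p + p) + d, fun x hx hx' => ?_⟩
          rw [W_mul, h _ ((tau p ^ (-k)).monotone hx) ((tau p ^ (-k)).monotone hx'),
            tau_pow_ge (by linarith), zpow_add₀ (by norm_num)]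
          ring
        · obtain ⟨l, d, h⟩ := hR p b le_rfl hb ha.le le_rfl
          rw [tau_pow_le le_rfl] at h
          have hpb' := (tau p ^ (-k)).strictMono hb
          rw [tau_pow_le le_rfl] at hpb'
          set b' := (tau p ^ (-k)) b with hb'
          have hm := lt_min hpq hpb'
          have e1 := h p le_rfl hpb'.le
          have e2 := h (min q b') hm.le (min_le_right _ _)
          rw [hkc _ le_rfl hpq.le] at e1
          rw [hkc _ hm.le (min_le_left _ _)] at e2
          obtain ⟨rfl, rfl⟩ := affine_unique hm.ne e1 e2
          refine ⟨0, 0, fun x hx hx' => ?_⟩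
          rcases le_total x p with hxp | hxp
          · rw [W_mul, tau_pow_le (by linarith), hleft _ (by linarith)]; simp
          · have m1 := (tau p ^ (-k)).monotone hxp
            rw [tau_pow_le le_rfl] at m1
            rw [W_mul, h _ m1 ((tau p ^ (-k)).monotone hx'), tau_pow_ge hxp, hcp, zpow_neg]
            have : (2 : ℝ) ^ k ≠ 0 := by positivity
            field_simp
            simp; ring
      · intro x hx
        rw [W_mul, tau_pow_le hx, hleft x hx]
    have := mul_mem key (tau_pow_mem hpd k)
    rwa [mul_assoc, ← zpow_add, neg_add_cancel, zpow_zero, mul_one] at this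

theorem PL_rf {s : ℝ} (hs : IsDyadic s) {f : W} (hf : IsPL f) : IsPL (rf s f) := by
  classical
  obtain ⟨S, hS, h⟩ := hf
  refine ⟨S.image fun x => s - x, ?_, ?_⟩
  · intro y hy
    obtain ⟨x, hx, rfl⟩ := Finset.mem_image.1 hy
    exact dy_sub hs (hS x hx)
  · intro a b hab hmiss
    obtain ⟨k, c, h⟩ := h (s - b) (s - a) (by linarith) (by
      rintro x hx ⟨h1, h2⟩
      exact hmiss _ (Finset.mem_image_of_mem _ hx) ⟨by linarith, by linarith⟩)
    refine ⟨k, s - 2 ^ k * s - c, fun x hx hx' => ?_⟩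
    rw [rf_apply, h _ (by linarith) (by linarith)]; ring

theorem Pc_rf {s : ℝ} (hs : IsDyadic s) {f : W} (hf : f ∈ Pc) : rf s f ∈ Pc := by
  obtain ⟨hT, M, hM⟩ := hf
  obtain ⟨M', hM'⟩ := TT_left hT
  obtain ⟨S, hS⟩ := PL_rf hs (TT_PL hT)
  refine ⟨PL_TT _ S rfl _ hS ⟨s - M, fun x hx => ?_⟩, s - M', fun x hx => ?_⟩
  · rw [rf_apply, hM _ (by linarith)]; ring
  · rw [rf_apply, hM' _ (by linarith)]; ring

theorem Pc_tr {s : ℝ} (hs : IsDyadic s) {f : W} (hf : f ∈ Pc) : tr s f ∈ Pc :=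
  Pc_rf (dy_half hs) (Pc_rf (dy_half (dy_neg hs)) hf)

end GR

namespace GR
open scoped commutatorElement

/-- Homeomorphisms supported in `[a, b]`. -/
def K (a b : ℝ) : Subgroup W where
  carrier := {f | ∀ x, x ≤ a ∨ b ≤ x → f x = x}
  one_mem' := fun _ _ => rfl
  mul_mem' := by
    intro f g hf hg x hx
    rw [W_mul, hg x hx, hf x hx]
  inv_mem' := by
    intro f hf x hx
    exact W_inv_eq _ (hf x hx)

theorem K_mono {a b a' b' : ℝ} (ha : a' ≤ a) (hb : b ≤ b') : K a b ≤ K a' b' := by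
  intro f hf x hx
  apply hf
  rcases hx with h | h
  · left; linarith
  · right; linarith

theorem K_conj {a b : ℝ} {f : W} (hf : f ∈ K a b) (g : W) : g * f * g⁻¹ ∈ K (g a) (g b) := by
  intro x hx
  have : f (g⁻¹ x) = g⁻¹ x := by
    apply hf
    rcases hx with h | h
    · left; rw [← g.le_iff_le, W_self_inv]; exact h
    · right; rw [← g.le_iff_le, W_self_inv]; exact h
  rw [W_mul, W_mul, this, W_self_inv]

theorem K_rf {a b s : ℝ} {f : W} (hf : f ∈ K a b) : rf s f ∈ K (s - b) (s - a) := by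
  intro x hx
  rw [rf_apply, hf]
  · ring
  · rcases hx with h | h
    · right; linarith
    · left; linarith

theorem K_tr {a b s : ℝ} {f : W} (hf : f ∈ K a b) : tr s f ∈ K (a + s) (b + s) := by
  intro x hx
  rw [tr_apply, hf]
  · ring
  · rcases hx with h | h
    · left; linarith
    · right; linarith

theorem K_bump {p d : ℝ} (hd : 0 ≤ d) : bump p d ∈ K p (p + 3 * d) := by
  rintro x (h | h)
  · exact bump_1 hd h
  · exact bump_4 hd h

theorem bump_Pc {p d : ℝ} (hp : IsDyadic p) (hd : IsDyadic d) (h0 : 0 ≤ d) : bump p d ∈ Pc :=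
  ⟨bump_mem hp hd, p + 3 * d, fun _ hx => bump_4 h0 hx⟩

theorem K_maps {a b : ℝ} {f : W} (hf : f ∈ K a b) {x : ℝ} (h : a ≤ x) (h' : x ≤ b) :
    a ≤ f x ∧ f x ≤ b := by
  constructor
  · rw [← hf a (Or.inl le_rfl)]; exact f.monotone h
  · rw [← hf b (Or.inr le_rfl)]; exact f.monotone h'

/-- Compactly supported elements in the (centered) open unit interval. -/
noncomputable def FC : Subgroup W where
  carrier := {f | f ∈ Pc ∧ ∃ e < 1 / 2, f ∈ K (-e) e}
  one_mem' := ⟨one_mem _, 0, by norm_num, one_mem _⟩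
  mul_mem' := by
    rintro f g ⟨hf, e, he, h⟩ ⟨hg, e', he', h'⟩
    exact ⟨mul_mem hf hg, max e e', max_lt he he', mul_mem
      (K_mono (neg_le_neg (le_max_left _ _)) (le_max_left _ _) h)
      (K_mono (neg_le_neg (le_max_right _ _)) (le_max_right _ _) h')⟩
  inv_mem' := by
    rintro f ⟨hf, e, he, h⟩
    exact ⟨inv_mem hf, e, he, inv_mem h⟩

theorem FC_of_K {a b : ℝ} {f : W} (hf : f ∈ Pc) (ha : -(1 / 2) < a) (hb : b < 1 / 2) (h : f ∈ K a b) :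
    f ∈ FC :=
  ⟨hf, max (-a) b, max_lt (by linarith) hb,
    K_mono (by linarith [le_max_left (-a) b]) (le_max_right _ _) h⟩

theorem FC_K {f : W} (hf : f ∈ FC) : f ∈ K (-(1 / 2)) (1 / 2) := by
  obtain ⟨_, e, he, h⟩ := hf
  exact K_mono (by linarith) he.le h

theorem FC_rf {f : W} (hf : f ∈ FC) : rf 0 f ∈ FC := by
  obtain ⟨h1, e, he, h⟩ := hf
  refine ⟨Pc_rf dy_zero h1, e, he, ?_⟩
  have := K_rf (s := 0) h
  simpa using this

theorem iter {β : W} {p r : ℝ} (h : ∀ x, p < x → x < r → x < β x) {y z : ℝ} (hy : p < y)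
    (hz : z < r) : ∃ N : ℕ, z < (β ^ N) y := by
  by_contra hcon
  push Not at hcon
  set A : Set ℝ := Set.range fun N : ℕ => (β ^ N) y with hA
  have hbdd : BddAbove A := ⟨z, by rintro _ ⟨N, rfl⟩; exact hcon N⟩
  have hne : A.Nonempty := ⟨_, 0, rfl⟩
  have h1 : y ≤ sSup A := le_csSup hbdd ⟨0, rfl⟩
  have h2 : sSup A ≤ z := csSup_le hne (by rintro _ ⟨N, rfl⟩; exact hcon N)
  have h3 := h (sSup A) (by linarith) (by linarith)
  have h4 : β⁻¹ (sSup A) < sSup A := by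
    rw [← β.lt_iff_lt, W_self_inv]; exact h3
  obtain ⟨_, ⟨N, rfl⟩, hN⟩ := exists_lt_of_lt_csSup hne h4
  have h5 : sSup A < (β ^ (N + 1)) y := by
    rw [pow_succ', W_mul, ← W_self_inv β (sSup A)]
    exact β.strictMono hN
  exact absurd (le_csSup hbdd ⟨N + 1, rfl⟩) (not_le.2 h5)

theorem dy_between {a b : ℝ} (h : a < b) : ∃ d, IsDyadic d ∧ a < d ∧ d < b := by
  obtain ⟨n, hn⟩ := exists_pow_lt_of_lt_one (sub_pos.2 h) (by norm_num : (1 / 2 : ℝ) < 1)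
  have h0 : (0 : ℝ) < 2 ^ n := by positivity
  refine ⟨((⌊a * 2 ^ n⌋ + 1 : ℤ) : ℝ) / 2 ^ n, ⟨_, n, rfl⟩, ?_, ?_⟩
  · rw [lt_div_iff₀ h0]; push_cast; exact Int.lt_floor_add_one _
  · have h1 := Int.floor_le (a * 2 ^ n)
    rw [div_lt_iff₀ h0]
    rw [one_div, inv_pow] at hn
    have h2 : 1 < (b - a) * 2 ^ n := by
      have := mul_lt_mul_of_pos_right hn h0
      rwa [inv_mul_cancel₀ h0.ne'] at this
    push_cast
    linarith

/-- Bumps with prescribed approximate endpoints. -/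
theorem bump_exists {a b c d : ℝ} (hab : a < b) (hbc : b ≤ c) (hcd : c < d) :
    ∃ p r, ∃ β ∈ Pc, a < p ∧ p < b ∧ c < r ∧ r < d ∧ β ∈ K p r ∧ ∀ x, p < x → x < r → x < β x := by
  obtain ⟨p, hp, h1, h2⟩ := dy_between hab
  obtain ⟨e, he, h3, h4⟩ := dy_between (show (c - p) / 3 < (d - p) / 3 by linarith)
  have h0 : 0 ≤ e := by linarith
  exact ⟨p, p + 3 * e, bump p e, bump_Pc hp he h0, h1, h2, by linarith, by linarith, K_bump h0,
    fun x hx hx' => bump_gt hx hx'⟩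

theorem contraction {e u v : ℝ} (he0 : 0 ≤ e) (he : e < 1 / 2) (hu : -(1 / 2) < u) (huv : u < v) (hv : v < 1 / 2) :
    ∃ γ ∈ FC, u ≤ γ (-e) ∧ γ e ≤ v := by
  obtain ⟨p, r, β, hβ, h1, h2, h3, h4, hK, hlt⟩ := bump_exists (a := -(1 / 2)) (b := min (-e) u)
    (c := max e v) (d := 1 / 2) (lt_min (by linarith) hu)
    (le_trans (min_le_right _ _) (le_trans huv.le (le_max_right _ _))) (max_lt he hv)
  have a1 := lt_min_iff.1 h2
  have a2 := max_lt_iff.1 h3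
  obtain ⟨N, hN⟩ := iter hlt (y := v) (z := e) (by linarith) (by linarith)
  have hN' : (β ^ N)⁻¹ e < v := by
    rw [← (β ^ N).lt_iff_lt, W_self_inv]; exact hN
  have hKN : (β ^ N)⁻¹ ∈ K p r := inv_mem (pow_mem hK N)
  set γ₁ := (β ^ N)⁻¹ with hγ
  have b1 := (K_maps hKN (x := -e) (by linarith) (by linarith)).1
  have b1' : γ₁ (-e) ≤ γ₁ e := γ₁.monotone (by linarith)
  have b2 : p < γ₁ (-e) := by
    rw [← hKN p (Or.inl le_rfl)]; exact γ₁.strictMono (by linarith)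
  obtain ⟨p', r', β', hβ', c1, c2, c3, c4, hK', hlt'⟩ := bump_exists (a := p) (b := min (γ₁ (-e)) u)
    (c := max (γ₁ e) u) (d := v) (lt_min b2 (by linarith))
    (le_trans (min_le_right _ _) (le_max_right _ _)) (max_lt hN' huv)
  have d1 := lt_min_iff.1 c2
  have d2 := max_lt_iff.1 c3
  obtain ⟨M, hM⟩ := iter hlt' (y := γ₁ (-e)) (z := u) (by linarith) (by linarith)
  refine ⟨β' ^ M * γ₁, mul_mem (pow_mem (FC_of_K hβ' (by linarith) (by linarith) hK') M)
    (inv_mem (pow_mem (FC_of_K hβ (by linarith) (by linarith) hK) N)), hM.le, ?_⟩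
  rw [W_mul]
  have := (K_maps (pow_mem hK' M) (x := γ₁ e) (by linarith) (by linarith)).2
  linarith

theorem FC_perfect : FC ≤ ⁅FC, FC⁆ := by
  rintro f ⟨hf, e', he', hK'⟩
  obtain ⟨e, he0, he, hK⟩ : ∃ e, 0 ≤ e ∧ e < 1 / 2 ∧ f ∈ K (-e) e :=
    ⟨max e' 0, le_max_right _ _, max_lt he' (by norm_num),
      K_mono (neg_le_neg (le_max_left _ _)) (le_max_left _ _) hK'⟩
  have hsupp : ∀ g ∈ Pc, ∃ M, 1 ≤ M ∧ g ∈ K (-M) M := by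
    rintro g ⟨hg, M, hM⟩
    obtain ⟨M', hM'⟩ := TT_left hg
    refine ⟨max 1 (max M (-M')), le_max_left _ _, ?_⟩
    have l1 : M ≤ max 1 (max M (-M')) := le_trans (le_max_left _ _) (le_max_right _ _)
    have l2 : -M' ≤ max 1 (max M (-M')) := le_trans (le_max_right _ _) (le_max_right _ _)
    rintro x (h | h)
    · exact hM' x (by linarith)
    · exact hM x (by linarith)
  have hcomm : ∀ k ∈ (⁅Pc, Pc⁆ : Subgroup W), ∃ M, 1 ≤ M ∧
      k ∈ ⁅Pc ⊓ K (-M) M, Pc ⊓ K (-M) M⁆ := by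
    have mono : ∀ M M', M ≤ M' → ⁅Pc ⊓ K (-M) M, Pc ⊓ K (-M) M⁆ ≤ ⁅Pc ⊓ K (-M') M', Pc ⊓ K (-M') M'⁆ := by
      intro M M' h
      have := inf_le_inf_left Pc (K_mono (neg_le_neg h) h)
      exact Subgroup.commutator_mono this this
    intro k hk
    rw [Subgroup.commutator_def] at hk
    induction hk using Subgroup.closure_induction with
    | mem x hx =>
      obtain ⟨g, hg, h, hh, rfl⟩ := hx
      obtain ⟨M, h1, h2⟩ := hsupp g hg
      obtain ⟨M', h3, h4⟩ := hsupp h hh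
      exact ⟨max M M', le_trans h1 (le_max_left _ _), Subgroup.commutator_mem_commutator
        ⟨hg, K_mono (neg_le_neg (le_max_left _ _)) (le_max_left _ _) h2⟩
        ⟨hh, K_mono (neg_le_neg (le_max_right _ _)) (le_max_right _ _) h4⟩⟩
    | one => exact ⟨1, le_rfl, one_mem _⟩
    | mul x y _ _ ih ih' =>
      obtain ⟨M, h1, h2⟩ := ih
      obtain ⟨M', h3, h4⟩ := ih'
      exact ⟨max M M', le_trans h1 (le_max_left _ _),
        mul_mem (mono _ _ (le_max_left _ _) h2) (mono _ _ (le_max_right _ _) h4)⟩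
    | inv x _ ih =>
      obtain ⟨M, h1, h2⟩ := ih
      exact ⟨M, h1, inv_mem h2⟩
  obtain ⟨M, hM1, hM⟩ := hcomm f (Pc_perfect hf)
  obtain ⟨p, r, β, hβ, h1, h2, h3, h4, hKβ, hlt⟩ := bump_exists (a := e) (b := 1 / 2)
    (c := M) (d := M + 1) he (by linarith) (by linarith)
  obtain ⟨z, hz1, hz2⟩ := exists_between h2
  obtain ⟨N, hN⟩ := iter hlt (y := z) (z := M) hz1 (by linarith)
  have hN' : (β ^ N)⁻¹ M < z := by
    rw [← (β ^ N).lt_iff_lt, W_self_inv]; exact hN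
  have hKN : (β ^ N)⁻¹ ∈ K p r := inv_mem (pow_mem hKβ N)
  have hPN : (β ^ N)⁻¹ ∈ Pc := inv_mem (pow_mem hβ N)
  set α := (β ^ N)⁻¹ with hα
  have hp0 := (K_maps hKN (x := M) (by linarith) (by linarith)).1
  set γ := α * rf 0 α with hγ
  have hγP : γ ∈ Pc := mul_mem hPN (Pc_rf dy_zero hPN)
  have hγe : ∀ x, -e ≤ x → x ≤ e → γ x = x := by
    intro x hx hx'
    rw [hγ, W_mul, rf_apply, hKN (0 - x) (Or.inl (by linarith)), sub_sub_cancel,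
      hKN x (Or.inl (by linarith))]
  have hγM : γ M < z := by
    rw [hγ, W_mul, rf_apply, hKN (0 - M) (Or.inl (by linarith)), sub_sub_cancel]; exact hN'
  have hγM' : -z < γ (-M) := by
    rw [hγ, W_mul, rf_apply, sub_neg_eq_add, zero_add, hKN (0 - α M) (Or.inl (by linarith))]
    linarith
  have hγf : γ * f * γ⁻¹ = f := by
    rw [mul_inv_eq_iff_eq_mul]
    apply disj_comm
    intro x
    by_cases hx : -e ≤ x ∧ x ≤ e
    · left; exact hγe x hx.1 hx.2
    · right
      apply hK
      by_contra hc
      push Not at hc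
      exact hx ⟨hc.1.le, hc.2.le⟩
  have hle : (Pc ⊓ K (-M) M).map (MulAut.conj γ).toMonoidHom ≤ FC := by
    rintro _ ⟨g, ⟨hg1, hg2⟩, rfl⟩
    change γ * g * γ⁻¹ ∈ FC
    refine FC_of_K (mul_mem (mul_mem hγP hg1) (inv_mem hγP)) ?_ ?_ (K_conj hg2 γ)
    · linarith
    · linarith
  have hfin := Subgroup.mem_map_of_mem (MulAut.conj γ).toMonoidHom hM
  rw [Subgroup.map_commutator] at hfin
  have h5 := Subgroup.commutator_mono hle hle hfin
  have h6 : (MulAut.conj γ).toMonoidHom f = f := hγf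
  rwa [h6] at h5

end GR

namespace GR
open scoped commutatorElement

theorem ThF_PL {f : W} (hf : InThompsonF f) : IsPL f := by
  classical
  obtain ⟨hid, m, x, h0, h1, hmono, hdy, haff⟩ := hf
  refine ⟨Finset.univ.image x, ?_, ?_⟩
  · intro s hs
    obtain ⟨i, _, rfl⟩ := Finset.mem_image.1 hs
    exact hdy i
  · intro a b hab hmiss
    have hm : ∀ i, ¬ (a < x i ∧ x i < b) := fun i => hmiss _ (Finset.mem_image_of_mem _ (Finset.mem_univ i))
    have hend : f 0 = 0 ∧ f 1 = 1 := by
      have hle : ∀ y, y < 0 → f y = y := fun y hy => hid y (fun h => by linarith [h.1])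
      have hge : ∀ y, 1 < y → f y = y := fun y hy => hid y (fun h => by linarith [h.2])
      constructor
      · apply le_antisymm
        · by_contra hc
          push Not at hc
          obtain ⟨m, rfl⟩ : ∃ m', m = m' + 1 := by
            rcases m with _ | m
            · exfalso
              have : (0 : Fin 1) = Fin.last 0 := rfl
              rw [this, h1] at h0; norm_num at h0
            · exact ⟨m, rfl⟩
          have hfl : f⁻¹ 0 < 0 := by
            rw [← f.lt_iff_lt, W_self_inv]; exact hc
          have := hle _ hfl
          rw [W_self_inv] at this
          linarith
        · by_contra hc
          push Not at hc
          have := hle _ hc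
          have := f.injective this
          linarith
      · apply le_antisymm
        · by_contra hc
          push Not at hc
          have := hge _ hc
          have := f.injective this
          linarith
        · by_contra hc
          push Not at hc
          have hfl : 1 < f⁻¹ 1 := by
            rw [← f.lt_iff_lt, W_self_inv]; exact hc
          have := hge _ hfl
          rw [W_self_inv] at this
          linarith
    rcases le_or_gt b 0 with hb | hb
    · refine ⟨0, 0, fun y _ hy => ?_⟩
      rcases eq_or_ne y 0 with rfl | hy0
      · rw [hend.1]; simp
      · rw [hid y (fun h => hy0 (le_antisymm (by linarith) h.1))]; simp
    rcases le_or_gt 1 a with ha | ha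
    · refine ⟨0, 0, fun y hy _ => ?_⟩
      rcases eq_or_ne y 1 with rfl | hy0
      · rw [hend.2]; simp
      · rw [hid y (fun h => hy0 (le_antisymm h.2 (by linarith)))]; simp
    have ha0 : 0 ≤ a := by
      by_contra hc
      exact hm 0 (by rw [h0]; exact ⟨by linarith, hb⟩)
    have hb1 : b ≤ 1 := by
      by_contra hc
      exact hm (Fin.last m) (by rw [h1]; exact ⟨ha, by linarith⟩)
    have hTne : (Finset.univ.filter fun i => x i ≤ a).Nonempty := ⟨0, by simp [h0, ha0]⟩
    set i := (Finset.univ.filter fun i => x i ≤ a).max' hTne with hi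
    have hi1 : x i ≤ a := by
      have := Finset.max'_mem _ hTne
      exact (Finset.mem_filter.1 this).2
    have hi2 : ∀ j, x j ≤ a → j ≤ i := fun j hj => Finset.le_max' _ _ (by simp [hj])
    have hne : i ≠ Fin.last m := by
      intro h
      rw [h, h1] at hi1; linarith
    obtain ⟨j, hj⟩ := Fin.exists_castSucc_eq.2 hne
    obtain ⟨k, c, hkc⟩ := haff j
    refine ⟨k, c, fun y hy hy' => hkc y ⟨?_, ?_⟩⟩
    · rw [hj]; linarith
    · by_contra hc
      push Not at hc
      rcases le_or_gt (x j.succ) a with h | h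
      · have := hi2 _ h
        rw [← hj] at this
        exact absurd this (not_le.2 (Fin.castSucc_lt_succ))
      · exact hm j.succ ⟨h, by linarith⟩

theorem PL_ThF {f : W} (hf : IsPL f) (hK : f ∈ K 0 1) : InThompsonF f := by
  classical
  obtain ⟨S, hS, h⟩ := hf
  refine ⟨fun x hx => hK x ?_, ?_⟩
  · by_contra hc
    push Not at hc
    exact hx ⟨hc.1.le, hc.2.le⟩
  set T : Finset ℝ := (S.filter fun s => 0 < s ∧ s < 1) ∪ {0, 1} with hT
  have hT0 : (0 : ℝ) ∈ T := by simp [hT]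
  have hT1 : (1 : ℝ) ∈ T := by simp [hT]
  have hTb : ∀ t ∈ T, 0 ≤ t ∧ t ≤ 1 ∧ IsDyadic t := by
    intro t ht
    rw [hT, Finset.mem_union, Finset.mem_filter, Finset.mem_insert, Finset.mem_singleton] at ht
    rcases ht with ht | rfl | rfl
    · exact ⟨ht.2.1.le, ht.2.2.le, hS t ht.1⟩
    · exact ⟨le_rfl, by norm_num, dy_zero⟩
    · exact ⟨by norm_num, le_rfl, dy_one⟩
  obtain ⟨m, hm⟩ : ∃ m, T.card = m + 1 := ⟨T.card - 1, by have := Finset.card_pos.2 ⟨_, hT0⟩; omega⟩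
  set x := T.orderEmbOfFin hm with hx
  have hxT : ∀ i, x i ∈ T := fun i => Finset.orderEmbOfFin_mem _ _ _
  have hxr : ∀ t ∈ T, ∃ i, x i = t := by
    intro t ht
    have : t ∈ Set.range x := by rw [hx, Finset.range_orderEmbOfFin]; exact ht
    exact this
  have hx0 : x 0 = 0 := by
    obtain ⟨i, hi⟩ := hxr 0 hT0
    apply le_antisymm
    · rw [← hi]; exact x.monotone (Fin.zero_le i)
    · exact (hTb _ (hxT 0)).1
  have hx1 : x (Fin.last m) = 1 := by
    obtain ⟨i, hi⟩ := hxr 1 hT1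
    apply le_antisymm
    · exact (hTb _ (hxT _)).2.1
    · rw [← hi]; exact x.monotone (Fin.le_last i)
  refine ⟨m, x, hx0, hx1, x.strictMono, fun i => (hTb _ (hxT i)).2.2, fun i => ?_⟩
  obtain ⟨k, c, hkc⟩ := h (x i.castSucc) (x i.succ) (x.strictMono Fin.castSucc_lt_succ) (by
    rintro s hs ⟨h1, h2⟩
    have b1 := (hTb _ (hxT i.castSucc)).1
    have b2 := (hTb _ (hxT i.succ)).2.1
    have hsT : s ∈ T := by
      rw [hT, Finset.mem_union, Finset.mem_filter]
      exact Or.inl ⟨hs, by linarith, by linarith⟩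
    obtain ⟨j, rfl⟩ := hxr s hsT
    have l1 := x.lt_iff_lt.1 h1
    have l2 := x.lt_iff_lt.1 h2
    rw [Fin.lt_def] at l1 l2
    simp at l1 l2
    omega)
  exact ⟨k, c, fun t ht => hkc t ht.1 ht.2⟩

/-- Slope `2^k` at both ends of the centered interval. -/
def Sl (k : ℤ) (f : W) : Prop :=
  ∃ ε, 0 < ε ∧ (∀ t, 0 ≤ t → t ≤ ε → f (-(1 / 2) + t) = -(1 / 2) + 2 ^ k * t) ∧
    ∀ t, 0 ≤ t → t ≤ ε → f (1 / 2 - t) = 1 / 2 - 2 ^ k * t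

theorem Sl_one : Sl 0 1 := ⟨1, one_pos, fun t _ _ => by simp [W_one], fun t _ _ => by simp [W_one]⟩

theorem Sl_mul {k l : ℤ} {f g : W} (hf : Sl k f) (hg : Sl l g) : Sl (k + l) (f * g) := by
  obtain ⟨ε, h0, h1, h2⟩ := hf
  obtain ⟨ε', h0', h1', h2'⟩ := hg
  have hp : (0 : ℝ) < 2 ^ l := by positivity
  refine ⟨min ε' (ε / 2 ^ l), lt_min h0' (by positivity), fun t ht ht' => ?_, fun t ht ht' => ?_⟩
  all_goals
    have a1 := le_trans ht' (min_le_left _ _)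
    have a2 := le_trans ht' (min_le_right _ _)
    rw [le_div_iff₀ hp] at a2
    rw [W_mul]
  · rw [h1' t ht a1, h1 _ (by positivity) (by linarith), zpow_add₀ (by norm_num)]; ring
  · rw [h2' t ht a1, h2 _ (by positivity) (by linarith), zpow_add₀ (by norm_num)]; ring

theorem Sl_inv {k : ℤ} {f : W} (hf : Sl k f) : Sl (-k) f⁻¹ := by
  obtain ⟨ε, h0, h1, h2⟩ := hf
  have hp : (0 : ℝ) < 2 ^ k := by positivity
  refine ⟨ε * 2 ^ k, by positivity, fun t ht ht' => ?_, fun t ht ht' => ?_⟩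
  all_goals
    apply W_inv_eq
    have a : (2 : ℝ) ^ (-k) * t ≤ ε := by
      rw [zpow_neg, ← div_eq_inv_mul, div_le_iff₀ hp]; exact ht'
    have b : (2 : ℝ) ^ k * (2 ^ (-k) * t) = t := by
      rw [← mul_assoc, ← zpow_add₀ (by norm_num)]; simp
  · rw [h1 _ (by positivity) a, b]
  · rw [h2 _ (by positivity) a, b]

theorem Sl_zpow {f : W} (hf : Sl 1 f) (k : ℤ) : Sl k (f ^ k) := by
  induction k using Int.induction_on with
  | zero => exact Sl_one
  | succ n ih => rw [zpow_add, zpow_one]; exact Sl_mul ih hf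
  | pred n ih => rw [zpow_sub, zpow_one]; exact Sl_mul ih (Sl_inv hf)

theorem FC_of_Sl {f : W} (hf : f ∈ Pc) (hK : f ∈ K (-(1 / 2)) (1 / 2)) (h : Sl 0 f) : f ∈ FC := by
  obtain ⟨ε, h0, h1, h2⟩ := h
  refine FC_of_K (a := -(1 / 2) + min ε (1 / 4)) (b := 1 / 2 - min ε (1 / 4)) hf ?_ ?_ ?_
  · linarith [lt_min h0 (by norm_num : (0 : ℝ) < 1 / 4)]
  · linarith [lt_min h0 (by norm_num : (0 : ℝ) < 1 / 4)]
  · have hm := min_le_left ε (1 / 4)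
    rintro x (hx | hx)
    · rcases le_total x (-(1 / 2)) with h | h
      · exact hK x (Or.inl h)
      · have := h1 (x + 1 / 2) (by linarith) (by linarith)
        have e : -(1 / 2) + (x + 1 / 2) = x := by ring
        rw [e] at this
        rw [this]; simp
    · rcases le_total (1 / 2) x with h | h
      · exact hK x (Or.inr h)
      · have := h2 (1 / 2 - x) (by linarith) (by linarith)
        rw [sub_sub_cancel] at this
        rw [this]; simp

theorem Sl_of_FC {f : W} (hf : f ∈ FC) : Sl 0 f := by
  obtain ⟨_, e, he, h⟩ := hf
  refine ⟨1 / 2 - e, by linarith, fun t ht ht' => ?_, fun t ht ht' => ?_⟩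
  · rw [h _ (Or.inl (by linarith))]; simp
  · rw [h _ (Or.inr (by linarith))]; simp

theorem InH_cent {ν : W} (h : InH ν) : tr (-(1 / 2)) ν ∈ Pc ∧ tr (-(1 / 2)) ν ∈ K (-(1 / 2)) (1 / 2) ∧
    ∃ k, Sl k (tr (-(1 / 2)) ν) := by
  obtain ⟨hF, k, ε, h0, h1, h2⟩ := h
  have e0 : ν 0 = 0 := by
    have := h1 0 ⟨le_rfl, h0.le⟩
    simpa using this
  have e1 : ν 1 = 1 := by
    have := h2 1 ⟨by linarith, le_rfl⟩
    simpa using this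
  have hK : ν ∈ K 0 1 := by
    rintro x (hx | hx)
    · rcases eq_or_lt_of_le hx with rfl | hx
      · exact e0
      · exact hF.1 x (fun h => by linarith [h.1])
    · rcases eq_or_lt_of_le hx with rfl | hx
      · exact e1
      · exact hF.1 x (fun h => by linarith [h.2])
  obtain ⟨S, hS⟩ := ThF_PL hF
  have hP : ν ∈ Pc := ⟨PL_TT _ S rfl _ hS ⟨0, fun x hx => hK x (Or.inl hx)⟩, 1, fun x hx => hK x (Or.inr hx)⟩
  refine ⟨Pc_tr (dy_neg (dy_half dy_one)) hP, ?_, k, ε, h0, fun t ht ht' => ?_, fun t ht ht' => ?_⟩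
  · have := K_tr (s := -(1 / 2)) hK
    norm_num at this
    norm_num
    exact this
  · rw [tr_apply]
    have e : -(1 / 2) + t - -(1 / 2) = t := by ring
    rw [e, h1 t ⟨ht, ht'⟩]; ring
  · rw [tr_apply]
    have e : 1 / 2 - t - -(1 / 2) = 1 - t := by ring
    rw [e, h2 (1 - t) ⟨by linarith, by linarith⟩]; ring

theorem InH_of_cent {f : W} (hP : f ∈ Pc) (hK : f ∈ K (-(1 / 2)) (1 / 2)) {k : ℤ} (h : Sl k f) :
    InH (tr (1 / 2) f) := by
  obtain ⟨ε, h0, h1, h2⟩ := h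
  refine ⟨PL_ThF (TT_PL (Pc_tr (dy_half dy_one) hP).1) ?_, k, ε, h0, fun t ht => ?_, fun t ht => ?_⟩
  · have := K_tr (s := 1 / 2) hK
    norm_num at this
    norm_num
    exact this
  · rw [tr_apply]
    have := h1 t ht.1 ht.2
    have e : t - 1 / 2 = -(1 / 2) + t := by ring
    rw [e, this]; ring
  · rw [tr_apply]
    have := h2 (1 - t) (by linarith [ht.2]) (by linarith [ht.1])
    have e : t - 1 / 2 = 1 / 2 - (1 - t) := by ring
    rw [e, this]; ring

/-- The element of `FC` with slope `2` around `0`. -/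
noncomputable def f0 : W := bump 0 (1 / 16) * rf 0 (bump 0 (1 / 16))
/-- The element of slope `2` at both ends. -/
noncomputable def n0 : W := tr (-(1 / 2)) (bump 0 (1 / 16)) * tr (1 / 2) (rf 0 (bump 0 (1 / 16)))

theorem dy16 : IsDyadic (1 / 16 : ℝ) := ⟨1, 4, by norm_num⟩

theorem g_Pc : bump 0 (1 / 16) ∈ Pc := bump_Pc dy_zero dy16 (by norm_num)
theorem g_K : bump 0 (1 / 16) ∈ K 0 (3 / 16) := by
  have := K_bump (p := 0) (d := 1 / 16) (by norm_num)
  norm_num at this ⊢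
  exact this
theorem g_K' : rf 0 (bump 0 (1 / 16)) ∈ K (-(3 / 16)) 0 := by
  have := K_rf (s := 0) g_K
  simpa using this

theorem f0_FC : f0 ∈ FC := by
  refine FC_of_K (a := -(3 / 16)) (b := 3 / 16) (mul_mem g_Pc (Pc_rf dy_zero g_Pc)) (by norm_num) (by norm_num)
    (mul_mem (K_mono (by norm_num) le_rfl g_K) (K_mono le_rfl (by norm_num) g_K'))

theorem n0_Pc : n0 ∈ Pc :=
  mul_mem (Pc_tr (dy_neg (dy_half dy_one)) g_Pc) (Pc_tr (dy_half dy_one) (Pc_rf dy_zero g_Pc))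

theorem n0_left {x : ℝ} (hx : x ≤ 1 / 4) : n0 x = bump 0 (1 / 16) (x + 1 / 2) - 1 / 2 := by
  rw [n0, W_mul, tr_apply (1 / 2), g_K' _ (Or.inl (by linarith)), tr_apply]
  ring_nf

theorem n0_right {x : ℝ} (hx : -(1 / 4) ≤ x) : n0 x = 1 / 2 - bump 0 (1 / 16) (1 / 2 - x) := by
  have h : tr (1 / 2) (rf 0 (bump 0 (1 / 16))) x = 1 / 2 - bump 0 (1 / 16) (1 / 2 - x) := by
    rw [tr_apply, rf_apply, zero_sub, zero_sub, neg_sub]; ring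
  rw [n0, W_mul, h, tr_apply]
  have hb : bump 0 (1 / 16) (1 / 2 - x) ≤ 3 / 4 := by
    have := (bump 0 (1 / 16)).monotone (show 1 / 2 - x ≤ 3 / 4 by linarith)
    rwa [g_K (3 / 4) (Or.inr (by norm_num))] at this
  rw [g_K _ (Or.inr (by linarith))]; ring

theorem n0_K : n0 ∈ K (-(1 / 2)) (1 / 2) := by
  rintro x (hx | hx)
  · rw [n0_left (by linarith), g_K _ (Or.inl (by linarith))]; ring
  · rw [n0_right (by linarith), g_K _ (Or.inl (by linarith))]; ring

theorem n0_Sl : Sl 1 n0 := by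
  refine ⟨1 / 16, by norm_num, fun t ht ht' => ?_, fun t ht ht' => ?_⟩
  · rw [n0_left (by linarith), bump_2 (by norm_num) (by linarith) (by linarith)]; simp; ring
  · rw [n0_right (by linarith), bump_2 (by norm_num) (by linarith) (by linarith)]; simp

theorem f0_right {x : ℝ} (hx : 0 ≤ x) : f0 x = bump 0 (1 / 16) x := by
  rw [f0, W_mul, g_K' _ (Or.inr hx)]

theorem f0_left {x : ℝ} (hx : x ≤ 0) : f0 x = - bump 0 (1 / 16) (-x) := by
  rw [f0, W_mul, rf_apply, zero_sub, zero_sub]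
  apply g_K
  left
  have := (bump 0 (1 / 16)).monotone (show 0 ≤ -x by linarith)
  rw [g_K 0 (Or.inl le_rfl)] at this
  linarith

end GR

namespace GR
open scoped commutatorElement

/-- `g` acts through the chart `φ` on `[a,b]` as `f`, which preserves `[a,b]`. -/
def SC (φ : ℝ → ℝ) (a b : ℝ) (g f : W) : Prop :=
  f a = a ∧ f b = b ∧ ∀ y, a ≤ y → y ≤ b → g (φ y) = φ (f y)

theorem SC_mul {φ : ℝ → ℝ} {a b : ℝ} {g f g' f' : W} (h : SC φ a b g f) (h' : SC φ a b g' f') :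
    SC φ a b (g * g') (f * f') := by
  obtain ⟨ha, hb, h⟩ := h
  obtain ⟨ha', hb', h'⟩ := h'
  refine ⟨by rw [W_mul, ha', ha], by rw [W_mul, hb', hb], fun y hy hy' => ?_⟩
  rw [W_mul, W_mul, h' y hy hy', h]
  · have := f'.monotone hy
    rwa [ha'] at this
  · have := f'.monotone hy'
    rwa [hb'] at this

theorem SC_inv {φ : ℝ → ℝ} {a b : ℝ} {g f : W} (h : SC φ a b g f) : SC φ a b g⁻¹ f⁻¹ := by
  obtain ⟨ha, hb, h⟩ := h
  have ha' := W_inv_eq f ha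
  have hb' := W_inv_eq f hb
  refine ⟨ha', hb', fun y hy hy' => ?_⟩
  apply W_inv_eq
  rw [h, W_self_inv]
  · have := (f⁻¹ : W).monotone hy
    rwa [ha'] at this
  · have := (f⁻¹ : W).monotone hy'
    rwa [hb'] at this

theorem SC_comm {φ : ℝ → ℝ} {a b : ℝ} {g f g' f' : W} (h : SC φ a b g f) (h' : SC φ a b g' f') :
    SC φ a b ⁅g, g'⁆ ⁅f, f'⁆ := by
  rw [commutatorElement_def, commutatorElement_def]
  exact SC_mul (SC_mul (SC_mul h h') (SC_inv h)) (SC_inv h')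

/-- The chart of cell `m`. -/
noncomputable def ph (σ : ℤ → ℤ) (m : ℤ) (y : ℝ) : ℝ := (m : ℝ) / 2 + (σ m : ℝ) * y

/-- `g` is the lift of `f` to the cells of parity `p` with index in `E`. -/
def IsLift (σ : ℤ → ℤ) (p : ℤ) (E : Set ℤ) (f g : W) : Prop :=
  ∀ m : ℤ, m % 2 = p → ∀ y : ℝ, -(1 / 2) ≤ y → y ≤ 1 / 2 →
    (m ∈ E → g (ph σ m y) = ph σ m (f y)) ∧ (m ∉ E → g (ph σ m y) = ph σ m y)

noncomputable abbrev Kh : Subgroup W := K (-(1 / 2)) (1 / 2)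

section
variable {σ : ℤ → ℤ} {p : ℤ} {E E' : Set ℤ} {f g f' g' : W}

theorem lift_SC (h : IsLift σ p E f g) (hf : f ∈ Kh) {m : ℤ} (hm : m % 2 = p) (hE : m ∈ E) :
    SC (ph σ m) (-(1 / 2)) (1 / 2) g f :=
  ⟨hf _ (Or.inl le_rfl), hf _ (Or.inr le_rfl), fun y hy hy' => (h m hm y hy hy').1 hE⟩

theorem lift_SC' (h : IsLift σ p E f g) {m : ℤ} (hm : m % 2 = p) (hE : m ∉ E) :
    SC (ph σ m) (-(1 / 2)) (1 / 2) g 1 :=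
  ⟨rfl, rfl, fun y hy hy' => (h m hm y hy hy').2 hE⟩

theorem lift_of_SC (h : ∀ m, m % 2 = p → m ∈ E → SC (ph σ m) (-(1 / 2)) (1 / 2) g f)
    (h' : ∀ m, m % 2 = p → m ∉ E → SC (ph σ m) (-(1 / 2)) (1 / 2) g 1) : IsLift σ p E f g :=
  fun m hm y hy hy' => ⟨fun hE => (h m hm hE).2.2 y hy hy', fun hE => (h' m hm hE).2.2 y hy hy'⟩

theorem lift_mul (h : IsLift σ p E f g) (h' : IsLift σ p E f' g') (hf : f ∈ Kh) (hf' : f' ∈ Kh) :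
    IsLift σ p E (f * f') (g * g') :=
  lift_of_SC (fun _ hm hE => SC_mul (lift_SC h hf hm hE) (lift_SC h' hf' hm hE))
    (fun _ hm hE => SC_mul (lift_SC' h hm hE) (lift_SC' h' hm hE))

theorem lift_inv (h : IsLift σ p E f g) (hf : f ∈ Kh) : IsLift σ p E f⁻¹ g⁻¹ :=
  lift_of_SC (fun _ hm hE => SC_inv (lift_SC h hf hm hE))
    (fun _ hm hE => by have := SC_inv (lift_SC' h hm hE); rwa [inv_one] at this)

theorem lift_one : IsLift σ p E 1 1 := fun _ _ _ _ _ => ⟨fun _ => rfl, fun _ => rfl⟩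

theorem lift_comm (h : IsLift σ p E f g) (h' : IsLift σ p E' f' g') (hf : f ∈ Kh) (hf' : f' ∈ Kh) :
    IsLift σ p (E ∩ E') ⁅f, f'⁆ ⁅g, g'⁆ := by
  refine lift_of_SC (fun m hm hE => SC_comm (lift_SC h hf hm hE.1) (lift_SC h' hf' hm hE.2))
    (fun m hm hE => ?_)
  by_cases h1 : m ∈ E
  · have h2 : m ∉ E' := fun h2 => hE ⟨h1, h2⟩
    have := SC_comm (lift_SC h hf hm h1) (lift_SC' h' hm h2)
    rwa [commutatorElement_one_right] at this
  · by_cases h2 : m ∈ E'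
    · have := SC_comm (lift_SC' h hm h1) (lift_SC h' hf' hm h2)
      rwa [commutatorElement_one_left] at this
    · have := SC_comm (lift_SC' h hm h1) (lift_SC' h' hm h2)
      rwa [commutatorElement_one_left] at this

theorem lift_conj (h : IsLift σ p Set.univ f g) (h' : IsLift σ p E f' g') (hf : f ∈ Kh) (hf' : f' ∈ Kh) :
    IsLift σ p E (f * f' * f⁻¹) (g * g' * g⁻¹) := by
  refine lift_of_SC (fun m hm hE => ?_) (fun m hm hE => ?_)
  · have := lift_SC h hf hm trivial
    exact SC_mul (SC_mul this (lift_SC h' hf' hm hE)) (SC_inv this)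
  · have h1 := lift_SC h hf hm trivial
    have := SC_mul (SC_mul h1 (lift_SC' h' hm hE)) (SC_inv h1)
    rwa [mul_one, mul_inv_cancel] at this

theorem lift_compl (h : IsLift σ p Set.univ f g) (h' : IsLift σ p E f g') (hf : f ∈ Kh) :
    IsLift σ p Eᶜ f (g * g'⁻¹) := by
  refine lift_of_SC (fun m hm hE => ?_) (fun m hm hE => ?_)
  · have := SC_mul (lift_SC h hf hm trivial) (SC_inv (lift_SC' h' hm hE))
    rwa [inv_one, mul_one] at this
  · have := SC_mul (lift_SC h hf hm trivial) (SC_inv (lift_SC h' hf hm (Set.notMem_compl_iff.1 hE)))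
    rwa [mul_inv_cancel] at this

theorem lift_disj (h : IsLift σ p E f g) (h' : IsLift σ p E' f g') (hf : f ∈ Kh) (hd : Disjoint E E') :
    IsLift σ p (E ∪ E') f (g * g') := by
  refine lift_of_SC (fun m hm hE => ?_) (fun m hm hE => ?_)
  · rcases hE with hE | hE
    · have := SC_mul (lift_SC h hf hm hE) (lift_SC' h' hm (Set.disjoint_left.1 hd hE))
      rwa [mul_one] at this
    · have := SC_mul (lift_SC' h hm (Set.disjoint_right.1 hd hE)) (lift_SC h' hf hm hE)
      rwa [one_mul] at this
  · have := SC_mul (lift_SC' h hm (fun h => hE (Or.inl h))) (lift_SC' h' hm (fun h => hE (Or.inr h)))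
    rwa [mul_one] at this

theorem lift_congr (h : IsLift σ p E f g) (hE : ∀ m, m % 2 = p → (m ∈ E ↔ m ∈ E')) : IsLift σ p E' f g :=
  fun m hm y hy hy' => by rw [← hE m hm]; exact h m hm y hy hy'

theorem cover (hσ : ∀ m, σ m = 1 ∨ σ m = -1) (hp : p = 0 ∨ p = 1) (x : ℝ) :
    ∃ m : ℤ, ∃ y : ℝ, m % 2 = p ∧ -(1 / 2) ≤ y ∧ y ≤ 1 / 2 ∧ x = ph σ m y := by
  set n := ⌊x + 1 / 2 - p / 2⌋ with hn
  have h1 : (n : ℝ) ≤ x + 1 / 2 - p / 2 := Int.floor_le _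
  have h2 : x + 1 / 2 - p / 2 < n + 1 := Int.lt_floor_add_one _
  refine ⟨2 * n + p, (σ (2 * n + p) : ℝ) * (x - n - p / 2), by omega, ?_⟩
  rcases hσ (2 * n + p) with h | h
  · rw [ph, h]; push_cast
    exact ⟨by linarith, by linarith, by ring⟩
  · rw [ph, h]; push_cast
    exact ⟨by linarith, by linarith, by ring⟩

theorem lift_unique (hσ : ∀ m, σ m = 1 ∨ σ m = -1) (hp : p = 0 ∨ p = 1) (h : IsLift σ p E f g)
    (h' : IsLift σ p E f g') : g = g' := by
  ext x
  obtain ⟨m, y, hm, hy, hy', rfl⟩ := cover hσ hp x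
  by_cases hE : m ∈ E
  · rw [(h m hm y hy hy').1 hE, (h' m hm y hy hy').1 hE]
  · rw [(h m hm y hy hy').2 hE, (h' m hm y hy hy').2 hE]

theorem lift_neg (h : IsLift σ p E f g) : IsLift (fun m => -σ m) p E (rf 0 f) g := by
  have e : ∀ m y, ph (fun m => -σ m) m y = ph σ m (-y) := by
    intro m y; simp only [ph]; push_cast; ring
  intro m hm y hy hy'
  rw [e, e, rf_apply, zero_sub, zero_sub, neg_neg]
  exact h m hm (-y) (by linarith) (by linarith)

/-- The action of an opposite parity lift on the right half of a cell. -/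
theorem half_right (hσ : ∀ m, σ m = 1 ∨ σ m = -1) (hp : p = 0 ∨ p = 1)
    (h : IsLift σ (1 - p) E f g) (hf : f ∈ Kh) (hf0 : f 0 = 0) {m : ℤ} (hm : m % 2 = p) :
    (m + σ m ∈ E → σ (m + σ m) = σ m → SC (ph σ m) 0 (1 / 2) g (tr (1 / 2) f)) ∧
    (m + σ m ∈ E → σ (m + σ m) = -σ m → SC (ph σ m) 0 (1 / 2) g (rf (1 / 2) f)) ∧
    (m + σ m ∉ E → SC (ph σ m) 0 (1 / 2) g 1) := by
  have hk : (m + σ m) % 2 = 1 - p := by rcases hσ m with h | h <;> rw [h] <;> omega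
  have e1 : σ (m + σ m) = σ m → ∀ y, ph σ m y = ph σ (m + σ m) (y - 1 / 2) := by
    intro h y
    rw [ph, ph, h]; push_cast; ring
  have e2 : σ (m + σ m) = -σ m → ∀ y, ph σ m y = ph σ (m + σ m) (1 / 2 - y) := by
    intro h y
    rw [ph, ph, h]; push_cast; ring
  have hfm := hf _ (Or.inl le_rfl)
  have hfp := hf _ (Or.inr le_rfl)
  refine ⟨fun hE hs => ⟨?_, ?_, fun y hy hy' => ?_⟩, fun hE hs => ⟨?_, ?_, fun y hy hy' => ?_⟩,
    fun hE => ⟨rfl, rfl, fun y hy hy' => ?_⟩⟩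
  · rw [tr_apply, zero_sub, hfm]; ring
  · rw [tr_apply, sub_self, hf0]; ring
  · rw [e1 hs, e1 hs, tr_apply, add_sub_cancel_right]
    exact (h _ hk _ (by linarith) (by linarith)).1 hE
  · rw [rf_apply, sub_zero, hfp]; ring
  · rw [rf_apply, sub_self, hf0]; ring
  · rw [e2 hs, e2 hs, rf_apply, sub_sub_cancel]
    exact (h _ hk _ (by linarith) (by linarith)).1 hE
  · rw [W_one]
    have : σ (m + σ m) = σ m ∨ σ (m + σ m) = -σ m := by
      rcases hσ m with h | h <;> rcases hσ (m + σ m) with h' | h' <;> omega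
    rcases this with hs | hs
    · rw [e1 hs]; exact (h _ hk _ (by linarith) (by linarith)).2 hE
    · rw [e2 hs]; exact (h _ hk _ (by linarith) (by linarith)).2 hE

theorem half_left (hσ : ∀ m, σ m = 1 ∨ σ m = -1) (hp : p = 0 ∨ p = 1)
    (h : IsLift σ (1 - p) E f g) (hf : f ∈ Kh) (hf0 : f 0 = 0) {m : ℤ} (hm : m % 2 = p) :
    ∃ b, SC (ph σ m) (-(1 / 2)) 0 g b := by
  have hk : (m - σ m) % 2 = 1 - p := by rcases hσ m with h | h <;> rw [h] <;> omega
  have e1 : σ (m - σ m) = σ m → ∀ y, ph σ m y = ph σ (m - σ m) (y + 1 / 2) := by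
    intro h y
    rw [ph, ph, h]; push_cast; ring
  have e2 : σ (m - σ m) = -σ m → ∀ y, ph σ m y = ph σ (m - σ m) (-(1 / 2) - y) := by
    intro h y
    rw [ph, ph, h]; push_cast; ring
  have hfm := hf _ (Or.inl le_rfl)
  have hfp := hf _ (Or.inr le_rfl)
  have hss : σ (m - σ m) = σ m ∨ σ (m - σ m) = -σ m := by
    rcases hσ m with h | h <;> rcases hσ (m - σ m) with h' | h' <;> omega
  by_cases hE : m - σ m ∈ E
  · rcases hss with hs | hs
    · refine ⟨tr (-(1 / 2)) f, ?_, ?_, fun y hy hy' => ?_⟩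
      · rw [tr_apply, sub_self, hf0]; ring
      · rw [tr_apply, zero_sub, neg_neg, hfp]; ring
      · rw [e1 hs, e1 hs, tr_apply, sub_neg_eq_add, neg_add_cancel_right]
        exact (h _ hk _ (by linarith) (by linarith)).1 hE
    · refine ⟨rf (-(1 / 2)) f, ?_, ?_, fun y hy hy' => ?_⟩
      · rw [rf_apply, sub_self, hf0]; ring
      · rw [rf_apply, sub_zero, hfm]; ring
      · rw [e2 hs, e2 hs, rf_apply, sub_sub_cancel]
        exact (h _ hk _ (by linarith) (by linarith)).1 hE
  · refine ⟨1, rfl, rfl, fun y hy hy' => ?_⟩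
    rw [W_one]
    rcases hss with hs | hs
    · rw [e1 hs]; exact (h _ hk _ (by linarith) (by linarith)).2 hE
    · rw [e2 hs]; exact (h _ hk _ (by linarith) (by linarith)).2 hE

theorem comm_one_of_disj {a b : W} {c : ℝ} {u v : ℝ} (ha : a ∈ K u c) (hb : b ∈ K c v) : ⁅a, b⁆ = 1 := by
  rw [commutatorElement_eq_one_iff_mul_comm]
  apply disj_comm
  intro x
  rcases le_total x c with h | h
  · exact Or.inr (hb x (Or.inl h))
  · exact Or.inl (ha x (Or.inr h))

/-- General crossing computation. -/
theorem cross_aux (hσ : ∀ m, σ m = 1 ∨ σ m = -1) (hp : p = 0 ∨ p = 1)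
    (h : IsLift σ p Set.univ f g) (h' : IsLift σ (1 - p) E f' g') (hf : f ∈ K 0 (1 / 2)) (hf' : f' ∈ Kh)
    (hf0 : f' 0 = 0) (F : Set ℤ) (b : W) (hb : b ∈ K 0 (1 / 2))
    (hF : ∀ m, m % 2 = p → m ∈ F → ∃ b', ⁅f, b'⁆ = ⁅f, b⁆ ∧ SC (ph σ m) 0 (1 / 2) g' b')
    (hF' : ∀ m, m % 2 = p → m ∉ F → ∃ b', ⁅f, b'⁆ = 1 ∧ SC (ph σ m) 0 (1 / 2) g' b') :
    IsLift σ p F ⁅f, b⁆ ⁅g, g'⁆ := by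
  have hfc : ⁅f, b⁆ ∈ K 0 (1 / 2) := by
    rw [commutatorElement_def]
    exact mul_mem (mul_mem (mul_mem hf hb) (inv_mem hf)) (inv_mem hb)
  intro m hm y hy hy'
  rcases le_total y 0 with h0 | h0
  · obtain ⟨b', hb'⟩ := half_left hσ hp h' hf' hf0 hm
    have h1 : SC (ph σ m) (-(1 / 2)) 0 g 1 := by
      refine ⟨rfl, rfl, fun y hy hy' => ?_⟩
      rw [(h m hm y hy (by linarith)).1 trivial, hf y (Or.inl hy')]; rfl
    have h2 := (SC_comm h1 hb').2.2 y hy h0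
    rw [commutatorElement_one_left, W_one] at h2
    rw [h2, hfc y (Or.inl h0)]
    exact ⟨fun _ => rfl, fun _ => rfl⟩
  · have h1 : SC (ph σ m) 0 (1 / 2) g f :=
      ⟨hf _ (Or.inl le_rfl), hf _ (Or.inr le_rfl), fun y hy hy' => (h m hm y (by linarith) hy').1 trivial⟩
    constructor
    · intro hE
      obtain ⟨b', e, hb'⟩ := hF m hm hE
      rw [(SC_comm h1 hb').2.2 y h0 hy', e]
    · intro hE
      obtain ⟨b', e, hb'⟩ := hF' m hm hE
      rw [(SC_comm h1 hb').2.2 y h0 hy', e]; rfl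

theorem cross_same (hσ : ∀ m, σ m = 1 ∨ σ m = -1) (hp : p = 0 ∨ p = 1)
    (h : IsLift σ p Set.univ f g) (h' : IsLift σ (1 - p) E f' g') (hf : f ∈ K 0 (1 / 2))
    (hf' : f' ∈ K (-(1 / 2)) 0) :
    IsLift σ p {m | m + σ m ∈ E ∧ σ (m + σ m) = σ m} ⁅f, tr (1 / 2) f'⁆ ⁅g, g'⁆ := by
  have hK' : f' ∈ Kh := K_mono le_rfl (by norm_num) hf'
  have h0 := hf' 0 (Or.inr le_rfl)
  refine cross_aux hσ hp h h' hf hK' h0 _ _ ?_ ?_ ?_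
  · have := K_tr (s := 1 / 2) hf'
    simpa using this
  · intro m hm hF
    exact ⟨_, rfl, (half_right hσ hp h' hK' h0 hm).1 hF.1 hF.2⟩
  · intro m hm hF
    by_cases hE : m + σ m ∈ E
    · have : σ (m + σ m) = -σ m := by
        have : σ (m + σ m) ≠ σ m := fun h => hF ⟨hE, h⟩
        rcases hσ m with h | h <;> rcases hσ (m + σ m) with h' | h' <;> omega
      refine ⟨_, ?_, (half_right hσ hp h' hK' h0 hm).2.1 hE this⟩
      have := K_rf (s := 1 / 2) hf'
      rw [sub_zero] at this
      exact comm_one_of_disj hf this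
    · exact ⟨1, commutatorElement_one_right _, (half_right hσ hp h' hK' h0 hm).2.2 hE⟩

theorem cross_opp (hσ : ∀ m, σ m = 1 ∨ σ m = -1) (hp : p = 0 ∨ p = 1)
    (h : IsLift σ p Set.univ f g) (h' : IsLift σ (1 - p) E f' g') (hf : f ∈ K 0 (1 / 2))
    (hf' : f' ∈ K 0 (1 / 2)) :
    IsLift σ p {m | m + σ m ∈ E ∧ σ (m + σ m) = -σ m} ⁅f, rf (1 / 2) f'⁆ ⁅g, g'⁆ := by
  have hK' : f' ∈ Kh := K_mono (by norm_num) le_rfl hf'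
  have h0 := hf' 0 (Or.inl le_rfl)
  refine cross_aux hσ hp h h' hf hK' h0 _ _ ?_ ?_ ?_
  · have := K_rf (s := 1 / 2) hf'
    simpa using this
  · intro m hm hF
    exact ⟨_, rfl, (half_right hσ hp h' hK' h0 hm).2.1 hF.1 hF.2⟩
  · intro m hm hF
    by_cases hE : m + σ m ∈ E
    · have : σ (m + σ m) = σ m := by
        have : σ (m + σ m) ≠ -σ m := fun h => hF ⟨hE, h⟩
        rcases hσ m with h | h <;> rcases hσ (m + σ m) with h' | h' <;> omega
      refine ⟨_, ?_, (half_right hσ hp h' hK' h0 hm).1 hE this⟩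
      have := K_tr (s := 1 / 2) hf'
      rw [zero_add] at this
      exact comm_one_of_disj hf this
    · exact ⟨1, commutatorElement_one_right _, (half_right hσ hp h' hK' h0 hm).2.2 hE⟩

/-- The lift of `f0` in one parity is the lift of `n0` in the other. -/
theorem lift_n0 (hσ : ∀ m, σ m = 1 ∨ σ m = -1) (hp : p = 0 ∨ p = 1)
    (h : IsLift σ (1 - p) Set.univ f0 g) : IsLift σ p Set.univ n0 g := by
  intro m hm y hy hy'
  refine ⟨fun _ => ?_, fun h => absurd trivial h⟩
  rcases le_total y 0 with h0 | h0
  · have hk : (m - σ m) % 2 = 1 - p := by rcases hσ m with h | h <;> rw [h] <;> omega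
    rw [n0_left (by linarith)]
    have hss : σ (m - σ m) = σ m ∨ σ (m - σ m) = -σ m := by
      rcases hσ m with h | h <;> rcases hσ (m - σ m) with h' | h' <;> omega
    rcases hss with hs | hs
    · have := (h _ hk (y + 1 / 2) (by linarith) (by linarith)).1 trivial
      rw [f0_right (by linarith)] at this
      convert this using 1
      · congr 1; rw [ph, ph, hs]; push_cast; ring
      · rw [ph, ph, hs]; push_cast; ring
    · have := (h _ hk (-(y + 1 / 2)) (by linarith) (by linarith)).1 trivial
      rw [f0_left (by linarith), neg_neg] at this
      convert this using 1
      · congr 1; rw [ph, ph, hs]; push_cast; ring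
      · rw [ph, ph, hs]; push_cast; ring
  · have hk : (m + σ m) % 2 = 1 - p := by rcases hσ m with h | h <;> rw [h] <;> omega
    rw [n0_right (by linarith)]
    have hss : σ (m + σ m) = σ m ∨ σ (m + σ m) = -σ m := by
      rcases hσ m with h | h <;> rcases hσ (m + σ m) with h' | h' <;> omega
    rcases hss with hs | hs
    · have := (h _ hk (-(1 / 2 - y)) (by linarith) (by linarith)).1 trivial
      rw [f0_left (by linarith), neg_neg] at this
      convert this using 1
      · congr 1; rw [ph, ph, hs]; push_cast; ring
      · rw [ph, ph, hs]; push_cast; ring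
    · have := (h _ hk (1 / 2 - y) (by linarith) (by linarith)).1 trivial
      rw [f0_right (by linarith)] at this
      convert this using 1
      · congr 1; rw [ph, ph, hs]; push_cast; ring
      · rw [ph, ph, hs]; push_cast; ring

end

end GR

namespace GR
open scoped commutatorElement

def Good (σ : ℤ → ℤ) (N : Subgroup W) (p : ℤ) (E : Set ℤ) : Prop :=
  ∀ f ∈ FC, ∃ g ∈ N, IsLift σ p E f g

/-- Standing assumptions. -/
structure Ctx (σ : ℤ → ℤ) (G N : Subgroup W) : Prop where
  hσ : ∀ m, σ m = 1 ∨ σ m = -1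
  hU : ∀ p, p = 0 ∨ p = 1 → Good σ G p Set.univ
  le : N ≤ G
  hN : ∀ g ∈ G, ∀ n ∈ N, g * n * g⁻¹ ∈ N

section
variable {σ : ℤ → ℤ} {G N : Subgroup W} {p : ℤ} {E E' : Set ℤ}

theorem Ctx.self (c : Ctx σ G N) : Ctx σ G G :=
  ⟨c.hσ, c.hU, le_rfl, fun g hg n hn => mul_mem (mul_mem hg hn) (inv_mem hg)⟩

theorem Good.neg (h : Good σ N p E) : Good (fun m => -σ m) N p E := by
  intro f hf
  obtain ⟨g, hg, hl⟩ := h _ (FC_rf hf)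
  have := lift_neg hl
  rw [rf_rf] at this
  exact ⟨g, hg, this⟩

theorem Good.of_neg (h : Good (fun m => -σ m) N p E) : Good σ N p E := by
  have := h.neg
  simpa using this

theorem Ctx.neg (c : Ctx σ G N) : Ctx (fun m => -σ m) G N :=
  ⟨fun m => by rcases c.hσ m with h | h <;> simp [h], fun p hp => (c.hU p hp).neg, c.le, c.hN⟩

theorem Good.mono (h : Good σ N p E) (hle : N ≤ G) : Good σ G p E := by
  intro f hf
  obtain ⟨g, hg, hl⟩ := h f hf
  exact ⟨g, hle hg, hl⟩

theorem Good.congr (h : Good σ N p E) (hE : ∀ m, m % 2 = p → (m ∈ E ↔ m ∈ E')) : Good σ N p E' := by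
  intro f hf
  obtain ⟨g, hg, hl⟩ := h f hf
  exact ⟨g, hg, lift_congr hl hE⟩

theorem comm_right (c : Ctx σ G N) {g n : W} (hg : g ∈ G) (hn : n ∈ N) : ⁅g, n⁆ ∈ N := by
  rw [commutatorElement_def]
  exact mul_mem (c.hN g hg n hn) (inv_mem hn)

theorem comm_left (c : Ctx σ G N) {g n : W} (hg : g ∈ G) (hn : n ∈ N) : ⁅n, g⁆ ∈ N := by
  have := inv_mem (comm_right c hg hn)
  rwa [commutatorElement_inv] at this

theorem crit (c : Ctx σ G N) (hp : p = 0 ∨ p = 1) {u v : ℝ} (hu : -(1 / 2) < u) (huv : u < v)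
    (hv : v < 1 / 2) (h : ∀ f₁ ∈ FC, ∀ f₂ ∈ FC, f₁ ∈ K u v → f₂ ∈ K u v →
      ∃ g ∈ N, IsLift σ p E ⁅f₁, f₂⁆ g) : Good σ N p E := by
  intro f hf
  have hf' := FC_perfect hf
  rw [Subgroup.commutator_def] at hf'
  suffices f ∈ Kh ∧ ∃ g ∈ N, IsLift σ p E f g from this.2
  induction hf' using Subgroup.closure_induction with
  | mem x hx =>
    obtain ⟨a, ha, b, hb, rfl⟩ := hx
    have haK := FC_K ha
    have hbK := FC_K hb
    refine ⟨FC_K hf, ?_⟩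
    obtain ⟨haP, e, he, hae⟩ := id ha
    obtain ⟨hbP, e', he', hbe⟩ := id hb
    obtain ⟨γ, hγ, h1, h2⟩ := contraction (e := max 0 (max e e')) (u := u) (v := v) (le_max_left _ _)
      (max_lt (by norm_num) (max_lt he he')) hu huv hv
    have l1 : e ≤ max 0 (max e e') := le_trans (le_max_left _ _) (le_max_right _ _)
    have l2 : e' ≤ max 0 (max e e') := le_trans (le_max_right _ _) (le_max_right _ _)
    have hγa := K_mono h1 h2 (K_conj (K_mono (neg_le_neg l1) l1 hae) γ)
    have hγb := K_mono h1 h2 (K_conj (K_mono (neg_le_neg l2) l2 hbe) γ)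
    have hFa : γ * a * γ⁻¹ ∈ FC := mul_mem (mul_mem hγ ha) (inv_mem hγ)
    have hFb : γ * b * γ⁻¹ ∈ FC := mul_mem (mul_mem hγ hb) (inv_mem hγ)
    obtain ⟨n, hn, hl⟩ := h _ hFa _ hFb hγa hγb
    obtain ⟨g, hg, hgl⟩ := c.hU p hp γ⁻¹ (inv_mem hγ)
    refine ⟨g * n * g⁻¹, c.hN g hg n hn, ?_⟩
    have := lift_conj hgl hl (inv_mem (FC_K hγ)) (by
      rw [commutatorElement_def]
      have ha' := FC_K hFa
      have hb' := FC_K hFb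
      exact mul_mem (mul_mem (mul_mem ha' hb') (inv_mem ha')) (inv_mem hb'))
    convert this using 1
    simp only [commutatorElement_def]
    group
  | one => exact ⟨one_mem _, 1, one_mem _, lift_one⟩
  | mul x y hx hy ih ih' =>
    have hcl : Subgroup.closure {g | ∃ g₁ ∈ FC, ∃ g₂ ∈ FC, ⁅g₁, g₂⁆ = g} ≤ FC := by
      rw [← Subgroup.commutator_def]
      exact Subgroup.commutator_le_self FC
    obtain ⟨h1, g, hg, hl⟩ := ih (hcl hx)
    obtain ⟨h1', g', hg', hl'⟩ := ih' (hcl hy)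
    exact ⟨mul_mem h1 h1', g * g', mul_mem hg hg', lift_mul hl hl' h1 h1'⟩
  | inv x hx ih =>
    obtain ⟨h1, g, hg, hl⟩ := ih (by simpa using inv_mem hf)
    exact ⟨inv_mem h1, g⁻¹, inv_mem hg, lift_inv hl h1⟩

theorem good_inter (c : Ctx σ G N) (hp : p = 0 ∨ p = 1) (h : Good σ N p E) (h' : Good σ G p E') :
    Good σ N p (E ∩ E') := by
  refine crit c hp (u := 0) (v := 1 / 4) (by norm_num) (by norm_num) (by norm_num) ?_
  intro f₁ h1 f₂ h2 _ _
  obtain ⟨g, hg, hl⟩ := h f₁ h1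
  obtain ⟨g', hg', hl'⟩ := h' f₂ h2
  exact ⟨⁅g, g'⁆, comm_left c hg' hg, lift_comm hl hl' (FC_K h1) (FC_K h2)⟩

theorem good_compl (c : Ctx σ G N) (hp : p = 0 ∨ p = 1) (h : Good σ G p E) : Good σ G p Eᶜ := by
  intro f hf
  obtain ⟨g, hg, hl⟩ := h f hf
  obtain ⟨g', hg', hl'⟩ := c.hU p hp f hf
  exact ⟨_, mul_mem hg' (inv_mem hg), lift_compl hl' hl (FC_K hf)⟩

theorem good_disj (h : Good σ N p E) (h' : Good σ N p E') (hd : Disjoint E E') : Good σ N p (E ∪ E') := by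
  intro f hf
  obtain ⟨g, hg, hl⟩ := h f hf
  obtain ⟨g', hg', hl'⟩ := h' f hf
  exact ⟨_, mul_mem hg hg', lift_disj hl hl' (FC_K hf) hd⟩

theorem good_union (c : Ctx σ G N) (hp : p = 0 ∨ p = 1) (h : Good σ N p E) (h' : Good σ N p E') :
    Good σ N p (E ∪ E') := by
  have h1 := good_inter c hp h' (good_compl c hp (h.mono c.le))
  have h2 := good_disj h h1 (by
    rw [Set.disjoint_left]; exact fun x hx hx' => hx'.2 hx)
  refine h2.congr fun m _ => ?_
  by_cases hm : m ∈ E <;> simp [hm]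

theorem other (hp : p = 0 ∨ p = 1) : (1 - p = 0 ∨ 1 - p = 1) := by omega

theorem good_s_same (c : Ctx σ G N) (hp : p = 0 ∨ p = 1) (h : Good σ N (1 - p) E) :
    Good σ N p {m | m + σ m ∈ E ∧ σ (m + σ m) = σ m} := by
  refine crit c hp (u := 1 / 8) (v := 3 / 8) (by norm_num) (by norm_num) (by norm_num) ?_
  intro f₁ h1 f₂ h2 hK1 hK2
  have hK2' := K_tr (s := -(1 / 2)) hK2
  obtain ⟨g, hg, hl⟩ := c.hU p hp f₁ h1
  obtain ⟨g', hg', hl'⟩ := h (tr (-(1 / 2)) f₂)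
    (FC_of_K (Pc_tr (dy_neg (dy_half dy_one)) h2.1) (by norm_num) (by norm_num) hK2')
  have := cross_same c.hσ hp hl hl' (K_mono (by norm_num) (by norm_num) hK1)
    (K_mono (by norm_num) (by norm_num) hK2')
  rw [tr_neg'] at this
  exact ⟨_, comm_right c hg hg', this⟩

theorem good_s_opp (c : Ctx σ G N) (hp : p = 0 ∨ p = 1) (h : Good σ N (1 - p) E) :
    Good σ N p {m | m + σ m ∈ E ∧ σ (m + σ m) = -σ m} := by
  refine crit c hp (u := 1 / 8) (v := 3 / 8) (by norm_num) (by norm_num) (by norm_num) ?_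
  intro f₁ h1 f₂ h2 hK1 hK2
  have hK2' := K_rf (s := 1 / 2) hK2
  obtain ⟨g, hg, hl⟩ := c.hU p hp f₁ h1
  obtain ⟨g', hg', hl'⟩ := h (rf (1 / 2) f₂)
    (FC_of_K (Pc_rf (dy_half dy_one) h2.1) (by norm_num) (by norm_num) hK2')
  have := cross_opp c.hσ hp hl hl' (K_mono (by norm_num) (by norm_num) hK1)
    (K_mono (by norm_num) (by norm_num) hK2')
  rw [rf_rf] at this
  exact ⟨_, comm_right c hg hg', this⟩

theorem good_s (c : Ctx σ G N) (hp : p = 0 ∨ p = 1) (h : Good σ N (1 - p) E) :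
    Good σ N p {m | m + σ m ∈ E} := by
  refine (good_union c hp (good_s_same c hp h) (good_s_opp c hp h)).congr fun m _ => ?_
  have : σ (m + σ m) = σ m ∨ σ (m + σ m) = -σ m := by
    rcases c.hσ m with h | h <;> rcases c.hσ (m + σ m) with h' | h' <;> omega
  simp only [Set.mem_union, Set.mem_setOf_eq]
  tauto

theorem good_t (c : Ctx σ G N) (hp : p = 0 ∨ p = 1) (h : Good σ N (1 - p) E) :
    Good σ N p {m | m - σ m ∈ E} :=
  Good.of_neg (good_s c.neg hp h.neg)

/-- Sets of cells seeing the same orientation at relative position `i`. -/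
def D (σ : ℤ → ℤ) (i : ℤ) : Set ℤ := {m | σ m = σ (m + σ m * i)}

theorem D_neg (i : ℤ) : D (fun m => -σ m) i = D σ (-i) := by
  ext m
  simp [D]

theorem D_step (c : Ctx σ G G) (n : ℤ) (h : ∀ p, p = 0 ∨ p = 1 → Good σ G p (D σ n))
    (h' : ∀ p, p = 0 ∨ p = 1 → Good σ G p (D σ (-n))) :
    ∀ p, p = 0 ∨ p = 1 → Good σ G p (D σ (n + 1)) := by
  intro p hp
  have h1 := good_s_same c hp (h _ (other hp))
  have h2 := good_s_opp c hp (good_compl c (other hp) (h' _ (other hp)))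
  refine (good_union c hp h1 h2).congr fun m _ => ?_
  simp only [D, Set.mem_union, Set.mem_setOf_eq, Set.mem_compl_iff]
  rcases c.hσ m with hm | hm <;> rcases c.hσ (m + σ m) with hk | hk
  all_goals
    rw [hm] at hk
    simp only [hm, hk]
  · have : m + 1 + 1 * n = m + 1 * (n + 1) := by ring
    rw [this]; simp
  · have : m + 1 + -1 * -n = m + 1 * (n + 1) := by ring
    rw [this]
    rcases c.hσ (m + 1 * (n + 1)) with h | h <;> rw [h] <;> simp
  · have : m + -1 + 1 * -n = m + -1 * (n + 1) := by ring
    rw [this]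
    rcases c.hσ (m + -1 * (n + 1)) with h | h <;> rw [h] <;> simp
  · have : m + -1 + -1 * n = m + -1 * (n + 1) := by ring
    rw [this]; simp

theorem D_good (c : Ctx σ G N) (n : ℕ) : (∀ p, p = 0 ∨ p = 1 → Good σ G p (D σ n)) ∧
    (∀ p, p = 0 ∨ p = 1 → Good σ G p (D σ (-n))) := by
  induction n with
  | zero =>
    have : D σ 0 = Set.univ := by ext m; simp [D]
    simp only [Nat.cast_zero, neg_zero, this]
    exact ⟨c.hU, c.hU⟩
  | succ n ih =>
    constructor
    · have := D_step c.self n ih.1 ih.2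
      simpa using this
    · have := D_step c.self.neg n (fun p hp => by rw [D_neg]; exact (ih.2 p hp).neg)
        (fun p hp => by rw [D_neg, neg_neg]; exact (ih.1 p hp).neg)
      intro p hp
      have := this p hp
      rw [D_neg] at this
      have := this.of_neg
      simpa using this

/-- Two cells see the same pattern up to radius `r`. -/
def Same (σ : ℤ → ℤ) (r : ℕ) (m m' : ℤ) : Prop := ∀ i : ℤ, |i| ≤ r → (m ∈ D σ i ↔ m' ∈ D σ i)

theorem class_good (c : Ctx σ G N) (hp : p = 0 ∨ p = 1) (r : ℕ) (m₀ : ℤ) :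
    Good σ G p {m | Same σ r m m₀} := by
  have hone : ∀ i : ℤ, Good σ G p (D σ i) → Good σ G p {m | m ∈ D σ i ↔ m₀ ∈ D σ i} := by
    intro i hi
    by_cases h : m₀ ∈ D σ i
    · simpa [h] using hi
    · have := good_compl c hp hi
      refine this.congr fun m _ => ?_
      simp [h]
  induction r with
  | zero =>
    refine (c.hU p hp).congr fun m _ => ?_
    simp only [Set.mem_univ, Set.mem_setOf_eq, true_iff]
    intro i hi
    have : i = 0 := by simpa using hi
    subst this
    simp [D]
  | succ r ih =>
    have h1 := hone _ ((D_good c (r + 1)).1 p hp)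
    have h2 := hone _ ((D_good c (r + 1)).2 p hp)
    refine (good_inter c.self hp (good_inter c.self hp ih h1) h2).congr fun m _ => ?_
    simp only [Set.mem_inter_iff, Set.mem_setOf_eq]
    constructor
    · rintro ⟨⟨a, b⟩, d⟩ i hi
      by_cases h : |i| ≤ r
      · exact a i h
      · rcases abs_cases i with ⟨h', _⟩ | ⟨h', _⟩
        · have : i = ((r + 1 : ℕ) : ℤ) := by push_cast at hi ⊢; omega
          rw [this]; exact b
        · have : i = -((r + 1 : ℕ) : ℤ) := by push_cast at hi ⊢; omega
          rw [this]; exact d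
    · intro h
      refine ⟨⟨fun i hi => h i (by push_cast; omega), h _ ?_⟩, h _ ?_⟩
      · rw [abs_of_nonneg (by positivity)]
      · rw [abs_neg, abs_of_nonneg (by positivity)]

/-- Growth step. -/
theorem grow (c : Ctx σ G N) {B : Set ℤ} (h : ∀ p, p = 0 ∨ p = 1 → Good σ N p B) :
    ∀ p, p = 0 ∨ p = 1 → Good σ N p {m | m ∈ B ∨ m + 1 ∈ B ∨ m - 1 ∈ B} := by
  intro p hp
  refine (good_union c hp (h p hp) (good_union c hp (good_s c hp (h _ (other hp)))
    (good_t c hp (h _ (other hp))))).congr fun m _ => ?_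
  simp only [Set.mem_union, Set.mem_setOf_eq]
  rcases c.hσ m with hm | hm <;> rw [hm]
  have : m - -1 = m + 1 := by ring
  rw [this]
  have : m + -1 = m - 1 := by ring
  rw [this]; tauto

theorem grow_n (c : Ctx σ G N) {B : Set ℤ} (h : ∀ p, p = 0 ∨ p = 1 → Good σ N p B) (n : ℕ) :
    ∀ p, p = 0 ∨ p = 1 → Good σ N p {m | ∃ b ∈ B, |m - b| ≤ n} := by
  induction n with
  | zero =>
    intro p hp
    refine (h p hp).congr fun m _ => ?_
    constructor
    · intro hm; exact ⟨m, hm, by simp⟩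
    · rintro ⟨b, hb, h⟩
      have : m = b := by
        have : m - b = 0 := by simpa using h
        omega
      rwa [this]
  | succ n ih =>
    intro p hp
    refine (grow c ih p hp).congr fun m _ => ?_
    simp only [Set.mem_setOf_eq]
    constructor
    · rintro (⟨b, hb, h⟩ | ⟨b, hb, h⟩ | ⟨b, hb, h⟩) <;> refine ⟨b, hb, ?_⟩ <;> push_cast <;>
        rw [abs_le] at h ⊢ <;> omega
    · rintro ⟨b, hb, h⟩
      push_cast at h
      rw [abs_le] at h
      rcases lt_trichotomy m b with h' | h' | h'
      · exact Or.inr (Or.inl ⟨b, hb, by rw [abs_le]; omega⟩)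
      · exact Or.inl ⟨b, hb, by rw [abs_le]; omega⟩
      · exact Or.inr (Or.inr ⟨b, hb, by rw [abs_le]; omega⟩)

end
end GR

namespace GR
open scoped commutatorElement

/-- Quasi-periodicity of the sign function. -/
structure QP (σ : ℤ → ℤ) : Prop where
  hσ : ∀ m, σ m = 1 ∨ σ m = -1
  q1 : ∀ (k : ℤ) (n : ℕ), ∃ L : ℕ, ∀ k' : ℤ, ∃ j : ℤ, k' ≤ j ∧ j + n ≤ k' + L ∧ j % 2 = k % 2 ∧
    ∀ i : ℤ, 0 ≤ i → i ≤ n → σ (j + i) = σ (k + i)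
  q2 : ∀ (k : ℤ) (n : ℕ), ∃ k' : ℤ, k' % 2 = (k + n) % 2 ∧
    ∀ i : ℤ, 0 ≤ i → i ≤ n → σ (k' + i) = -σ (k + n - i)

theorem not_periodic {σ : ℤ → ℤ} (h : QP σ) {t : ℤ} (ht : t ≠ 0) (hp : ∀ j, σ (j + t) = σ j) : False := by
  have hz : ∀ (a : ℤ) (j : ℤ), σ (j + a * t) = σ j := by
    intro a
    induction a using Int.induction_on with
    | zero => intro j; simp
    | succ n ih => intro j; rw [← ih j, ← hp (j + n * t)]; congr 1; ring
    | pred n ih => intro j; rw [← ih j, ← hp (j + (-n - 1) * t)]; congr 1; ring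
  obtain ⟨k', hk, hr⟩ := h.q2 0 t.natAbs
  obtain ⟨s, hs⟩ : ∃ s, k' + t.natAbs = 2 * s := ⟨(k' + t.natAbs) / 2, by omega⟩
  have e1 := Int.emod_add_mul_ediv (s - k') t
  have e2 := Int.emod_nonneg (s - k') ht
  have e3 := Int.emod_lt_abs (s - k') ht
  have := hr ((s - k') % t) e2 (by rw [Int.natCast_natAbs]; exact e3.le)
  have h1 : k' + (s - k') % t = s + (-((s - k') / t)) * t := by linarith
  have h2 : 0 + (t.natAbs : ℤ) - (s - k') % t = s + ((s - k') / t) * t := by linarith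
  rw [h1, h2, hz, hz] at this
  rcases h.hσ s with h | h <;> omega

theorem nonper1 {σ : ℤ → ℤ} (h : QP σ) {t : ℤ} (ht : t ≠ 0) : ∃ R : ℕ, ∀ m : ℤ,
    ¬ (∀ j : ℤ, |j - m| ≤ R → σ (j + t) = σ j) := by
  by_contra hc
  push Not at hc
  refine not_periodic h ht fun j => ?_
  obtain ⟨L, hL⟩ := h.q1 (j - t.natAbs) (2 * t.natAbs)
  obtain ⟨m, hm⟩ := hc L
  obtain ⟨j', h1, h2, -, h3⟩ := hL m
  have e1 := h3 t.natAbs (by omega) (by omega)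
  have e2 := h3 (t.natAbs + t) (by omega) (by omega)
  have e3 := hm (j' + t.natAbs) (by rw [abs_le]; omega)
  have a1 : j - (t.natAbs : ℤ) + t.natAbs = j := by ring
  have a2 : j - (t.natAbs : ℤ) + (t.natAbs + t) = j + t := by ring
  rw [a1] at e1
  rw [a2] at e2
  rw [← e1, ← e2, ← e3]
  congr 1; ring

/-- The partial symmetry `j ↦ t + e j` holds at `j`. -/
def Sy (σ : ℤ → ℤ) (e t j : ℤ) : Prop := σ (t + e * j) = e * σ j

theorem nonper {σ : ℤ → ℤ} (h : QP σ) (d : ℕ) : ∃ R : ℕ, ∀ m e t : ℤ, (e = 1 ∨ e = -1) → t % 2 = 0 →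
    (∀ j : ℤ, |j - m| ≤ R → Sy σ e t j) → |t + e * m - m| ≤ d → e = 1 ∧ t = 0 := by
  have hf : ∀ t : ℤ, ∃ R : ℕ, t ≠ 0 → ∀ m : ℤ, ¬ (∀ j : ℤ, |j - m| ≤ R → σ (j + t) = σ j) := by
    intro t
    by_cases ht : t = 0
    · exact ⟨0, fun h => absurd ht h⟩
    · obtain ⟨R, hR⟩ := nonper1 h ht
      exact ⟨R, fun _ => hR⟩
  choose R hR using hf
  refine ⟨d + (Finset.Icc (-(d : ℤ)) d).sup R, fun m e t he ht hS hd => ?_⟩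
  rcases he with rfl | rfl
  · refine ⟨rfl, ?_⟩
    by_contra h0
    refine hR t h0 m fun j hj => ?_
    have hle : R t ≤ (Finset.Icc (-(d : ℤ)) d).sup R := by
      apply Finset.le_sup (f := R)
      rw [Finset.mem_Icc, ← abs_le]
      have : t + 1 * m - m = t := by ring
      rwa [this] at hd
    have := hS j (by push_cast; omega)
    unfold Sy at this
    rw [one_mul, one_mul] at this
    rwa [add_comm]
  · exfalso
    have := hS (t / 2) (by
      rw [abs_le] at hd ⊢
      push_cast
      omega)
    unfold Sy at this
    have e : t + -1 * (t / 2) = t / 2 := by omega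
    rw [e] at this
    rcases h.hσ (t / 2) with h | h <;> omega

/-- Elements that commute with partial symmetries. -/
def Loc (σ : ℤ → ℤ) (g : W) : Prop := ∃ r d : ℕ, (∀ x, |g x - x| ≤ d) ∧
  ∀ (e t : ℤ) (x : ℝ), (e = 1 ∨ e = -1) → t % 2 = 0 → (∀ j : ℤ, |(j : ℝ) - 2 * x| ≤ r → Sy σ e t j) →
    g ((t : ℝ) / 2 + e * x) = t / 2 + e * g x

theorem Loc_one (σ : ℤ → ℤ) : Loc σ 1 := ⟨0, 0, fun x => by simp [W_one], fun e t x _ _ _ => rfl⟩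

theorem Loc_mul {σ : ℤ → ℤ} {g g' : W} (h : Loc σ g) (h' : Loc σ g') : Loc σ (g * g') := by
  obtain ⟨r, d, h1, h2⟩ := h
  obtain ⟨r', d', h1', h2'⟩ := h'
  refine ⟨r' + r + 2 * d', d + d', fun x => ?_, fun e t x he ht hS => ?_⟩
  · rw [W_mul]
    have a := h1 (g' x)
    have b := h1' x
    rw [abs_le] at a b ⊢
    push_cast
    constructor <;> linarith [a.1, a.2, b.1, b.2]
  · rw [W_mul, W_mul, h2' e t x he ht, h2 e t _ he ht]
    · intro j hj
      apply hS
      have b := h1' x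
      rw [abs_le] at hj b ⊢
      push_cast
      have : (0 : ℝ) ≤ r' := Nat.cast_nonneg _
      constructor <;> linarith [hj.1, hj.2, b.1, b.2]
    · intro j hj
      apply hS
      push_cast
      have : (0 : ℝ) ≤ r := Nat.cast_nonneg _
      have : (0 : ℝ) ≤ d' := Nat.cast_nonneg _
      linarith

theorem Loc_inv {σ : ℤ → ℤ} {g : W} (h : Loc σ g) : Loc σ g⁻¹ := by
  obtain ⟨r, d, h1, h2⟩ := h
  refine ⟨r + 2 * d, d, fun x => ?_, fun e t x he ht hS => ?_⟩
  · have := h1 (g⁻¹ x)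
    rw [W_self_inv] at this
    rwa [abs_sub_comm]
  · apply W_inv_eq
    rw [h2 e t _ he ht, W_self_inv]
    intro j hj
    apply hS
    have := h1 (g⁻¹ x)
    rw [W_self_inv] at this
    rw [abs_le] at hj this ⊢
    push_cast
    constructor <;> linarith [hj.1, hj.2, this.1, this.2]

theorem Loc_lift {σ : ℤ → ℤ} (hσ : ∀ m, σ m = 1 ∨ σ m = -1) {p : ℤ} (hp : p = 0 ∨ p = 1) {f g : W}
    (hf : f ∈ Kh) (h : IsLift σ p Set.univ f g) : Loc σ g := by
  have hr : ∀ y : ℝ, -(1 / 2) ≤ y → y ≤ 1 / 2 → -(1 / 2) ≤ f y ∧ f y ≤ 1 / 2 := by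
    intro y h1 h2
    have a := f.monotone h1
    have b := f.monotone h2
    rw [hf _ (Or.inl le_rfl)] at a
    rw [hf _ (Or.inr le_rfl)] at b
    exact ⟨a, b⟩
  refine ⟨1, 1, fun x => ?_, fun e t x he ht hS => ?_⟩
  · obtain ⟨m, y, hm, h1, h2, rfl⟩ := cover hσ hp x
    rw [(h m hm y h1 h2).1 trivial]
    obtain ⟨h3, h4⟩ := hr y h1 h2
    unfold ph
    rw [abs_le]
    rcases hσ m with h | h <;> rw [h] <;> push_cast <;> constructor <;> linarith
  · obtain ⟨m, y, hm, h1, h2, rfl⟩ := cover hσ hp x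
    have hs : Sy σ e t m := by
      apply hS
      unfold ph
      rw [abs_le]
      rcases hσ m with h | h <;> rw [h] <;> push_cast <;> constructor <;> linarith
    unfold Sy at hs
    have hph : ∀ z, (t : ℝ) / 2 + e * ph σ m z = ph σ (t + e * m) z := by
      intro z
      unfold ph
      rw [hs]; push_cast; ring
    rw [hph, (h m hm y h1 h2).1 trivial, hph, (h _ _ y h1 h2).1 trivial]
    rcases he with rfl | rfl <;> omega

/-- `Same` gives partial symmetries. -/
theorem Same_Sy {σ : ℤ → ℤ} (hσ : ∀ m, σ m = 1 ∨ σ m = -1) {r : ℕ} {m m' : ℤ} (h : Same σ r m m')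
    {j : ℤ} (hj : |j - m| ≤ r) : Sy σ (σ m * σ m') (m' - σ m * σ m' * m) j := by
  have := h (σ m * (j - m)) (by rw [abs_mul]; rcases hσ m with h | h <;> simpa [h] using hj)
  simp only [D, Set.mem_setOf_eq] at this
  unfold Sy
  have e1 : m + σ m * (σ m * (j - m)) = j := by
    rcases hσ m with h | h <;> rw [h] <;> ring
  rw [e1] at this
  have e2 : m' + σ m' * (σ m * (j - m)) = m' - σ m * σ m' * m + σ m * σ m' * j := by ring
  rw [e2] at this
  rcases hσ m with h1 | h1 <;> rcases hσ m' with h2 | h2 <;> rcases hσ j with h3 | h3 <;>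
   rcases hσ (m' - σ m * σ m' * m + σ m * σ m' * j) with h4 | h4 <;> rw [h4] at this ⊢ <;>
   rw [h1, h2, h3] at this <;> rw [h1, h2, h3] <;> revert this <;> decide

theorem Same.symm {σ : ℤ → ℤ} {r : ℕ} {m m' : ℤ} (h : Same σ r m m') : Same σ r m' m :=
  fun i hi => (h i hi).symm

theorem Same.trans {σ : ℤ → ℤ} {r : ℕ} {m m' m'' : ℤ} (h : Same σ r m m') (h' : Same σ r m' m'') :
    Same σ r m m'' := fun i hi => (h i hi).trans (h' i hi)

end GR

namespace GR
open scoped commutatorElement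

section
variable {σ : ℤ → ℤ} {G N : Subgroup W} {p : ℤ} {E : Set ℤ}

theorem lift_supp (hσ : ∀ m, σ m = 1 ∨ σ m = -1) (hp : p = 0 ∨ p = 1) {f F : W} {u v : ℝ}
    (hf : f ∈ K u v) (h : IsLift σ p E f F) {x : ℝ} (hx : F x ≠ x) :
    ∃ m y, m % 2 = p ∧ m ∈ E ∧ u < y ∧ y < v ∧ -(1 / 2) ≤ y ∧ y ≤ 1 / 2 ∧ x = ph σ m y := by
  obtain ⟨m, y, hm, h1, h2, rfl⟩ := cover hσ hp x
  have hE : m ∈ E := by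
    by_contra hE
    exact hx ((h m hm y h1 h2).2 hE)
  have h3 := (h m hm y h1 h2).1 hE
  refine ⟨m, y, hm, hE, ?_, ?_, h1, h2, rfl⟩
  · by_contra h4
    rw [hf y (Or.inl (not_lt.mp h4))] at h3
    exact hx h3
  · by_contra h4
    rw [hf y (Or.inr (not_lt.mp h4))] at h3
    exact hx h3

/-- Moving `m₀` to `m`. -/
theorem ph_move (hσ : ∀ m, σ m = 1 ∨ σ m = -1) (m₀ m : ℤ) (y : ℝ) :
    ph σ m y = ((m - σ m₀ * σ m * m₀ : ℤ) : ℝ) / 2 + ((σ m₀ * σ m : ℤ) : ℝ) * ph σ m₀ y := by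
  unfold ph
  rcases hσ m with h | h <;> rcases hσ m₀ with h' | h' <;> rw [h, h'] <;> push_cast <;> ring

theorem sg_mul (hσ : ∀ m, σ m = 1 ∨ σ m = -1) (m₀ m : ℤ) : σ m₀ * σ m = 1 ∨ σ m₀ * σ m = -1 := by
  rcases hσ m with h | h <;> rcases hσ m₀ with h' | h' <;> rw [h, h'] <;> simp

theorem sg_par (hσ : ∀ m, σ m = 1 ∨ σ m = -1) {m₀ m : ℤ} (h : m % 2 = m₀ % 2) :
    (m - σ m₀ * σ m * m₀) % 2 = 0 := by
  rcases sg_mul hσ m₀ m with h' | h' <;> rw [h'] <;> omega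

theorem start (c : Ctx σ G N) (q : QP σ) (hloc : ∀ g ∈ G, Loc σ g) {g : W} (hg : g ∈ N) (hg1 : g ≠ 1) :
    ∃ (m₀ : ℤ) (r : ℕ), Good σ N (m₀ % 2) {m | Same σ r m m₀} := by
  have hσ := c.hσ
  obtain ⟨x₀, hx₀⟩ : ∃ x, g x ≠ x := by
    by_contra h
    push Not at h
    exact hg1 (by ext x; exact h x)
  obtain ⟨rl, d, hd, hl⟩ := hloc g (c.le hg)
  obtain ⟨R, hR⟩ := nonper q (2 + 2 * d)
  obtain ⟨m₀, hm₀⟩ : ∃ m₀ : ℤ, |x₀ - m₀ / 2| ≤ 1 / 4 := by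
    refine ⟨round (2 * x₀), ?_⟩
    have := abs_sub_round (2 * x₀)
    rw [abs_le] at this ⊢
    constructor <;> linarith [this.1, this.2]
  -- the small interval
  obtain ⟨δ, hδ0, hδ4, hδ⟩ : ∃ δ : ℝ, 0 < δ ∧ δ < 1 / 4 ∧
      ∀ x x', |x - x₀| < δ → |x' - x₀| < δ → g x ≠ x' := by
    have hη : 0 < |g x₀ - x₀| / 2 := by
      have := abs_pos.mpr (sub_ne_zero.mpr hx₀)
      linarith
    obtain ⟨δ, hδ, h⟩ := Metric.continuous_iff.mp g.continuous x₀ _ hη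
    refine ⟨min (min δ (1 / 5)) (|g x₀ - x₀| / 2), by positivity, ?_, ?_⟩
    · exact lt_of_le_of_lt ((min_le_left _ _).trans (min_le_right _ _)) (by norm_num)
    · intro x x' h1 h2 he
      have h3 := h x (by
        rw [Real.dist_eq]
        exact lt_of_lt_of_le h1 ((min_le_left _ _).trans (min_le_left _ _)))
      have h4 := lt_of_lt_of_le h2 (min_le_right _ _)
      rw [Real.dist_eq, he] at h3
      have h5 := abs_sub_le (g x₀) x' x₀
      rw [abs_sub_comm] at h3
      linarith
  obtain ⟨y₀, hy₀⟩ : ∃ y₀, x₀ = ph σ m₀ y₀ := by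
    refine ⟨σ m₀ * (x₀ - m₀ / 2), ?_⟩
    unfold ph
    rcases hσ m₀ with h | h <;> rw [h] <;> push_cast <;> ring
  have hphd : ∀ y, |ph σ m₀ y - x₀| = |y - y₀| := by
    intro y
    rw [hy₀]
    unfold ph
    rcases hσ m₀ with h | h <;> rw [h] <;> push_cast
    · congr 1; ring
    · rw [← abs_neg]; congr 1; ring
  have hy4 : |y₀| ≤ 1 / 4 := by
    rw [hy₀] at hm₀
    unfold ph at hm₀
    rcases hσ m₀ with h | h <;> rw [h] at hm₀ <;> push_cast at hm₀ <;> ring_nf at hm₀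
    · linarith
    · rw [abs_neg] at hm₀; linarith
  rw [abs_le] at hy4
  have hp : m₀ % 2 = 0 ∨ m₀ % 2 = 1 := by omega
  refine ⟨m₀, R + rl + 1, ?_⟩
  set E : Set ℤ := {m | Same σ (R + rl + 1) m m₀} with hE
  -- key disjointness
  have key : ∀ f₁ f₂ F₁ F₂ : W, f₁ ∈ K (y₀ - δ) (y₀ + δ) → f₂ ∈ K (y₀ - δ) (y₀ + δ) →
      IsLift σ (m₀ % 2) E f₁ F₁ → IsLift σ (m₀ % 2) E f₂ F₂ →
      ∀ x, (g * F₁ * g⁻¹) x = x ∨ F₂ x = x := by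
    intro f₁ f₂ F₁ F₂ h₁ h₂ L₁ L₂ x
    by_contra hcon
    push Not at hcon
    obtain ⟨hc1, hc2⟩ := hcon
    have hc1' : F₁ (g⁻¹ x) ≠ g⁻¹ x := by
      intro h
      apply hc1
      rw [W_mul, W_mul, h, W_self_inv]
    obtain ⟨m, y, hm, hmE, hy1, hy2, hy3, hy5, hx⟩ := lift_supp hσ hp h₁ L₁ hc1'
    obtain ⟨m', y', hm', hmE', hy1', hy2', hy3', hy5', hx'⟩ := lift_supp hσ hp h₂ L₂ hc2
    have hgx : g (ph σ m y) = ph σ m' y' := by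
      rw [← hx, W_self_inv, hx']
    have hmm : |m' - m| ≤ 2 + 2 * (d : ℤ) := by
      have a := hd (ph σ m y)
      rw [hgx] at a
      have : |(m' : ℝ) - m| ≤ 2 + 2 * d := by
        unfold ph at a
        rw [abs_le] at a ⊢
        rcases hσ m with h | h <;> rcases hσ m' with h' | h' <;> rw [h, h'] at a <;> push_cast at a <;>
          constructor <;> linarith [a.1, a.2]
      exact_mod_cast this
    have heq : m = m' := by
      have hS : Same σ (R + rl + 1) m m' := Same.trans hmE (Same.symm hmE')
      obtain ⟨e1, e2⟩ := hR m (σ m * σ m') (m' - σ m * σ m' * m) (sg_mul hσ _ _)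
        (sg_par hσ (hm'.trans hm.symm)) (fun j hj => Same_Sy hσ hS (by push_cast; omega)) (by
          have : m' - σ m * σ m' * m + σ m * σ m' * m - m = m' - m := by ring
          rw [this]; push_cast; exact hmm)
      rw [e1] at e2
      omega
    subst heq
    have hloc' := hl (σ m₀ * σ m) (m - σ m₀ * σ m * m₀) (ph σ m₀ y) (sg_mul hσ _ _)
      (sg_par hσ hm) (by
        intro j hj
        refine Same_Sy hσ (Same.symm hmE) ?_
        have : |(j : ℝ) - m₀| ≤ rl + 1 := by
          unfold ph at hj
          rw [abs_le] at hj ⊢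
          rcases hσ m₀ with h | h <;> rw [h] at hj <;> push_cast at hj <;>
            constructor <;> linarith [hj.1, hj.2]
        have h' : |j - m₀| ≤ rl + 1 := by exact_mod_cast this
        push_cast
        omega)
    rw [← ph_move hσ, hgx, ph_move hσ m₀] at hloc'
    have hne : ((σ m₀ * σ m : ℤ) : ℝ) ≠ 0 := by
      rcases sg_mul hσ m₀ m with h | h <;> rw [h] <;> norm_num
    have hfin : ph σ m₀ y' = g (ph σ m₀ y) := mul_left_cancel₀ hne (add_left_cancel hloc')
    refine hδ (ph σ m₀ y) (ph σ m₀ y') ?_ ?_ hfin.symm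
    · rw [hphd, abs_lt]; constructor <;> linarith
    · rw [hphd, abs_lt]; constructor <;> linarith
  have hEG : Good σ G (m₀ % 2) E := class_good c hp _ m₀
  refine crit c hp (u := y₀ - δ) (v := y₀ + δ) (by linarith) (by linarith) (by linarith) ?_
  intro f₁ hf₁ f₂ hf₂ hK₁ hK₂
  obtain ⟨F₁, hF₁, L₁⟩ := hEG f₁ hf₁
  obtain ⟨F₂, hF₂, L₂⟩ := hEG f₂ hf₂
  refine ⟨⁅F₁, F₂⁆, ?_, ?_⟩
  · have h1 := disj_comm (key f₁⁻¹ f₂ F₁⁻¹ F₂ (inv_mem hK₁) hK₂ (lift_inv L₁ (FC_K hf₁)) L₂)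
    set A := g * F₁⁻¹ * g⁻¹ with hA
    have hAG : A ∈ G := mul_mem (mul_mem (c.le hg) (inv_mem hF₁)) (inv_mem (c.le hg))
    have h2 : ⁅⁅g, F₁⁻¹⁆, F₂⁆ ∈ N := comm_left c hF₂ (comm_left c (inv_mem hF₁) hg)
    have h3 := c.hN A⁻¹ (inv_mem hAG) _ h2
    have h4 : ⁅g, F₁⁻¹⁆ = A * F₁ := by rw [commutatorElement_def, inv_inv]
    rw [h4] at h3
    have h5 : A⁻¹ * ⁅A * F₁, F₂⁆ * A⁻¹⁻¹ = ⁅F₁, F₂⁆ := by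
      rw [commutatorElement_def, commutatorElement_def]
      have h6 : A⁻¹ * F₂⁻¹ * A = F₂⁻¹ := by
        have : F₂⁻¹ * A = A * F₂⁻¹ := by
          rw [inv_mul_eq_iff_eq_mul, ← mul_assoc, ← h1, mul_assoc, mul_inv_cancel, mul_one]
        rw [mul_assoc, this, inv_mul_cancel_left]
      calc _ = F₁ * F₂ * F₁⁻¹ * (A⁻¹ * F₂⁻¹ * A) := by group
        _ = _ := by rw [h6]
    rwa [h5] at h3
  · have := lift_comm L₁ L₂ (FC_K hf₁) (FC_K hf₂)
    rwa [Set.inter_self] at this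

theorem all_good (c : Ctx σ G N) (q : QP σ) (hloc : ∀ g ∈ G, Loc σ g) {g : W} (hg : g ∈ N) (hg1 : g ≠ 1) :
    ∀ p, p = 0 ∨ p = 1 → Good σ N p Set.univ := by
  obtain ⟨m₀, r, hgood⟩ := start c q hloc hg hg1
  obtain ⟨L, hL⟩ := q.q1 (m₀ - r) (2 * r)
  have hB : ∀ p, p = 0 ∨ p = 1 → Good σ N p {m | Same σ r m m₀ ∧ m % 2 = m₀ % 2} := by
    intro p hp
    by_cases h : p = m₀ % 2
    · subst h
      refine hgood.congr fun m hm => ?_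
      change Same σ r m m₀ ↔ Same σ r m m₀ ∧ m % 2 = m₀ % 2
      exact ⟨fun h => ⟨h, hm⟩, fun h => h.1⟩
    · intro f _
      refine ⟨1, one_mem _, fun m hm y _ _ => ⟨fun hmE => ?_, fun _ => rfl⟩⟩
      exact absurd (hm.symm.trans hmE.2) h
  intro p hp
  refine (grow_n c hB L p hp).congr fun m _ => ⟨fun _ => trivial, fun _ => ?_⟩
  obtain ⟨j, h1, h2, h3, h4⟩ := hL m
  refine ⟨j + r, ⟨?_, by omega⟩, ?_⟩
  · have hs : ∀ i : ℤ, |i| ≤ r → σ (j + r + i) = σ (m₀ + i) := by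
      intro i hi
      rw [abs_le] at hi
      have := h4 (r + i) (by omega) (by push_cast; omega)
      have e : m₀ - (r : ℤ) + (r + i) = m₀ + i := by ring
      rw [e] at this
      rw [← this]; congr 1; ring
    intro i hi
    have h0 := hs 0 (by simp)
    rw [add_zero, add_zero] at h0
    have h5 := hs (σ m₀ * i) (by rw [abs_mul]; rcases c.hσ m₀ with h | h <;> simpa [h] using hi)
    change σ (j + r) = σ (j + r + σ (j + r) * i) ↔ σ m₀ = σ (m₀ + σ m₀ * i)
    rw [h0, h5]
  · rw [abs_le]; push_cast at h2; constructor <;> omega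

end
end GR

namespace GR
open scoped commutatorElement

def lsg : Letter → ℤ
  | .a => 1
  | .b => 1
  | .A => -1
  | .B => -1

def lpar : Letter → ℤ
  | .a => 0
  | .A => 0
  | .b => 1
  | .B => 1

theorem lsg_cases (l : Letter) : lsg l = 1 ∨ lsg l = -1 := by cases l <;> simp [lsg]
theorem lsg_inv (l : Letter) : lsg l.inv = -lsg l := by cases l <;> simp [lsg, Letter.inv]
theorem lpar_inv (l : Letter) : lpar l.inv = lpar l := by cases l <;> simp [lpar, Letter.inv]

theorem lpar_eq {ρ : ℤ → Letter} (h : IsLabelling ρ) (m : ℤ) : lpar (ρ m) = m % 2 := by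
  rcases Int.even_or_odd m with hm | hm
  · rw [Int.even_iff.mp hm]
    rcases (h m).1 hm with h | h <;> rw [h] <;> rfl
  · rw [Int.odd_iff.mp hm]
    rcases (h m).2 hm with h | h <;> rw [h] <;> rfl

theorem blockWord_length (ρ : ℤ → Letter) (k : ℤ) (n : ℕ) : (blockWord ρ k n).length = n + 1 := by
  simp [blockWord]

theorem blockWord_get (ρ : ℤ → Letter) (k : ℤ) (n i : ℕ) (hi : i ≤ n) :
    (blockWord ρ k n)[i]? = some (ρ (k + i)) := by
  have e : (List.flatMap (fun a : ℕ => [(a : ℤ)]) (List.range (n + 1))) =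
      (List.range (n + 1)).map fun a : ℕ => (a : ℤ) :=
    List.flatMap_pure_eq_map _ _
  simp [blockWord, List.getElem?_map, e, List.getElem?_range (Nat.lt_succ_of_le hi)]

theorem infix_block {ρ : ℤ → Letter} {k k' : ℤ} {n n' : ℕ} (h : blockWord ρ k n <:+: blockWord ρ k' n') :
    ∃ j : ℕ, j + n ≤ n' ∧ ∀ i : ℕ, i ≤ n → ρ (k' + j + i) = ρ (k + i) := by
  obtain ⟨s, t, h⟩ := h
  have hl := congrArg List.length h
  simp only [List.length_append, blockWord_length] at hl
  refine ⟨s.length, by omega, fun i hi => ?_⟩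
  have h1 := blockWord_get ρ k' n' (s.length + i) (by omega)
  rw [← h, List.append_assoc, List.getElem?_append_right (by omega), Nat.add_sub_cancel_left,
    List.getElem?_append_left (by rw [blockWord_length]; omega), blockWord_get ρ k n i hi] at h1
  have h2 := Option.some.inj h1
  rw [h2]; congr 1; push_cast; ring

theorem QP_of {ρ : ℤ → Letter} (h : IsQuasiPeriodic ρ) : QP (fun m => lsg (ρ m)) := by
  obtain ⟨hlab, h1, h2⟩ := h
  refine ⟨fun m => lsg_cases _, fun k n => ?_, fun k n => ?_⟩
  · obtain ⟨L, hL⟩ := h1 k n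
    refine ⟨L, fun k' => ?_⟩
    obtain ⟨j, hj, he⟩ := infix_block (hL k' L (by omega))
    refine ⟨k' + j, by omega, by omega, ?_, fun i h0 hi => ?_⟩
    · have := congrArg lpar (he 0 (by omega))
      rw [lpar_eq hlab, lpar_eq hlab] at this
      simpa using this
    · obtain ⟨i, rfl⟩ := Int.eq_ofNat_of_zero_le h0
      exact congrArg lsg (he i (by exact_mod_cast hi))
  · obtain ⟨k', hk⟩ := h2 k n
    have he : ∀ i : ℕ, i ≤ n → ρ (k' + i) = (ρ (k + (n - i : ℕ))).inv := by
      intro i hi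
      have a := blockWord_get ρ k' n i hi
      rw [hk, wordInv, List.getElem?_reverse (by rw [List.length_map, blockWord_length]; omega),
        List.length_map, blockWord_length, List.getElem?_map] at a
      have e : n + 1 - 1 - i = n - i := by omega
      rw [e, blockWord_get ρ k n _ (by omega)] at a
      exact (Option.some.inj a).symm
    refine ⟨k', ?_, fun i h0 hi => ?_⟩
    · have := congrArg lpar (he 0 (by omega))
      rw [lpar_inv, lpar_eq hlab, lpar_eq hlab] at this
      simpa using this
    · obtain ⟨i, rfl⟩ := Int.eq_ofNat_of_zero_le h0
      have hi' : i ≤ n := by exact_mod_cast hi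
      have := congrArg lsg (he i hi')
      rw [lsg_inv, Nat.cast_sub hi'] at this
      change lsg (ρ (k' + (i : ℤ))) = -lsg (ρ (k + n - (i : ℤ)))
      rw [this]; congr 3; ring

theorem lift_zeta {ρ : ℤ → Letter} (h : IsLabelling ρ) {ν ζ : W} (hz : IsZeta ρ ν ζ) :
    IsLift (fun m => lsg (ρ m)) 1 Set.univ (tr (-(1 / 2)) ν) ζ := by
  intro m hm y hy hy'
  refine ⟨fun _ => ?_, fun h => absurd trivial h⟩
  obtain ⟨n, rfl⟩ : ∃ n, m = 2 * n + 1 := ⟨m / 2, by omega⟩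
  unfold ph
  rw [tr_apply]
  rcases (h (2 * n + 1)).2 ⟨n, rfl⟩ with hr | hr
  · simp only [hr, lsg]
    rw [(hz n _ ⟨by push_cast; linarith, by push_cast; linarith⟩).1 hr]
    have : ((2 * n + 1 : ℤ) : ℝ) / 2 + (1 : ℤ) * y - n = y - -(1 / 2) := by push_cast; ring
    rw [this]; push_cast; ring
  · simp only [hr, lsg]
    rw [(hz n _ ⟨by push_cast; linarith, by push_cast; linarith⟩).2 hr]
    have : (n : ℝ) + 1 - (((2 * n + 1 : ℤ) : ℝ) / 2 + (-1 : ℤ) * y) = y - -(1 / 2) := by push_cast; ring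
    rw [this]; push_cast; ring

theorem lift_chi {ρ : ℤ → Letter} (h : IsLabelling ρ) {ν χ : W} (hz : IsChi ρ ν χ) :
    IsLift (fun m => lsg (ρ m)) 0 Set.univ (tr (-(1 / 2)) ν) χ := by
  intro m hm y hy hy'
  refine ⟨fun _ => ?_, fun h => absurd trivial h⟩
  obtain ⟨n, rfl⟩ : ∃ n, m = 2 * n := ⟨m / 2, by omega⟩
  unfold ph
  rw [tr_apply]
  rcases (h (2 * n)).1 ⟨n, by ring⟩ with hr | hr
  · simp only [hr, lsg]
    rw [(hz n _ ⟨by push_cast; linarith, by push_cast; linarith⟩).1 hr]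
    have : ((2 * n : ℤ) : ℝ) / 2 + (1 : ℤ) * y - (n - 1 / 2) = y - -(1 / 2) := by push_cast; ring
    rw [this]; push_cast; ring
  · simp only [hr, lsg]
    rw [(hz n _ ⟨by push_cast; linarith, by push_cast; linarith⟩).2 hr]
    have : (n : ℝ) + 1 / 2 - (((2 * n : ℤ) : ℝ) / 2 + (-1 : ℤ) * y) = y - -(1 / 2) := by push_cast; ring
    rw [this]; push_cast; ring

/-- The elements whose full lift lies in `N`. -/
def LS (σ : ℤ → ℤ) (p : ℤ) (N : Subgroup W) : Subgroup W where
  carrier := {f | f ∈ Kh ∧ ∃ g ∈ N, IsLift σ p Set.univ f g}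
  mul_mem' := by
    rintro f f' ⟨hf, g, hg, hl⟩ ⟨hf', g', hg', hl'⟩
    exact ⟨mul_mem hf hf', g * g', mul_mem hg hg', lift_mul hl hl' hf hf'⟩
  one_mem' := ⟨one_mem _, 1, one_mem _, lift_one⟩
  inv_mem' := by
    rintro f ⟨hf, g, hg, hl⟩
    exact ⟨inv_mem hf, g⁻¹, inv_mem hg, lift_inv hl hf⟩

theorem LS_H {σ : ℤ → ℤ} {N : Subgroup W} (hσ : ∀ m, σ m = 1 ∨ σ m = -1)
    (h : ∀ p, p = 0 ∨ p = 1 → Good σ N p Set.univ) {p : ℤ} (hp : p = 0 ∨ p = 1) {ν : W} (hν : InH ν) :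
    tr (-(1 / 2)) ν ∈ LS σ p N := by
  obtain ⟨hP, hK, k, hk⟩ := InH_cent hν
  have hn0 : n0 ∈ LS σ p N := by
    obtain ⟨g, hg, hl⟩ := h _ (other hp) f0 f0_FC
    exact ⟨n0_K, g, hg, lift_n0 hσ hp hl⟩
  have hc : tr (-(1 / 2)) ν * n0 ^ (-k) ∈ FC := by
    refine FC_of_Sl (mul_mem hP (zpow_mem n0_Pc _)) (mul_mem hK (zpow_mem n0_K _)) ?_
    have := Sl_mul hk (Sl_zpow n0_Sl (-k))
    rwa [add_neg_cancel] at this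
  have hc' : tr (-(1 / 2)) ν * n0 ^ (-k) ∈ LS σ p N := ⟨FC_K hc, h p hp _ hc⟩
  have := mul_mem hc' (zpow_mem hn0 k)
  rwa [mul_assoc, ← zpow_add, neg_add_cancel, zpow_zero, mul_one] at this

theorem f0_ne : f0 ≠ 1 := by
  intro h
  have h1 := f0_right (x := 1 / 16) (by norm_num)
  rw [h, W_one, bump_2 (by norm_num) (by norm_num) (by norm_num)] at h1
  norm_num at h1

end GR

open GR

/-- For a quasi-periodic labelling `ρ`, the group `G_ρ` is simple. -/
theorem G_rho_simple
    (ρ : ℤ → Letter) (hρ : IsQuasiPeriodic ρ)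
    (H : Subgroup (ℝ ≃o ℝ)) (hH : ∀ f : ℝ ≃o ℝ, f ∈ H ↔ InH f)
    (ν₁ ν₂ ν₃ : ℝ ≃o ℝ) (hgen : Subgroup.closure {ν₁, ν₂, ν₃} = H)
    (ζ₁ ζ₂ ζ₃ χ₁ χ₂ χ₃ : ℝ ≃o ℝ)
    (hζ₁ : IsZeta ρ ν₁ ζ₁) (hζ₂ : IsZeta ρ ν₂ ζ₂) (hζ₃ : IsZeta ρ ν₃ ζ₃)
    (hχ₁ : IsChi ρ ν₁ χ₁) (hχ₂ : IsChi ρ ν₂ χ₂) (hχ₃ : IsChi ρ ν₃ χ₃)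
    (G : Subgroup (ℝ ≃o ℝ))
    (hG : G = Subgroup.closure {ζ₁, ζ₂, ζ₃, χ₁, χ₂, χ₃})
    : IsSimpleGroup ↥G := by
  have hlab := hρ.1
  have q := QP_of hρ
  set σ : ℤ → ℤ := fun m => lsg (ρ m) with hσdef
  have hσ := q.hσ
  have hνH : ∀ ν ∈ ({ν₁, ν₂, ν₃} : Set (ℝ ≃o ℝ)), InH ν := fun ν hν =>
    (hH ν).mp (hgen ▸ Subgroup.subset_closure hν)
  have i1 : InH ν₁ := hνH _ (by simp)
  have i2 : InH ν₂ := hνH _ (by simp)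
  have i3 : InH ν₃ := hνH _ (by simp)
  have z1 := lift_zeta hlab hζ₁
  have z2 := lift_zeta hlab hζ₂
  have z3 := lift_zeta hlab hζ₃
  have c1 := lift_chi hlab hχ₁
  have c2 := lift_chi hlab hχ₂
  have c3 := lift_chi hlab hχ₃
  have mem : ∀ g ∈ ({ζ₁, ζ₂, ζ₃, χ₁, χ₂, χ₃} : Set (ℝ ≃o ℝ)), g ∈ G := fun g hg =>
    hG ▸ Subgroup.subset_closure hg
  have hgens : ∀ g ∈ ({ζ₁, ζ₂, ζ₃, χ₁, χ₂, χ₃} : Set (ℝ ≃o ℝ)), ∃ p ν, (p = 0 ∨ p = 1) ∧ InH ν ∧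
      IsLift σ p Set.univ (tr (-(1 / 2)) ν) g := by
    rintro g (rfl | rfl | rfl | rfl | rfl | rfl)
    · exact ⟨1, _, Or.inr rfl, i1, z1⟩
    · exact ⟨1, _, Or.inr rfl, i2, z2⟩
    · exact ⟨1, _, Or.inr rfl, i3, z3⟩
    · exact ⟨0, _, Or.inl rfl, i1, c1⟩
    · exact ⟨0, _, Or.inl rfl, i2, c2⟩
    · exact ⟨0, _, Or.inl rfl, i3, c3⟩
  have hU : ∀ p, p = 0 ∨ p = 1 → Good σ G p Set.univ := by
    intro p hp
    have hle : H ≤ (LS σ p G).comap (tr (-(1 / 2))) := by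
      rw [← hgen, Subgroup.closure_le]
      have k1 := (InH_cent i1).2.1
      have k2 := (InH_cent i2).2.1
      have k3 := (InH_cent i3).2.1
      rcases hp with rfl | rfl
      · rintro ν (rfl | rfl | rfl)
        · exact ⟨k1, _, mem χ₁ (by simp), c1⟩
        · exact ⟨k2, _, mem χ₂ (by simp), c2⟩
        · exact ⟨k3, _, mem χ₃ (by simp), c3⟩
      · rintro ν (rfl | rfl | rfl)
        · exact ⟨k1, _, mem ζ₁ (by simp), z1⟩
        · exact ⟨k2, _, mem ζ₂ (by simp), z2⟩
        · exact ⟨k3, _, mem ζ₃ (by simp), z3⟩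
    intro f hf
    have h1 := hle ((hH _).mpr (InH_of_cent hf.1 (FC_K hf) (Sl_of_FC hf)))
    rw [Subgroup.mem_comap, tr_neg] at h1
    exact h1.2
  have hloc : ∀ g ∈ G, Loc σ g := by
    intro g hg
    rw [hG] at hg
    induction hg using Subgroup.closure_induction with
    | mem g hg =>
      obtain ⟨p, ν, hp, hν, hl⟩ := hgens g hg
      exact Loc_lift hσ hp (InH_cent hν).2.1 hl
    | one => exact Loc_one σ
    | mul _ _ _ _ h1 h2 => exact Loc_mul h1 h2
    | inv _ _ h => exact Loc_inv h
  have hnt : ∃ g ∈ G, g ≠ 1 := by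
    obtain ⟨g, hg, hl⟩ := hU 0 (Or.inl rfl) f0 f0_FC
    refine ⟨g, hg, fun h1 => f0_ne ?_⟩
    ext y
    by_cases hy : -(1 / 2) ≤ y ∧ y ≤ 1 / 2
    · have h2 := (hl 0 (by norm_num) y hy.1 hy.2).1 trivial
      rw [h1, W_one] at h2
      unfold ph at h2
      have hne : (σ 0 : ℝ) ≠ 0 := by rcases hσ 0 with h | h <;> rw [h] <;> norm_num
      exact (mul_left_cancel₀ hne (add_left_cancel h2)).symm
    · rw [W_one]
      refine FC_K f0_FC y ?_
      by_cases h3 : -(1 / 2) ≤ y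
      · right; by_contra h4; exact hy ⟨h3, (not_le.mp h4).le⟩
      · left; exact (not_le.mp h3).le
  obtain ⟨g₀, hg₀, hg₀1⟩ := hnt
  haveI : Nontrivial G := ⟨⟨g₀, hg₀⟩, 1, fun h => hg₀1 (congrArg Subtype.val h)⟩
  refine ⟨fun M hM => ?_⟩
  by_cases hbot : M = ⊥
  · exact Or.inl hbot
  right
  obtain ⟨g, hgM, hg1⟩ : ∃ g ∈ M, g ≠ 1 := by
    by_contra hcon
    push Not at hcon
    exact hbot ((Subgroup.eq_bot_iff_forall M).mpr hcon)
  set N : Subgroup W := M.map G.subtype with hN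
  have c : Ctx σ G N := by
    refine ⟨hσ, hU, ?_, ?_⟩
    · rintro x ⟨y, _, rfl⟩; exact y.2
    · rintro x hx n ⟨y, hy, rfl⟩
      exact ⟨⟨x, hx⟩ * y * ⟨x, hx⟩⁻¹, hM.conj_mem y hy _, rfl⟩
  have hall := all_good c q hloc (g := g.1) ⟨g, hgM, rfl⟩ (fun e => hg1 (Subtype.ext e))
  have hGN : G ≤ N := by
    rw [hG, Subgroup.closure_le]
    intro x hx
    obtain ⟨p, ν, hp, hν, hl⟩ := hgens x hx
    obtain ⟨-, g', hg', hl'⟩ := LS_H hσ hall hp hν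
    rw [lift_unique hσ hp hl hl']
    exact hg'
  rw [eq_top_iff]
  rintro x -
  obtain ⟨y, hy, hxy⟩ := hGN x.2
  have : y = x := Subtype.ext hxy
  exact this ▸ hy
end

section
/- Let ρ be a quasi-periodic labelling. Then every element of G_ρ fixes a point of ℝ: for every g ∈ G_ρ there exists x ∈ ℝ with g(x) = x. -/
/-- Local equivariance of `g` under reflections that reverse the labelling near `x`,
together with bounded displacement. -/
def LocRefl (ρ : ℤ → Letter) (g : ℝ ≃o ℝ) : Prop :=
  ∃ L : ℕ, (∀ x, |g x - x| ≤ L) ∧ ∀ (c : ℤ) (x : ℝ),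
    (∀ m : ℤ, |(m : ℝ) - 2 * x| ≤ L → ρ (2 * c - m) = (ρ m).inv) →
      g (c - x) = c - g x

lemma locRefl_one (ρ : ℤ → Letter) : LocRefl ρ 1 :=
  ⟨0, by simp, by intro c x _; simp⟩

lemma locRefl_mul (ρ : ℤ → Letter) (g h : ℝ ≃o ℝ) (hg : LocRefl ρ g) (hh : LocRefl ρ h) :
    LocRefl ρ (g * h) := by
  obtain ⟨L, hL, hg⟩ := hg
  obtain ⟨M, hM, hh⟩ := hh
  refine ⟨L + 2 * M, ?_, ?_⟩
  · intro x
    have h1 := abs_le.1 (hL (h x))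
    have h2 := abs_le.1 (hM x)
    have h3 : (0 : ℝ) ≤ M := Nat.cast_nonneg M
    push_cast
    rw [RelIso.mul_apply, abs_le]
    constructor <;> linarith [h1.1, h1.2, h2.1, h2.2]
  · intro c x hx
    have h3 : (0 : ℝ) ≤ M := Nat.cast_nonneg M
    have h4 : (0 : ℝ) ≤ L := Nat.cast_nonneg L
    rw [RelIso.mul_apply, RelIso.mul_apply, hh c x, hg c (h x)]
    · intro m hm
      apply hx
      have h1 := abs_le.1 hm
      have h2 := abs_le.1 (hM x)
      push_cast
      rw [abs_le]
      constructor <;> linarith [h1.1, h1.2, h2.1, h2.2]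
    · intro m hm
      apply hx
      push_cast
      linarith

lemma locRefl_inv (ρ : ℤ → Letter) (g : ℝ ≃o ℝ) (hg : LocRefl ρ g) :
    LocRefl ρ g⁻¹ := by
  obtain ⟨L, hL, hg⟩ := hg
  have h4 : (0 : ℝ) ≤ L := Nat.cast_nonneg L
  have hd : ∀ x, |g⁻¹ x - x| ≤ L := by
    intro x
    have := hL (g⁻¹ x)
    rw [RelIso.apply_inv_self] at this
    rwa [abs_sub_comm]
  refine ⟨3 * L, ?_, ?_⟩
  · intro x
    have := hd x
    push_cast
    linarith
  · intro c x hx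
    apply g.injective
    rw [RelIso.apply_inv_self, hg c (g⁻¹ x), RelIso.apply_inv_self]
    intro m hm
    apply hx
    have h1 := abs_le.1 hm
    have h2 := abs_le.1 (hd x)
    push_cast
    rw [abs_le]
    constructor <;> linarith [h1.1, h1.2, h2.1, h2.2]

lemma unit_of_thompson (ν : ℝ ≃o ℝ) (h : ∀ x : ℝ, x ∉ Set.Icc (0 : ℝ) 1 → ν x = x)
    (y : ℝ) (hy : y ∈ Set.Icc (0 : ℝ) 1) : ν y ∈ Set.Icc (0 : ℝ) 1 := by
  by_contra hn
  have h1 := ν.injective (h _ hn)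
  rw [h1] at hn
  exact hn hy

lemma locRefl_zeta (ρ : ℤ → Letter) (hρ : IsLabelling ρ) (ν ζ : ℝ ≃o ℝ)
    (h : ∀ x : ℝ, x ∉ Set.Icc (0 : ℝ) 1 → ν x = x) (hz : IsZeta ρ ν ζ) : LocRefl ρ ζ := by
  have hlab : ∀ n : ℤ, ρ (2 * n + 1) = Letter.b ∨ ρ (2 * n + 1) = Letter.B :=
    fun n => (hρ (2 * n + 1)).2 ⟨n, rfl⟩
  refine ⟨1, ?_, ?_⟩
  · intro x
    have a1 := Int.floor_le x
    have a2 := (Int.lt_floor_add_one x).le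
    obtain ⟨z1, z2⟩ := hz ⌊x⌋ x ⟨a1, a2⟩
    rw [abs_le]
    push_cast
    rcases hlab ⌊x⌋ with hb | hb
    · have u := unit_of_thompson ν h (x - ⌊x⌋) ⟨by linarith, by linarith⟩
      rw [z1 hb]
      constructor <;> linarith [u.1, u.2]
    · have u := unit_of_thompson ν h ((⌊x⌋ + 1) - x) ⟨by linarith, by linarith⟩
      rw [z2 hb]
      constructor <;> linarith [u.1, u.2]
  · intro c x hx
    have a1 := Int.floor_le x
    have a2 := (Int.lt_floor_add_one x).le
    obtain ⟨z1, z2⟩ := hz ⌊x⌋ x ⟨a1, a2⟩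
    obtain ⟨w1, w2⟩ := hz (c - ⌊x⌋ - 1) (c - x)
      ⟨by push_cast; linarith, by push_cast; linarith⟩
    have e := hx (2 * ⌊x⌋ + 1) (by
      push_cast
      rw [abs_le]
      constructor <;> linarith)
    rw [show 2 * c - (2 * ⌊x⌋ + 1) = 2 * (c - ⌊x⌋ - 1) + 1 by ring] at e
    rcases hlab ⌊x⌋ with hb | hb
    · rw [hb] at e
      rw [z1 hb, w2 e]
      push_cast
      rw [show (c : ℝ) - ⌊x⌋ - 1 + 1 - (c - x) = x - ⌊x⌋ by ring]
      ring
    · rw [hb] at e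
      rw [z2 hb, w1 e]
      push_cast
      rw [show (c : ℝ) - x - (c - ⌊x⌋ - 1) = ⌊x⌋ + 1 - x by ring]
      ring

lemma locRefl_chi (ρ : ℤ → Letter) (hρ : IsLabelling ρ) (ν χ : ℝ ≃o ℝ)
    (h : ∀ x : ℝ, x ∉ Set.Icc (0 : ℝ) 1 → ν x = x) (hz : IsChi ρ ν χ) : LocRefl ρ χ := by
  have hlab : ∀ n : ℤ, ρ (2 * n) = Letter.a ∨ ρ (2 * n) = Letter.A :=
    fun n => (hρ (2 * n)).1 ⟨n, by ring⟩
  have hr : ∀ x : ℝ, ∃ n : ℤ, (n : ℝ) - 1 / 2 ≤ x ∧ x ≤ n + 1 / 2 := by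
    intro x
    refine ⟨⌊x + 1 / 2⌋, ?_, ?_⟩
    · linarith [Int.floor_le (x + 1 / 2)]
    · linarith [Int.lt_floor_add_one (x + 1 / 2)]
  refine ⟨1, ?_, ?_⟩
  · intro x
    obtain ⟨n, a1, a2⟩ := hr x
    obtain ⟨z1, z2⟩ := hz n x ⟨a1, a2⟩
    rw [abs_le]
    push_cast
    rcases hlab n with hb | hb
    · have u := unit_of_thompson ν h (x - (n - 1 / 2)) ⟨by linarith, by linarith⟩
      rw [z1 hb]
      constructor <;> linarith [u.1, u.2]
    · have u := unit_of_thompson ν h ((n + 1 / 2) - x) ⟨by linarith, by linarith⟩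
      rw [z2 hb]
      constructor <;> linarith [u.1, u.2]
  · intro c x hx
    obtain ⟨n, a1, a2⟩ := hr x
    obtain ⟨z1, z2⟩ := hz n x ⟨a1, a2⟩
    obtain ⟨w1, w2⟩ := hz (c - n) (c - x)
      ⟨by push_cast; linarith, by push_cast; linarith⟩
    have e := hx (2 * n) (by
      push_cast
      rw [abs_le]
      constructor <;> linarith)
    rw [show 2 * c - (2 * n) = 2 * (c - n) by ring] at e
    rcases hlab n with hb | hb
    · rw [hb] at e
      rw [z1 hb, w2 e]
      push_cast
      rw [show (c : ℝ) - n + 1 / 2 - (c - x) = x - (n - 1 / 2) by ring]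
      ring
    · rw [hb] at e
      rw [z2 hb, w1 e]
      push_cast
      rw [show (c : ℝ) - x - (c - n - 1 / 2) = n + 1 / 2 - x by ring]
      ring

lemma blockWord_eq (ρ : ℤ → Letter) (k : ℤ) (n : ℕ) :
    blockWord ρ k n = (List.range (n + 1)).map (fun i : ℕ => ρ (k + (i : ℤ))) := by
  simp [blockWord, List.map_eq_flatMap, List.flatMap_assoc]

lemma exists_reflection (ρ : ℤ → Letter) (hρ : IsQuasiPeriodic ρ) (L : ℕ) :
    ∃ c : ℤ, ∀ m : ℤ, |m| ≤ L → ρ (2 * c - m) = (ρ m).inv := by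
  obtain ⟨hl, -, h2⟩ := hρ
  obtain ⟨k', hk⟩ := h2 (-(L : ℤ)) (2 * L)
  have key : ∀ m : ℤ, |m| ≤ L → ρ (k' + L - m) = (ρ m).inv := by
    intro m hm
    obtain ⟨m1, m2⟩ := abs_le.1 hm
    obtain ⟨i, hi⟩ := Int.eq_ofNat_of_zero_le (show 0 ≤ (L : ℤ) - m by linarith)
    have hi2 : i < 2 * L + 1 := by omega
    have := congrArg (fun l => l[i]?) hk
    simp only [blockWord_eq, wordInv] at this
    rw [List.getElem?_reverse (by simpa using hi2)] at this
    simp only [List.getElem?_map, List.length_map, List.length_range] at this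
    rw [List.getElem?_range hi2, List.getElem?_range (by omega)] at this
    simp only [Option.map_some, Option.some.injEq] at this
    rw [show k' + L - m = k' + (i : ℤ) by omega, this]
    congr 2
    omega
  have hev : Even (k' + L) := by
    by_contra ho
    rw [Int.not_even_iff_odd] at ho
    have e := key 0 (by simp)
    rw [sub_zero] at e
    rcases (hl (k' + L)).2 ho with h | h <;>
      rcases (hl 0).1 (by simp) with h' | h' <;>
      · rw [h, h'] at e
        simp [Letter.inv] at e
  obtain ⟨c, hc⟩ := hev
  refine ⟨c, fun m hm => ?_⟩
  rw [← key m hm]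
  congr 1
  omega

/-- For a quasi-periodic labelling `ρ`, every element of `G_ρ` fixes
a point of `ℝ`. -/
theorem every_element_fixes_a_point
    (ρ : ℤ → Letter) (hρ : IsQuasiPeriodic ρ)
    (H : Subgroup (ℝ ≃o ℝ)) (hH : ∀ f : ℝ ≃o ℝ, f ∈ H ↔ InH f)
    (ν₁ ν₂ ν₃ : ℝ ≃o ℝ) (hgen : Subgroup.closure {ν₁, ν₂, ν₃} = H)
    (ζ₁ ζ₂ ζ₃ χ₁ χ₂ χ₃ : ℝ ≃o ℝ)
    (hζ₁ : IsZeta ρ ν₁ ζ₁) (hζ₂ : IsZeta ρ ν₂ ζ₂) (hζ₃ : IsZeta ρ ν₃ ζ₃)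
    (hχ₁ : IsChi ρ ν₁ χ₁) (hχ₂ : IsChi ρ ν₂ χ₂) (hχ₃ : IsChi ρ ν₃ χ₃)
    (G : Subgroup (ℝ ≃o ℝ))
    (hG : G = Subgroup.closure {ζ₁, ζ₂, ζ₃, χ₁, χ₂, χ₃})
    : ∀ g ∈ G, ∃ x : ℝ, g x = x := by
  subst hG
  have hv : ∀ ν ∈ ({ν₁, ν₂, ν₃} : Set (ℝ ≃o ℝ)),
      ∀ x : ℝ, x ∉ Set.Icc (0 : ℝ) 1 → ν x = x := by
    intro ν hν
    have : ν ∈ H := hgen ▸ Subgroup.subset_closure hν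
    exact ((hH ν).1 this).1.1
  have v1 := hv ν₁ (by simp)
  have v2 := hv ν₂ (by simp)
  have v3 := hv ν₃ (by simp)
  intro g hg
  have hloc : LocRefl ρ g := by
    induction hg using Subgroup.closure_induction with
    | mem x hx =>
      simp only [Set.mem_insert_iff, Set.mem_singleton_iff] at hx
      rcases hx with rfl | rfl | rfl | rfl | rfl | rfl
      · exact locRefl_zeta ρ hρ.1 _ _ v1 hζ₁
      · exact locRefl_zeta ρ hρ.1 _ _ v2 hζ₂
      · exact locRefl_zeta ρ hρ.1 _ _ v3 hζ₃
      · exact locRefl_chi ρ hρ.1 _ _ v1 hχ₁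
      · exact locRefl_chi ρ hρ.1 _ _ v2 hχ₂
      · exact locRefl_chi ρ hρ.1 _ _ v3 hχ₃
    | one => exact locRefl_one ρ
    | mul x y _ _ hx hy => exact locRefl_mul ρ x y hx hy
    | inv x _ hx => exact locRefl_inv ρ x hx
  obtain ⟨L, -, hL⟩ := hloc
  obtain ⟨c, hc⟩ := exists_reflection ρ hρ L
  have e : g c = c - g 0 := by
    have := hL c 0 (by
      intro m hm
      apply hc
      rw [mul_zero, sub_zero] at hm
      exact_mod_cast hm)
    rwa [sub_zero] at this
  have hcont : Continuous (fun x => g x - x) := g.continuous.sub continuous_id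
  have hz : ∃ x : ℝ, g x - x = 0 := by
    rcases le_total (g 0) 0 with h | h
    · exact mem_range_of_exists_le_of_exists_ge hcont ⟨0, by linarith⟩ ⟨(c : ℝ), by linarith⟩
    · exact mem_range_of_exists_le_of_exists_ge hcont ⟨(c : ℝ), by linarith⟩ ⟨0, by linarith⟩
  obtain ⟨x, hx⟩ := hz
  exact ⟨x, by linarith⟩
end

section
/- Let ρ be a quasi-periodic labelling. Then the action of G_ρ on ℝ is minimal: for every x ∈ ℝ the orbit {g(x) : g ∈ G_ρ} is dense in ℝ. -/
/-- The basic map moving points of `(p, r)` down. -/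
noncomputable def downMap (p r : ℝ) (h : p < r) : ℝ ≃o ℝ :=
  Equiv.toOrderIso
    { toFun := fun t => min t (max ((t + p) / 2) (2 * t - r))
      invFun := fun t => max t (min (2 * t - p) ((t + r) / 2))
      left_inv := by
        intro t
        simp only
        grind
      right_inv := by
        intro t
        simp only
        grind }
    (by
      intro s t hst
      simp only [Equiv.coe_fn_mk]
      gcongr)
    (by
      intro s t hst
      simp only [Equiv.coe_fn_symm_mk]
      gcongr)

theorem downMap_apply (p r : ℝ) (h : p < r) (t : ℝ) :
    downMap p r h t = min t (max ((t + p) / 2) (2 * t - r)) := rfl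

theorem exists_dyadic (a b : ℝ) (h : a < b) : ∃ P : ℝ, IsDyadic P ∧ a < 3 * P ∧ 3 * P < b := by
  obtain ⟨n, hn⟩ := pow_unbounded_of_one_lt (3 / (b - a)) (one_lt_two (α := ℝ))
  have h2 : (0 : ℝ) < 2 ^ n := by positivity
  have hba : 0 < b - a := by linarith
  rw [div_lt_iff₀ hba] at hn
  refine ⟨((⌊a * 2 ^ n / 3⌋ + 1 : ℤ) : ℝ) / 2 ^ n, ⟨_, n, rfl⟩, ?_, ?_⟩
  · have := Int.lt_floor_add_one (a * 2 ^ n / 3)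
    rw [← mul_div_assoc, lt_div_iff₀ h2]
    push_cast
    linarith
  · have := Int.floor_le (a * 2 ^ n / 3)
    rw [← mul_div_assoc, div_lt_iff₀ h2]
    push_cast
    nlinarith

theorem IsDyadic.mul_int {x : ℝ} (hx : IsDyadic x) (n : ℤ) : IsDyadic (n * x) := by
  obtain ⟨a, b, rfl⟩ := hx
  exact ⟨n * a, b, by push_cast; ring⟩

theorem IsDyadic.add {x y : ℝ} (hx : IsDyadic x) (hy : IsDyadic y) : IsDyadic (x + y) := by
  obtain ⟨a, b, rfl⟩ := hx
  obtain ⟨c, d, rfl⟩ := hy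
  refine ⟨a * 2 ^ d + c * 2 ^ b, b + d, ?_⟩
  push_cast
  rw [pow_add]
  field_simp

theorem downMap_inH (P R : ℝ) (hP : IsDyadic P) (hR : IsDyadic R) (h0 : 0 < 3 * P)
    (h : 3 * P < 3 * R) (h1 : 3 * R < 1) : InH (downMap (3 * P) (3 * R) h) := by
  refine ⟨⟨?_, 4, ![0, 3 * P, P + 2 * R, 3 * R, 1], rfl, rfl, ?_, ?_, ?_⟩,
    0, min (3 * P) (1 - 3 * R), ?_, ?_, ?_⟩
  · intro x hx
    rw [downMap_apply]
    simp only [Set.mem_Icc] at hx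
    grind
  · rw [Fin.strictMono_iff_lt_succ]
    intro i
    fin_cases i <;> simp <;> linarith
  · intro i
    fin_cases i
    · exact ⟨0, 0, by simp⟩
    · exact hP.mul_int 3
    · exact hP.add (hR.mul_int 2)
    · exact hR.mul_int 3
    · exact ⟨1, 0, by simp⟩
  · intro i
    fin_cases i
    · refine ⟨0, 0, ?_⟩
      rintro t ⟨ht1, ht2⟩
      rw [downMap_apply]
      simp at ht1 ht2 ⊢
      grind
    · refine ⟨-1, 3 * P / 2, ?_⟩
      rintro t ⟨ht1, ht2⟩
      rw [downMap_apply]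
      simp at ht1 ht2 ⊢
      grind
    · refine ⟨1, - (3 * R), ?_⟩
      rintro t ⟨ht1, ht2⟩
      rw [downMap_apply]
      simp at ht1 ht2 ⊢
      grind
    · refine ⟨0, 0, ?_⟩
      rintro t ⟨ht1, ht2⟩
      rw [downMap_apply]
      simp at ht1 ht2 ⊢
      grind
  · exact lt_min h0 (by linarith)
  · rintro t ⟨ht1, ht2⟩
    have := min_le_left (3 * P) (1 - 3 * R)
    rw [downMap_apply]
    simp only [zpow_zero, one_mul]
    grind
  · rintro t ⟨ht1, ht2⟩
    have := min_le_right (3 * P) (1 - 3 * R)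
    rw [downMap_apply]
    simp only [zpow_zero, one_mul]
    grind

theorem exists_inH (a s b : ℝ) (ha : 0 ≤ a) (has : a < s) (hsb : s < b) (hb : b ≤ 1) :
    ∃ f, InH f ∧ ∃ p r, a < p ∧ p < s ∧ s < r ∧ r < b ∧ f p = p ∧ f r = r ∧ f s < s := by
  obtain ⟨P, hP, hP1, hP2⟩ := exists_dyadic a s has
  obtain ⟨R, hR, hR1, hR2⟩ := exists_dyadic s b hsb
  refine ⟨_, downMap_inH P R hP hR (by linarith) (by linarith) (by linarith),
    3 * P, 3 * R, hP1, hP2, hR1, hR2, ?_, ?_, ?_⟩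
  all_goals rw [downMap_apply]; grind

/-- `g` is locally the conjugate of `ν` by `x ↦ a + e x`. -/
def LocConj (a e : ℝ) (ν g : ℝ ≃o ℝ) : Prop :=
  ∀ x ∈ Set.Icc (0 : ℝ) 1, g (a + e * x) = a + e * ν x

theorem InH.map_zero {f : ℝ ≃o ℝ} (h : InH f) : f 0 = 0 := by
  obtain ⟨-, k, ε, hε, h1, -⟩ := h
  simpa using h1 0 ⟨le_rfl, hε.le⟩

theorem InH.map_one {f : ℝ ≃o ℝ} (h : InH f) : f 1 = 1 := by
  obtain ⟨-, k, ε, hε, -, h1⟩ := h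
  simpa using h1 1 ⟨by linarith, le_rfl⟩

theorem exists_locConj (a e : ℝ) (G H : Subgroup (ℝ ≃o ℝ)) (hH : ∀ f, f ∈ H ↔ InH f)
    (S : Set (ℝ ≃o ℝ)) (hS : Subgroup.closure S = H)
    (hSG : ∀ ν ∈ S, ∃ g ∈ G, LocConj a e ν g) (f : ℝ ≃o ℝ) (hf : f ∈ H) :
    ∃ g ∈ G, LocConj a e f g := by
  subst hS
  have maps : ∀ f ∈ Subgroup.closure S, ∀ x ∈ Set.Icc (0 : ℝ) 1, f x ∈ Set.Icc (0 : ℝ) 1 := by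
    intro f hf x hx
    have h := (hH f).1 hf
    constructor
    · rw [← h.map_zero]; exact f.monotone hx.1
    · rw [← h.map_one]; exact f.monotone hx.2
  induction hf using Subgroup.closure_induction with
  | mem ν hν => exact hSG ν hν
  | one => exact ⟨1, G.one_mem, fun x _ => rfl⟩
  | mul f f' hf hf' ih ih' =>
    obtain ⟨g, hg, hl⟩ := ih
    obtain ⟨g', hg', hl'⟩ := ih'
    refine ⟨g * g', G.mul_mem hg hg', fun x hx => ?_⟩
    change g (g' _) = a + e * f (f' x)
    rw [hl' x hx, hl _ (maps _ hf' x hx)]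
  | inv f hf ih =>
    obtain ⟨g, hg, hl⟩ := ih
    refine ⟨g⁻¹, G.inv_mem hg, fun x hx => ?_⟩
    have := hl _ (maps _ (inv_mem hf) x hx)
    change g.symm _ = a + e * f.symm x
    change g (a + e * f.symm x) = a + e * f (f.symm x) at this
    rw [f.apply_symm_apply] at this
    rw [← this, g.symm_apply_apply]

/-- If around every point there are small moves in `G`, then orbits are dense. -/
theorem dense_of_moves (G : Subgroup (ℝ ≃o ℝ))
    (hG : ∀ s δ : ℝ, 0 < δ → ∃ g ∈ G, ∃ p r, s - δ < p ∧ p < s ∧ s < r ∧ r < s + δ ∧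
      g p = p ∧ g r = r ∧ g s < s) (x : ℝ) : Dense {y : ℝ | ∃ g ∈ G, g x = y} := by
  set O := {y : ℝ | ∃ g ∈ G, g x = y} with hO
  have hmul : ∀ g ∈ G, ∀ y ∈ O, g y ∈ O := by
    rintro g hg y ⟨k, hk, rfl⟩
    exact ⟨g * k, G.mul_mem hg hk, rfl⟩
  have hx : x ∈ O := ⟨1, G.one_mem, rfl⟩
  apply dense_of_exists_between
  intro u v huv
  by_contra! hno
  have hno' : ∀ y ∈ O, u < y → v ≤ y := fun y hy h1 => by
    by_contra hlt
    exact hno y hy ⟨h1, not_le.1 hlt⟩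
  rcases le_or_gt x u with hxu | hxu
  · set T := {y | y ∈ O ∧ y ≤ u} with hT
    have hne : T.Nonempty := ⟨x, hx, hxu⟩
    have hlub := isLUB_csSup hne ⟨u, fun y hy => hy.2⟩
    set s := sSup T
    have hsu : s ≤ u := hlub.2 fun y hy => hy.2
    obtain ⟨g, hg, p, r, h1, h2, h3, h4, h5, h6, h7⟩ := hG s (v - s) (by linarith)
    obtain ⟨y, hy, hy1, hy2⟩ := hlub.exists_between h7
    have hg' := hmul g⁻¹ (G.inv_mem hg) y hy.1
    have e1 : s < g⁻¹ y := by
      change s < g.symm y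
      rwa [← g.lt_iff_lt, g.apply_symm_apply]
    have e2 : g⁻¹ y < r := by
      change g.symm y < r
      rw [← g.lt_iff_lt, g.apply_symm_apply]
      linarith
    rcases le_or_gt (g⁻¹ y) u with hh | hh
    · exact absurd (hlub.1 ⟨hg', hh⟩) (not_le.2 e1)
    · have := hno' _ hg' hh
      linarith
  · set T := {y | y ∈ O ∧ v ≤ y} with hT
    have hne : T.Nonempty := ⟨x, hx, hno' x hx hxu⟩
    have hglb := isGLB_csInf hne ⟨v, fun y hy => hy.2⟩
    set s := sInf T
    have hsv : v ≤ s := hglb.2 fun y hy => hy.2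
    obtain ⟨g, hg, p, r, h1, h2, h3, h4, h5, h6, h7⟩ := hG s (s - u) (by linarith)
    have h8 : s < g.symm s := by rwa [← g.lt_iff_lt, g.apply_symm_apply]
    obtain ⟨y, hy, hy1, hy2⟩ := hglb.exists_between h8
    have hg' := hmul g hg y hy.1
    have e1 : g y < s := by
      rwa [← g.lt_iff_lt, g.apply_symm_apply] at hy2
    have e2 : p < g y := by
      have := g.lt_iff_lt.2 (show p < y by linarith)
      linarith
    have := hglb.1 ⟨hg', hno' _ hg' (by linarith)⟩
    linarith

theorem moves_of_locConj (a e : ℝ) (he : e = 1 ∨ e = -1) (G H : Subgroup (ℝ ≃o ℝ))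
    (hH : ∀ f, f ∈ H ↔ InH f) (hl : ∀ f ∈ H, ∃ g ∈ G, LocConj a e f g)
    (t δ : ℝ) (ht0 : 0 < t) (ht1 : t < 1) (hδ : 0 < δ) :
    ∃ g ∈ G, ∃ p r, a + e * t - δ < p ∧ p < a + e * t ∧ a + e * t < r ∧ r < a + e * t + δ ∧
      g p = p ∧ g r = r ∧ g (a + e * t) < a + e * t := by
  obtain ⟨f, hf, p, r, h1, h2, h3, h4, h5, h6, h7⟩ := exists_inH (max 0 (t - δ)) t (min 1 (t + δ))
    (le_max_left _ _) (max_lt ht0 (by linarith)) (lt_min ht1 (by linarith)) (min_le_left _ _)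
  rw [max_lt_iff] at h1
  rw [lt_min_iff] at h4
  obtain ⟨g, hg, hc⟩ := hl f ((hH f).2 hf)
  have c1 := hc p ⟨by linarith, by linarith⟩
  have c2 := hc t ⟨by linarith, by linarith⟩
  have c3 := hc r ⟨by linarith, by linarith⟩
  rw [h5] at c1
  rw [h6] at c3
  rcases he with rfl | rfl
  · exact ⟨g, hg, a + 1 * p, a + 1 * r, by linarith, by linarith, by linarith, by linarith,
      c1, c3, by rw [c2]; linarith⟩
  · refine ⟨g⁻¹, G.inv_mem hg, a + -1 * r, a + -1 * p, by linarith, by linarith, by linarith,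
      by linarith, ?_, ?_, ?_⟩
    · change g.symm _ = _
      rw [g.symm_apply_eq, c3]
    · change g.symm _ = _
      rw [g.symm_apply_eq, c1]
    · change g.symm _ < _
      rw [← g.lt_iff_lt, g.apply_symm_apply, c2]
      linarith

theorem IsZeta.locConj {ρ : ℤ → Letter} (hρ : IsLabelling ρ) (n : ℤ) :
    ∃ a e : ℝ, (e = 1 ∧ a = n ∨ e = -1 ∧ a = n + 1) ∧
      ∀ ν ζ, IsZeta ρ ν ζ → LocConj a e ν ζ := by
  rcases (hρ (2 * n + 1)).2 ⟨n, rfl⟩ with h | h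
  · refine ⟨n, 1, Or.inl ⟨rfl, rfl⟩, fun ν ζ hz x hx => ?_⟩
    obtain ⟨hx0, hx1⟩ := hx
    have := (hz n (n + 1 * x) ⟨by linarith, by linarith⟩).1 h
    rw [this]
    ring_nf
  · refine ⟨n + 1, -1, Or.inr ⟨rfl, rfl⟩, fun ν ζ hz x hx => ?_⟩
    obtain ⟨hx0, hx1⟩ := hx
    have := (hz n (n + 1 + -1 * x) ⟨by linarith, by linarith⟩).2 h
    rw [this]
    ring_nf

theorem IsChi.locConj {ρ : ℤ → Letter} (hρ : IsLabelling ρ) (n : ℤ) :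
    ∃ a e : ℝ, (e = 1 ∧ a = n - 1 / 2 ∨ e = -1 ∧ a = n + 1 / 2) ∧
      ∀ ν χ, IsChi ρ ν χ → LocConj a e ν χ := by
  rcases (hρ (2 * n)).1 ⟨n, by ring⟩ with h | h
  · refine ⟨n - 1 / 2, 1, Or.inl ⟨rfl, rfl⟩, fun ν ζ hz x hx => ?_⟩
    obtain ⟨hx0, hx1⟩ := hx
    have := (hz n (n - 1 / 2 + 1 * x) ⟨by linarith, by linarith⟩).1 h
    rw [this]
    ring_nf
  · refine ⟨n + 1 / 2, -1, Or.inr ⟨rfl, rfl⟩, fun ν ζ hz x hx => ?_⟩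
    obtain ⟨hx0, hx1⟩ := hx
    have := (hz n (n + 1 / 2 + -1 * x) ⟨by linarith, by linarith⟩).2 h
    rw [this]
    ring_nf

/-- For a quasi-periodic labelling `ρ`, the action of `G_ρ` on `ℝ`
is minimal: every orbit is dense. -/
theorem G_rho_action_minimal
    (ρ : ℤ → Letter) (hρ : IsQuasiPeriodic ρ)
    (H : Subgroup (ℝ ≃o ℝ)) (hH : ∀ f : ℝ ≃o ℝ, f ∈ H ↔ InH f)
    (ν₁ ν₂ ν₃ : ℝ ≃o ℝ) (hgen : Subgroup.closure {ν₁, ν₂, ν₃} = H)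
    (ζ₁ ζ₂ ζ₃ χ₁ χ₂ χ₃ : ℝ ≃o ℝ)
    (hζ₁ : IsZeta ρ ν₁ ζ₁) (hζ₂ : IsZeta ρ ν₂ ζ₂) (hζ₃ : IsZeta ρ ν₃ ζ₃)
    (hχ₁ : IsChi ρ ν₁ χ₁) (hχ₂ : IsChi ρ ν₂ χ₂) (hχ₃ : IsChi ρ ν₃ χ₃)
    (G : Subgroup (ℝ ≃o ℝ))
    (hG : G = Subgroup.closure {ζ₁, ζ₂, ζ₃, χ₁, χ₂, χ₃})
    : ∀ x : ℝ, Dense {y : ℝ | ∃ g ∈ G, g x = y} := by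
  subst hG
  apply dense_of_moves
  intro s δ hδ
  have key : ∃ a e t : ℝ, (e = 1 ∨ e = -1) ∧ 0 < t ∧ t < 1 ∧ s = a + e * t ∧
      ∀ f ∈ H, ∃ g ∈ Subgroup.closure {ζ₁, ζ₂, ζ₃, χ₁, χ₂, χ₃}, LocConj a e f g := by
    have f1 := Int.floor_le s
    have f2 := Int.lt_floor_add_one s
    rcases f1.eq_or_lt with h | h
    · obtain ⟨a, e, hae, hl⟩ := IsChi.locConj hρ.1 ⌊s⌋
      refine ⟨a, e, 1 / 2, ?_, by norm_num, by norm_num, ?_, ?_⟩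
      · rcases hae with h | h
        · exact Or.inl h.1
        · exact Or.inr h.1
      · rcases hae with ⟨rfl, rfl⟩ | ⟨rfl, rfl⟩ <;> linarith
      · refine exists_locConj a e _ H hH _ hgen ?_
        rintro ν (rfl | rfl | rfl)
        · exact ⟨χ₁, Subgroup.subset_closure (by simp), hl _ _ hχ₁⟩
        · exact ⟨χ₂, Subgroup.subset_closure (by simp), hl _ _ hχ₂⟩
        · exact ⟨χ₃, Subgroup.subset_closure (by simp), hl _ _ hχ₃⟩
    · obtain ⟨a, e, hae, hl⟩ := IsZeta.locConj hρ.1 ⌊s⌋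
      have hG : ∀ f ∈ H, ∃ g ∈ Subgroup.closure {ζ₁, ζ₂, ζ₃, χ₁, χ₂, χ₃}, LocConj a e f g := by
        refine exists_locConj a e _ H hH _ hgen ?_
        rintro ν (rfl | rfl | rfl)
        · exact ⟨ζ₁, Subgroup.subset_closure (by simp), hl _ _ hζ₁⟩
        · exact ⟨ζ₂, Subgroup.subset_closure (by simp), hl _ _ hζ₂⟩
        · exact ⟨ζ₃, Subgroup.subset_closure (by simp), hl _ _ hζ₃⟩
      rcases hae with ⟨h1, h2⟩ | ⟨h1, h2⟩
      · exact ⟨a, e, s - ⌊s⌋, Or.inl h1, by linarith, by linarith, by rw [h1, h2]; ring, hG⟩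
      · exact ⟨a, e, ⌊s⌋ + 1 - s, Or.inr h1, by linarith, by linarith, by rw [h1, h2]; ring, hG⟩
  obtain ⟨a, e, t, he, h0, h1, rfl, hl⟩ := key
  exact moves_of_locConj a e he _ H hH hl t δ h0 h1 hδ
end
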